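/- arXiv:1509.05724 — 4 statements merged into one kernel-verified Lean document; each statement's English description precedes it below -/
import Mathlib

section
/- Let s and t be real numbers with 0 < t < 1 < s < 2 and s + t = 2. Then there exist compact sets A, B ⊆ ℝ² with dimH A = s and dimH B = t such that, for H¹-almost every unit vector e ∈ S¹, the projections satisfy π_e(A) ∩ π_e(B) = ∅. -/
open MeasureTheory Metric Set
open scoped ENNReal RealInnerProductSpace
open Filter
open scoped NNReal Topology Nat

section HausdorffDimension

variable {Ω X : Type*} [MetricSpace X] [MeasurableSpace X] [BorelSpace X]

/-- Upper bound for the Hausdorff dimension of a parametrized set, from finite partitions of the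
parameter space. -/
theorem dimH_range_le_of_fibers (F : Ω → X) (d : ℝ≥0) (ι : ℕ → Type) [∀ k, Fintype (ι k)]
    (f : ∀ k, Ω → ι k) (δ : ℕ → ℝ≥0∞) (hδ : Tendsto δ atTop (𝓝 0))
    (hf : ∀ k x y, f k x = f k y → edist (F x) (F y) ≤ δ k) (C : ℝ≥0)
    (hcard : ∀ k, (Fintype.card (ι k) : ℝ≥0∞) * δ k ^ (d : ℝ) ≤ C) :
    dimH (range F) ≤ d := by
  have hdiam (k : ℕ) (i : ι k) : ediam (F '' (f k ⁻¹' {i})) ≤ δ k := by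
    refine ediam_le ?_
    rintro _ ⟨x, hx, rfl⟩ _ ⟨y, hy, rfl⟩
    exact hf k x y (Eq.trans hx (Eq.symm hy))
  apply dimH_le_of_hausdorffMeasure_ne_top
  refine ne_top_of_le_ne_top (ENNReal.coe_ne_top (r := C)) ?_
  refine (Measure.hausdorffMeasure_le_liminf_sum d (range F) δ hδ
    (fun k i => F '' (f k ⁻¹' {i})) (Eventually.of_forall hdiam)
    (Eventually.of_forall fun k => ?_)).trans ?_
  · rintro _ ⟨x, rfl⟩
    exact mem_iUnion.2 ⟨f k x, x, rfl, rfl⟩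
  · refine liminf_le_of_le (by isBoundedDefault) fun b hb => ?_
    obtain ⟨k, hk⟩ := hb.exists
    refine hk.trans (le_trans ?_ (hcard k))
    calc ∑ i, ediam (F '' (f k ⁻¹' {i})) ^ (d : ℝ) ≤ ∑ _i : ι k, δ k ^ (d : ℝ) :=
          Finset.sum_le_sum fun i _ => ENNReal.rpow_le_rpow (hdiam k i) d.2
      _ = _ := by simp

/-- The mass distribution principle, with dyadic radii. -/
theorem le_dimH_range_of_measure_ball_le [TopologicalSpace Ω] [CompactSpace Ω]
    [MeasurableSpace Ω] [BorelSpace Ω] (P : Measure Ω) [IsProbabilityMeasure P] {F : Ω → X}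
    (hF : Continuous F) {d : ℝ≥0} (hd : 0 < d) (C : ℝ≥0)
    (h : ∀ x n, P {y | dist (F x) (F y) ≤ ((2 : ℝ) ^ n)⁻¹} ≤
      C * ENNReal.ofReal (((2 : ℝ) ^ n)⁻¹ ^ (d : ℝ))) :
    d ≤ dimH (range F) := by
  have hd' : (0 : ℝ) < d := hd
  set μ := P.map F
  set C' : ℝ≥0∞ := (C + 1) * ENNReal.ofReal (2 ^ (d : ℝ)) with hC'
  have hC'top : C' ≠ ∞ := by finiteness
  have hC'0 : C' ≠ 0 := by
    have : (0 : ℝ) < 2 ^ (d : ℝ) := by positivity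
    simp [C', this]
  have key (S : Set X) (hS : ediam S ≤ 1) : μ S ≤ C' * ediam S ^ (d : ℝ) := by
    by_cases hne : (S ∩ range F).Nonempty
    swap
    · have : μ S ≤ μ (range F)ᶜ :=
        measure_mono
          (disjoint_iff_inter_eq_empty.2 (not_nonempty_iff_eq_empty.1 hne)).subset_compl_right
      have h0 : μ (range F)ᶜ = 0 := by
        rw [Measure.map_apply hF.measurable (isCompact_range hF).isClosed.measurableSet.compl]
        convert measure_empty (μ := P)
        ext; simp
      rw [nonpos_iff_eq_zero.1 (this.trans h0.le)]
      exact zero_le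
    obtain ⟨_, hxS, x, rfl⟩ := hne
    have hball (n : ℕ) (hn : ediam S ≤ ENNReal.ofReal ((2 : ℝ) ^ n)⁻¹) :
        μ S ≤ C * ENNReal.ofReal (((2 : ℝ) ^ n)⁻¹ ^ (d : ℝ)) := by
      refine le_trans ?_ (h x n)
      have : S ⊆ closedBall (F x) ((2 : ℝ) ^ n)⁻¹ := fun y hy => by
        have := (edist_le_ediam_of_mem hy hxS).trans hn
        rwa [edist_dist, ENNReal.ofReal_le_ofReal_iff (by positivity)] at this
      refine (measure_mono this).trans ?_
      rw [Measure.map_apply hF.measurable isClosed_closedBall.measurableSet]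
      refine measure_mono fun y hy => ?_
      simpa [dist_comm] using hy
    rcases eq_or_ne (ediam S) 0 with h0 | h0
    · have hlim : Tendsto (fun n : ℕ => C * ENNReal.ofReal (((2 : ℝ) ^ n)⁻¹ ^ (d : ℝ))) atTop
          (𝓝 (C * ENNReal.ofReal (0 ^ (d : ℝ)))) := by
        refine ENNReal.Tendsto.const_mul (ENNReal.tendsto_ofReal ?_) (by simp)
        refine Tendsto.rpow_const ?_ (Or.inr hd'.le)
        exact tendsto_inv_atTop_zero.comp (tendsto_pow_atTop_atTop_of_one_lt one_lt_two)
      have := ge_of_tendsto' hlim fun n => hball n (by simp [h0])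
      rw [Real.zero_rpow hd'.ne'] at this
      refine this.trans (by simp)
    · have htop : ediam S ≠ ∞ := ne_top_of_le_ne_top ENNReal.one_ne_top hS
      set r := (ediam S).toReal
      have hr : ediam S = ENNReal.ofReal r := (ENNReal.ofReal_toReal htop).symm
      have hr0 : 0 < r := ENNReal.toReal_pos h0 htop
      have hr1 : r ≤ 1 := by
        rw [hr] at hS; simpa using hS
      obtain ⟨n, hn1, hn2⟩ := exists_nat_pow_near_of_lt_one hr0 hr1 (y := (2 : ℝ)⁻¹) (by norm_num)
        (by norm_num)
      rw [inv_pow] at hn1 hn2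
      refine (hball n ?_).trans ?_
      · rw [hr]; exact ENNReal.ofReal_le_ofReal hn2
      · rw [hr, ENNReal.ofReal_rpow_of_pos hr0, hC', mul_assoc, ← ENNReal.ofReal_mul (by positivity),
          ← Real.mul_rpow (by positivity) hr0.le]
        gcongr
        · exact le_self_add
        · rw [pow_succ, mul_inv] at hn1
          linarith
  have hle : C'⁻¹ • μ ≤ μH[d] := by
    refine Measure.le_hausdorffMeasure d _ 1 one_pos fun S hS => ?_
    rw [Measure.smul_apply, smul_eq_mul, ENNReal.inv_mul_le_iff hC'0 hC'top]
    exact key S hS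
  apply le_dimH_of_hausdorffMeasure_ne_zero
  have h1 : 1 ≤ μ (range F) := by
    simpa using Measure.le_map_apply (μ := P) hF.measurable.aemeasurable (range F)
  have h2 := hle (range F)
  intro h0
  rw [h0, Measure.smul_apply, smul_eq_mul, nonpos_iff_eq_zero, mul_eq_zero] at h2
  rcases h2 with h2 | h2
  · exact hC'top (ENNReal.inv_eq_zero.1 h2)
  · simp [h2] at h1

end HausdorffDimension
section BinaryDigits

/-- The natural number whose binary expansion is given by the first `n` terms of `x`, most
significant digit first. -/
def binaryHead (x : ℕ → Fin 2) : ℕ → ℕ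
  | 0 => 0
  | n + 1 => 2 * binaryHead x n + x n

theorem binaryHead_lt (x : ℕ → Fin 2) (n : ℕ) : binaryHead x n < 2 ^ n := by
  induction n with
  | zero => simp [binaryHead]
  | succ n ih => rw [binaryHead, pow_succ]; have := (x n).2; omega

theorem eq_of_binaryHead_eq {x y : ℕ → Fin 2} {n : ℕ}
    (h : binaryHead x n = binaryHead y n) : ∀ i < n, x i = y i := by
  induction n with
  | zero => simp
  | succ n ih =>
    rw [binaryHead, binaryHead] at h
    have hx := (x n).2
    have hy := (y n).2
    intro i hi
    rcases Nat.lt_succ_iff_lt_or_eq.1 hi with hi | rfl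
    · exact ih (by omega) i hi
    · exact Fin.ext (by omega)

theorem binaryHead_add_of_eq_zero {x : ℕ → Fin 2} {b : ℕ} (m : ℕ)
    (h : ∀ i, b ≤ i → i < b + m → x i = 0) :
    binaryHead x (b + m) = binaryHead x b * 2 ^ m := by
  induction m with
  | zero => simp
  | succ m ih =>
    rw [← add_assoc, binaryHead, ih fun i h1 h2 => h i h1 (by omega),
      h (b + m) (by omega) (by omega)]
    simp; ring

theorem sum_ofDigitsTerm_eq_binaryHead (x : ℕ → Fin 2) (n : ℕ) :
    ∑ i ∈ Finset.range n, Real.ofDigitsTerm x i = binaryHead x n / 2 ^ n := by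
  induction n with
  | zero => simp [binaryHead]
  | succ n ih =>
    rw [Finset.sum_range_succ, ih, binaryHead, Real.ofDigitsTerm]
    push_cast
    field_simp
    ring

theorem binaryHead_le_ofDigits (x : ℕ → Fin 2) (n : ℕ) :
    binaryHead x n / 2 ^ n ≤ Real.ofDigits x := by
  rw [Real.ofDigits_eq_sum_add_ofDigits x n, sum_ofDigitsTerm_eq_binaryHead]
  have := Real.ofDigits_nonneg fun i => x (i + n)
  simp only [le_add_iff_nonneg_right]
  positivity

theorem ofDigits_le_binaryHead_add (x : ℕ → Fin 2) (n : ℕ) :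
    Real.ofDigits x ≤ binaryHead x n / 2 ^ n + ((2 : ℝ) ^ n)⁻¹ := by
  rw [Real.ofDigits_eq_sum_add_ofDigits x n, sum_ofDigitsTerm_eq_binaryHead]
  have := Real.ofDigits_le_one fun i => x (i + n)
  gcongr
  push_cast
  exact mul_le_of_le_one_right (by positivity) this

/-- A block of zeros in the binary expansion of a number makes it close to a dyadic rational. -/
theorem ofDigits_mem_Icc_of_eq_zero {x : ℕ → Fin 2} {b m : ℕ} (hbm : b ≤ m)
    (h : ∀ i, b ≤ i → i < m → x i = 0) :
    Real.ofDigits x ∈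
      Icc (binaryHead x b / 2 ^ b : ℝ) (binaryHead x b / 2 ^ b + ((2 : ℝ) ^ m)⁻¹) := by
  refine ⟨binaryHead_le_ofDigits x b, ?_⟩
  obtain ⟨k, rfl⟩ := Nat.exists_eq_add_of_le hbm
  have hle := ofDigits_le_binaryHead_add x (b + k)
  have heq : (binaryHead x (b + k) / 2 ^ (b + k) : ℝ) = binaryHead x b / 2 ^ b := by
    rw [binaryHead_add_of_eq_zero k h, pow_add]
    push_cast
    field_simp
  rwa [heq] at hle

open Classical in
/-- Replace by `0` all digits at positions in `Z`. -/
noncomputable def eraseDigits (Z : Set ℕ) (x : ℕ → Fin 2) : ℕ → Fin 2 :=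
  fun i => if i ∈ Z then 0 else x i

/-- The real number in `[0, 1]` with binary digits `x`, those at positions in `Z` being erased. -/
noncomputable def erasedReal (Z : Set ℕ) (x : ℕ → Fin 2) : ℝ :=
  Real.ofDigits (eraseDigits Z x)

theorem continuous_erasedReal (Z : Set ℕ) : Continuous (erasedReal Z) := by
  refine Real.continuous_ofDigits.comp (continuous_pi fun i => ?_)
  unfold eraseDigits
  split_ifs <;> fun_prop

/-- The law of a sequence of independent fair coin tosses. -/
noncomputable def coinMeasure : Measure (ℕ → Fin 2) :=
  Measure.infinitePi fun _ => ProbabilityTheory.uniformOn univ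

instance : IsProbabilityMeasure coinMeasure := by
  have : IsProbabilityMeasure (ProbabilityTheory.uniformOn (univ : Set (Fin 2))) :=
    ProbabilityTheory.isProbabilityMeasure_uniformOn finite_univ univ_nonempty
  unfold coinMeasure
  infer_instance

theorem coinMeasure_cylinder (s : Finset ℕ) (a : ℕ → Fin 2) :
    coinMeasure {x | ∀ i ∈ s, x i = a i} = 2⁻¹ ^ s.card := by
  have : IsProbabilityMeasure (ProbabilityTheory.uniformOn (univ : Set (Fin 2))) :=
    ProbabilityTheory.isProbabilityMeasure_uniformOn finite_univ univ_nonempty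
  have h : {x : ℕ → Fin 2 | ∀ i ∈ s, x i = a i} = Set.pi s fun i => {a i} := by
    ext; simp [Set.mem_pi]
  rw [h, coinMeasure, Measure.infinitePi_pi _ fun i _ => measurableSet_singleton _]
  simp [ProbabilityTheory.uniformOn_univ]

open Classical in
theorem coinMeasure_erasedReal_near_le (Z : Set ℕ) (x : ℕ → Fin 2) (n K : ℕ) :
    coinMeasure {y | |erasedReal Z x - erasedReal Z y| ≤ K * ((2 : ℝ) ^ n)⁻¹} ≤
      (2 * K + 3 : ℕ) * 2⁻¹ ^ ((Finset.range n).filter (· ∉ Z)).card := by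
  set p : ℤ := ((binaryHead (eraseDigits Z x) n : ℕ) : ℤ) with hp
  have hsub : {y | |erasedReal Z x - erasedReal Z y| ≤ K * ((2 : ℝ) ^ n)⁻¹} ⊆
      ⋃ q ∈ Finset.Icc (p - (K + 1)) (p + (K + 1)),
        {y | (binaryHead (eraseDigits Z y) n : ℤ) = q} := by
    intro y hy
    simp only [mem_iUnion, Finset.mem_Icc, mem_ofPred_eq, exists_prop, exists_eq_right']
    rw [mem_ofPred_eq, abs_le] at hy
    have h2 : (0 : ℝ) < 2 ^ n := by positivity
    have hx1 := binaryHead_le_ofDigits (eraseDigits Z x) n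
    have hx2 := ofDigits_le_binaryHead_add (eraseDigits Z x) n
    have hy1 := binaryHead_le_ofDigits (eraseDigits Z y) n
    have hy2 := ofDigits_le_binaryHead_add (eraseDigits Z y) n
    unfold erasedReal at hy
    generalize Real.ofDigits (eraseDigits Z x) = X at *
    generalize Real.ofDigits (eraseDigits Z y) = Y at *
    rw [div_eq_mul_inv] at hx1 hx2 hy1 hy2
    have h2' : (0 : ℝ) < (2 ^ n)⁻¹ := by positivity
    constructor
    · have : (p : ℝ) - (K + 1) ≤ binaryHead (eraseDigits Z y) n := by
        refine le_of_mul_le_mul_right ?_ h2'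
        simp only [hp, Int.cast_natCast]
        linarith [hy.1, hy.2]
      exact_mod_cast this
    · have : (binaryHead (eraseDigits Z y) n : ℝ) ≤ p + (K + 1) := by
        refine le_of_mul_le_mul_right ?_ h2'
        simp only [hp, Int.cast_natCast]
        linarith [hy.1, hy.2]
      exact_mod_cast this
  refine (measure_mono hsub).trans ((measure_biUnion_finset_le _ _).trans ?_)
  have hq (q : ℤ) : coinMeasure {y | (binaryHead (eraseDigits Z y) n : ℤ) = q} ≤
      2⁻¹ ^ ((Finset.range n).filter (· ∉ Z)).card := by
    by_cases hne : ∃ z, (binaryHead (eraseDigits Z z) n : ℤ) = q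
    · obtain ⟨z, hz⟩ := hne
      rw [← coinMeasure_cylinder _ z]
      refine measure_mono fun y hy i hi => ?_
      rw [Finset.mem_filter, Finset.mem_range] at hi
      have := eq_of_binaryHead_eq (Int.natCast_inj.1 (Eq.trans hy hz.symm)) i hi.1
      simpa [eraseDigits, hi.2] using this
    · have hempty : {y | (binaryHead (eraseDigits Z y) n : ℤ) = q} = ∅ :=
        eq_empty_of_forall_notMem fun y hy => hne ⟨y, hy⟩
      rw [hempty, measure_empty]
      exact zero_le
  refine (Finset.sum_le_sum fun q _ => hq q).trans ?_
  rw [Finset.sum_const, nsmul_eq_mul, Int.card_Icc]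
  gcongr
  omega

end BinaryDigits

section Blocks

/-- Positions of the blocks of zeros: for every `k` the positions from `β (k + 1)!` to
`(k + 1)! + k`. -/
def zeroBlocks (β : ℝ) : Set ℕ :=
  {i | ∃ k : ℕ, ⌊β * (k + 1)!⌋₊ ≤ i ∧ i < (k + 1)! + k}

theorem exists_factorial_le (η : ℝ) (hη : 0 < η) :
    ∃ C : ℝ, 0 ≤ C ∧ ∀ k : ℕ, (k ! : ℝ) + 2 * k + 1 ≤ η * (k + 1)! + C := by
  obtain ⟨K, hK⟩ := exists_nat_gt (4 / η)
  rw [div_lt_iff₀ hη] at hK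
  refine ⟨K ! + 2 * K + 1, by positivity, fun k => ?_⟩
  have h1 : (1 : ℝ) ≤ k ! := by exact_mod_cast Nat.factorial_pos k
  have h2 : (k : ℝ) ≤ k ! := by exact_mod_cast Nat.self_le_factorial k
  rcases le_total k K with h | h
  · have h3 : (k ! : ℝ) ≤ K ! := by exact_mod_cast Nat.factorial_le h
    have h4 : (k : ℝ) ≤ K := by exact_mod_cast h
    have : 0 ≤ η * (k + 1)! := by positivity
    linarith
  · have h4 : (K : ℝ) ≤ k := by exact_mod_cast h
    have h5 : 4 ≤ η * (k + 1) := by nlinarith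
    rw [Nat.factorial_succ]
    push_cast
    have : 4 * (k ! : ℝ) ≤ η * (k + 1) * k ! := by gcongr
    have : (0 : ℝ) ≤ K ! + 2 * K + 1 := by positivity
    linarith

open Classical in
theorem exists_le_card_notMem_zeroBlocks {β d : ℝ} (hβ : 0 < β) (hβ1 : β ≤ 1) (hd : d < β) :
    ∃ C : ℝ, ∀ n : ℕ, d * n ≤ ((Finset.range n).filter (· ∉ zeroBlocks β)).card + C := by
  obtain ⟨C, hC0, hC⟩ := exists_factorial_le ((β - d) * β) (mul_pos (by linarith) hβ)
  refine ⟨C + (β - d), fun n => ?_⟩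
  have hex : ∃ k : ℕ, n < ⌊β * (k + 1)!⌋₊ := by
    obtain ⟨k, hk⟩ := exists_nat_gt ((n + 1) / β)
    refine ⟨k, Nat.lt_of_lt_of_le (Nat.lt_succ_self n) (Nat.le_floor ?_)⟩
    rw [div_lt_iff₀ hβ] at hk
    have : (k : ℝ) ≤ (k + 1)! := by
      exact_mod_cast (Nat.le_succ k).trans (Nat.self_le_factorial _)
    push_cast
    nlinarith
  have hlt := Nat.find_spec hex
  rcases hk' : Nat.find hex with _ | k
  · rw [hk'] at hlt
    have : ⌊β * (0 + 1)!⌋₊ ≤ 1 := by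
      simpa using Nat.floor_mono hβ1
    have hn : n = 0 := by omega
    subst hn
    simp
    linarith
  rw [hk'] at hlt
  have hge : ⌊β * (k + 1)!⌋₊ ≤ n := not_lt.1 (Nat.find_min hex (by omega))
  set b := ⌊β * (k + 1)!⌋₊ with hb
  have hb1 : b ≤ (k + 1)! := Nat.floor_le_of_le (by
    have : (0 : ℝ) ≤ (k + 1)! := by positivity
    nlinarith)
  have hb2 : β * (k + 1)! < b + 1 := Nat.lt_floor_add_one _
  have hsub : Finset.Ico (k ! + k) b ∪ Finset.Ico ((k + 1)! + k) n ⊆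
      (Finset.range n).filter (· ∉ zeroBlocks β) := by
    intro i hi
    rw [Finset.mem_union, Finset.mem_Ico, Finset.mem_Ico] at hi
    rw [Finset.mem_filter, Finset.mem_range]
    refine ⟨by omega, ?_⟩
    rintro ⟨j, hj1, hj2⟩
    rcases lt_trichotomy j k with h | rfl | h
    · have := Nat.factorial_le h
      have := Nat.factorial_le (Nat.le_succ k)
      simp only [Nat.succ_eq_add_one] at *
      omega
    · omega
    · have h1 : (⌊β * (k + 1 + 1)!⌋₊) ≤ ⌊β * (j + 1)!⌋₊ := by
        gcongr
        omega
      omega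
  have hcard := Finset.card_le_card hsub
  rw [Finset.card_union_of_disjoint, Nat.card_Ico, Nat.card_Ico] at hcard
  swap
  · rw [Finset.disjoint_left]
    intro i
    simp only [Finset.mem_Ico]
    omega
  generalize ((Finset.range n).filter (· ∉ zeroBlocks β)).card = c at hcard ⊢
  have hr1 : (b : ℝ) ≤ (b - (k ! + k) : ℕ) + (k ! + k) := by
    exact_mod_cast (by omega : b ≤ (b - (k ! + k)) + (k ! + k))
  have hr2 : (n : ℝ) ≤ (n - ((k + 1)! + k) : ℕ) + ((k + 1)! + k) := by
    exact_mod_cast (by omega : n ≤ (n - ((k + 1)! + k)) + ((k + 1)! + k))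
  have hr3 : (((b - (k ! + k) : ℕ) : ℝ) + (n - ((k + 1)! + k) : ℕ)) ≤ c := by exact_mod_cast hcard
  have hr4 : (b : ℝ) ≤ n := by exact_mod_cast hge
  have hpos : (0 : ℝ) ≤ (n - ((k + 1)! + k) : ℕ) := by positivity
  have hk0 : (0 : ℝ) ≤ k := by positivity
  have h1 : β * n ≤ (n - ((k + 1)! + k) : ℕ) + β * (k + 1)! + k := by nlinarith
  have h2 : (β - d) * (β * (k + 1)!) ≤ (β - d) * (n + 1) :=
    mul_le_mul_of_nonneg_left (by linarith) (by linarith)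
  have h3 := hC k
  linarith

theorem exists_coinMeasure_erasedReal_near_le {β d : ℝ} (hβ : 0 < β) (hβ1 : β ≤ 1) (hd : d < β)
    (K : ℕ) : ∃ C : ℝ≥0, ∀ x n,
      coinMeasure {y | |erasedReal (zeroBlocks β) x - erasedReal (zeroBlocks β) y| ≤
        K * ((2 : ℝ) ^ n)⁻¹} ≤ C * ENNReal.ofReal (((2 : ℝ) ^ n)⁻¹ ^ d) := by
  classical
  obtain ⟨C, hC⟩ := exists_le_card_notMem_zeroBlocks hβ hβ1 hd
  refine ⟨(2 * K + 3 : ℕ) * (2 ^ C : ℝ).toNNReal, fun x n =>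
    (coinMeasure_erasedReal_near_le _ x n K).trans ?_⟩
  rw [ENNReal.coe_mul, mul_assoc, ENNReal.coe_natCast]
  gcongr
  have h2 : (2 : ℝ≥0∞)⁻¹ = ENNReal.ofReal 2⁻¹ := by
    rw [ENNReal.ofReal_inv_of_pos two_pos]; simp
  change _ ≤ ENNReal.ofReal _ * _
  rw [h2, ← ENNReal.ofReal_pow (by positivity), ← ENNReal.ofReal_mul (by positivity)]
  refine ENNReal.ofReal_le_ofReal ?_
  rw [← Real.rpow_natCast, ← Real.rpow_natCast, ← Real.rpow_neg two_pos.le,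
    ← Real.rpow_mul two_pos.le, ← Real.rpow_add two_pos, ← Real.rpow_neg_one,
    ← Real.rpow_mul two_pos.le]
  refine Real.rpow_le_rpow_of_exponent_le one_le_two ?_
  linarith [hC n]

end Blocks

section Construction

theorem erasedReal_mem_Icc (Z : Set ℕ) (x : ℕ → Fin 2) : erasedReal Z x ∈ Icc (0 : ℝ) 1 :=
  ⟨Real.ofDigits_nonneg _, Real.ofDigits_le_one _⟩

theorem floor_mul_le_of_le_one {β : ℝ} (hβ : β ≤ 1) (n : ℕ) : ⌊β * n⌋₊ ≤ n :=
  Nat.floor_le_of_le (mul_le_of_le_one_left (Nat.cast_nonneg n) hβ)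

theorem erasedReal_zeroBlocks_mem_Icc {β : ℝ} (hβ : β ≤ 1) (k : ℕ) (x : ℕ → Fin 2) :
    erasedReal (zeroBlocks β) x ∈
      Icc (binaryHead (eraseDigits (zeroBlocks β) x) ⌊β * (k + 1)!⌋₊ / 2 ^ ⌊β * (k + 1)!⌋₊ : ℝ)
        (binaryHead (eraseDigits (zeroBlocks β) x) ⌊β * (k + 1)!⌋₊ / 2 ^ ⌊β * (k + 1)!⌋₊ +
          ((2 : ℝ) ^ ((k + 1)! + k))⁻¹) := by
  refine ofDigits_mem_Icc_of_eq_zero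
    ((floor_mul_le_of_le_one hβ _).trans (Nat.le_add_right _ _)) fun i h1 h2 => ?_
  have : i ∈ zeroBlocks β := ⟨k, h1, h2⟩
  simp [eraseDigits, this]

/-- The `k`-th dyadic approximation of an element of the Cantor set associated with
`zeroBlocks β`. -/
noncomputable def blockHead (β : ℝ) (k : ℕ) (x : ℕ → Fin 2) : Fin (2 ^ ⌊β * (k + 1)!⌋₊) :=
  ⟨binaryHead (eraseDigits (zeroBlocks β) x) ⌊β * (k + 1)!⌋₊, binaryHead_lt _ _⟩

theorem abs_erasedReal_sub_le_of_blockHead_eq {β : ℝ} (hβ : β ≤ 1) {k : ℕ} {x y : ℕ → Fin 2}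
    (h : blockHead β k x = blockHead β k y) :
    |erasedReal (zeroBlocks β) x - erasedReal (zeroBlocks β) y| ≤ ((2 : ℝ) ^ (k + 1)!)⁻¹ := by
  have hx := erasedReal_zeroBlocks_mem_Icc hβ k x
  have hy := erasedReal_zeroBlocks_mem_Icc hβ k y
  rw [blockHead, blockHead, Fin.mk.injEq] at h
  rw [h] at hx
  have hle : ((2 : ℝ) ^ ((k + 1)! + k))⁻¹ ≤ ((2 : ℝ) ^ (k + 1)!)⁻¹ := by
    gcongr
    · norm_num
    · omega
  rw [abs_le]
  constructor <;> linarith [hx.1, hx.2, hy.1, hy.2]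

theorem tendsto_ofReal_four_mul_inv_two_pow_factorial :
    Tendsto (fun k : ℕ => ENNReal.ofReal (4 * ((2 : ℝ) ^ (k + 1)!)⁻¹)) atTop (𝓝 0) := by
  have h1 : Tendsto (fun k : ℕ => (k + 1)!) atTop atTop :=
    tendsto_atTop_mono (fun k => (Nat.le_succ k).trans (Nat.self_le_factorial _)) tendsto_id
  have h2 : Tendsto (fun n : ℕ => ((2 : ℝ) ^ n)⁻¹) atTop (𝓝 0) :=
    tendsto_inv_atTop_zero.comp (tendsto_pow_atTop_atTop_of_one_lt one_lt_two)
  simpa using ENNReal.tendsto_ofReal ((h2.comp h1).const_mul 4)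

theorem two_pow_mul_ofReal_rpow_le {d : ℝ} (hd : 0 ≤ d) {m n : ℕ} (h : (m : ℝ) ≤ d * n) :
    ((2 ^ m : ℕ) : ℝ≥0∞) * ENNReal.ofReal (4 * ((2 : ℝ) ^ n)⁻¹) ^ d ≤ ((4 ^ d : ℝ).toNNReal) := by
  change _ ≤ ENNReal.ofReal _
  rw [← ENNReal.ofReal_natCast, ENNReal.ofReal_rpow_of_nonneg (by positivity) hd,
    ← ENNReal.ofReal_mul (by positivity)]
  refine ENNReal.ofReal_le_ofReal ?_
  rw [Real.mul_rpow (by positivity) (by positivity), mul_left_comm]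
  refine mul_le_of_le_one_right (by positivity) ?_
  push_cast
  rw [← Real.rpow_natCast, ← Real.rpow_natCast, ← Real.rpow_neg two_pos.le,
    ← Real.rpow_mul two_pos.le, ← Real.rpow_add two_pos]
  exact Real.rpow_le_one_of_one_le_of_nonpos one_le_two (by linarith)

theorem dist_euclidean_two_le (a b c d : ℝ) :
    dist (!₂[a, b]) (!₂[c, d]) ≤ |a - c| + |b - d| := by
  rw [EuclideanSpace.dist_eq, Real.sqrt_le_left (by positivity)]
  simp [Fin.sum_univ_two, Real.dist_eq]
  nlinarith [abs_nonneg (a - c), abs_nonneg (b - d), sq_abs (a - c), sq_abs (b - d)]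

theorem abs_sub_le_dist_euclidean_two (a b c d : ℝ) :
    |a - c| ≤ dist (!₂[a, b]) (!₂[c, d]) ∧ |b - d| ≤ dist (!₂[a, b]) (!₂[c, d]) := by
  rw [EuclideanSpace.dist_eq]
  simp only [Fin.sum_univ_two, Real.dist_eq]
  constructor <;> apply Real.le_sqrt_of_sq_le <;> simp <;> positivity

/-- A copy of a linear Cantor set on the vertical axis. -/
noncomputable def verticalPoint (t : ℝ) (x : ℕ → Fin 2) : EuclideanSpace ℝ (Fin 2) :=
  !₂[0, erasedReal (zeroBlocks t) x]

/-- The image of a product of two linear Cantor sets under the projective map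
`(u, v) ↦ (1 / (1 + u), v / (1 + u))`. -/
noncomputable def projectivePoint (α : ℝ) (x : (ℕ → Fin 2) × (ℕ → Fin 2)) :
    EuclideanSpace ℝ (Fin 2) :=
  !₂[(1 + erasedReal (zeroBlocks α) x.1)⁻¹,
    erasedReal (zeroBlocks 1) x.2 * (1 + erasedReal (zeroBlocks α) x.1)⁻¹]

theorem continuous_verticalPoint (t : ℝ) : Continuous (verticalPoint t) := by
  have := continuous_erasedReal (zeroBlocks t)
  unfold verticalPoint
  fun_prop

theorem continuous_projectivePoint (α : ℝ) : Continuous (projectivePoint α) := by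
  have h1 := continuous_erasedReal (zeroBlocks α)
  have h2 := continuous_erasedReal (zeroBlocks 1)
  have h3 : Continuous fun x : (ℕ → Fin 2) × (ℕ → Fin 2) =>
      (1 + erasedReal (zeroBlocks α) x.1)⁻¹ :=
    Continuous.inv₀ (by fun_prop) fun x => by
      have := (erasedReal_mem_Icc (zeroBlocks α) x.1).1
      positivity
  unfold projectivePoint
  fun_prop

theorem dimH_range_verticalPoint {t : ℝ} (ht0 : 0 < t) (ht1 : t ≤ 1) :
    dimH (range (verticalPoint t)) = ENNReal.ofReal t := by
  apply le_antisymm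
  · refine dimH_range_le_of_fibers _ t.toNNReal (fun k => Fin (2 ^ ⌊t * (k + 1)!⌋₊))
      (blockHead t) _ tendsto_ofReal_four_mul_inv_two_pow_factorial ?_ ((4 ^ t : ℝ).toNNReal)
      fun k => ?_
    · intro k x y hxy
      have h := abs_erasedReal_sub_le_of_blockHead_eq ht1 hxy
      rw [edist_dist]
      refine ENNReal.ofReal_le_ofReal ((dist_euclidean_two_le _ _ _ _).trans ?_)
      have : (0 : ℝ) ≤ (2 ^ (k + 1)!)⁻¹ := by positivity
      simp only [sub_self, abs_zero]
      linarith
    · rw [Fintype.card_fin, Real.coe_toNNReal _ ht0.le]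
      exact two_pow_mul_ofReal_rpow_le ht0.le (Nat.floor_le (by positivity))
  · refine ENNReal.le_of_forall_nnreal_lt fun d hd => ?_
    rcases eq_zero_or_pos d with rfl | hd0
    · simp
    have hdt : (d : ℝ) < t := by
      rw [← ENNReal.ofReal_coe_nnreal] at hd
      exact (ENNReal.ofReal_lt_ofReal_iff ht0).1 hd
    obtain ⟨C, hC⟩ := exists_coinMeasure_erasedReal_near_le ht0 ht1 hdt 1
    refine le_dimH_range_of_measure_ball_le coinMeasure (continuous_verticalPoint t) hd0 C
      fun x n => le_trans (measure_mono fun y hy => ?_) (hC x n)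
    simpa using (abs_sub_le_dist_euclidean_two _ _ _ _).2.trans hy

theorem abs_inv_one_add_sub_le {u u' : ℝ} (hu : 0 ≤ u) (hu' : 0 ≤ u') :
    |(1 + u)⁻¹ - (1 + u')⁻¹| ≤ |u - u'| := by
  have h : (1 + u)⁻¹ - (1 + u')⁻¹ = (u' - u) * ((1 + u)⁻¹ * (1 + u')⁻¹) := by
    field_simp; ring
  rw [h, abs_mul, abs_sub_comm]
  refine mul_le_of_le_one_right (abs_nonneg _) ?_
  rw [abs_of_nonneg (by positivity)]
  exact mul_le_one₀ (inv_le_one_of_one_le₀ (by linarith)) (by positivity)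
    (inv_le_one_of_one_le₀ (by linarith))

theorem dist_projectivePoint_le (α : ℝ) (x y : (ℕ → Fin 2) × (ℕ → Fin 2)) :
    dist (projectivePoint α x) (projectivePoint α y) ≤
      2 * |erasedReal (zeroBlocks α) x.1 - erasedReal (zeroBlocks α) y.1| +
        |erasedReal (zeroBlocks 1) x.2 - erasedReal (zeroBlocks 1) y.2| := by
  refine (dist_euclidean_two_le _ _ _ _).trans ?_
  have hu := erasedReal_mem_Icc (zeroBlocks α) x.1
  have hu' := erasedReal_mem_Icc (zeroBlocks α) y.1
  have hv := erasedReal_mem_Icc (zeroBlocks 1) x.2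
  generalize erasedReal (zeroBlocks α) x.1 = u at *
  generalize erasedReal (zeroBlocks α) y.1 = u' at *
  generalize erasedReal (zeroBlocks 1) x.2 = v at *
  generalize erasedReal (zeroBlocks 1) y.2 = v'
  have h1 := abs_inv_one_add_sub_le hu.1 hu'.1
  have h2 : |v * (1 + u)⁻¹ - v' * (1 + u')⁻¹| ≤ |u - u'| + |v - v'| := by
    have h : v * (1 + u)⁻¹ - v' * (1 + u')⁻¹ =
        v * ((1 + u)⁻¹ - (1 + u')⁻¹) + (v - v') * (1 + u')⁻¹ := by ring
    rw [h]
    refine (abs_add_le _ _).trans (add_le_add ?_ ?_)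
    · rw [abs_mul, abs_of_nonneg hv.1]
      exact (mul_le_of_le_one_left (abs_nonneg _) hv.2).trans h1
    · rw [abs_mul]
      refine mul_le_of_le_one_right (abs_nonneg _) ?_
      have := hu'.1
      rw [abs_of_nonneg (by positivity)]
      exact inv_le_one_of_one_le₀ (by linarith)
  linarith

theorem abs_sub_le_of_dist_projectivePoint_le {α r : ℝ} {x y : (ℕ → Fin 2) × (ℕ → Fin 2)}
    (h : dist (projectivePoint α x) (projectivePoint α y) ≤ r) :
    |erasedReal (zeroBlocks α) x.1 - erasedReal (zeroBlocks α) y.1| ≤ 6 * r ∧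
      |erasedReal (zeroBlocks 1) x.2 - erasedReal (zeroBlocks 1) y.2| ≤ 6 * r := by
  have h1 := (abs_sub_le_dist_euclidean_two _ _ _ _).1.trans h
  have h2 := (abs_sub_le_dist_euclidean_two _ _ _ _).2.trans h
  have hu := erasedReal_mem_Icc (zeroBlocks α) x.1
  have hu' := erasedReal_mem_Icc (zeroBlocks α) y.1
  have hv' := erasedReal_mem_Icc (zeroBlocks 1) y.2
  generalize erasedReal (zeroBlocks α) x.1 = u at *
  generalize erasedReal (zeroBlocks α) y.1 = u' at *
  generalize erasedReal (zeroBlocks 1) x.2 = v at *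
  generalize erasedReal (zeroBlocks 1) y.2 = v' at *
  have hr : 0 ≤ r := (abs_nonneg _).trans h1
  have hp : 0 < 1 + u := by linarith [hu.1]
  have hp' : 0 < 1 + u' := by linarith [hu'.1]
  have h3 : |u - u'| ≤ 4 * r := by
    have e : u - u' = -((1 + u) * (1 + u') * ((1 + u)⁻¹ - (1 + u')⁻¹)) := by
      field_simp; ring
    rw [e, abs_neg, abs_mul, abs_of_nonneg (by positivity)]
    have : (1 + u) * (1 + u') ≤ 4 := by nlinarith [hu.2, hu'.2]
    exact mul_le_mul this h1 (abs_nonneg _) (by norm_num)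
  refine ⟨by linarith, ?_⟩
  have e : v - v' = (1 + u) * (v * (1 + u)⁻¹ - v' * (1 + u')⁻¹) + (u - u') * (v' * (1 + u')⁻¹) := by
    field_simp; ring
  rw [e]
  refine (abs_add_le _ _).trans ?_
  rw [abs_mul, abs_mul, abs_of_pos hp]
  have h4 : |v' * (1 + u')⁻¹| ≤ 1 := by
    rw [abs_of_nonneg (mul_nonneg hv'.1 (by positivity))]
    exact mul_le_one₀ hv'.2 (by positivity) (inv_le_one_of_one_le₀ (by linarith [hu'.1]))
  have h5 : (1 + u) * |v * (1 + u)⁻¹ - v' * (1 + u')⁻¹| ≤ 2 * r :=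
    mul_le_mul (by linarith [hu.2]) h2 (abs_nonneg _) (by norm_num)
  have h6 := (mul_le_of_le_one_right (abs_nonneg (u - u')) h4).trans h3
  linarith

theorem dimH_range_projectivePoint {α : ℝ} (hα0 : 0 < α) (hα1 : α ≤ 1) :
    dimH (range (projectivePoint α)) = ENNReal.ofReal (1 + α) := by
  have hs : 0 < 1 + α := by linarith
  apply le_antisymm
  · refine dimH_range_le_of_fibers _ (1 + α).toNNReal
      (fun k => Fin (2 ^ ⌊α * (k + 1)!⌋₊) × Fin (2 ^ ⌊(1 : ℝ) * (k + 1)!⌋₊))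
      (fun k x => (blockHead α k x.1, blockHead 1 k x.2)) _
      tendsto_ofReal_four_mul_inv_two_pow_factorial ?_ ((4 ^ (1 + α) : ℝ).toNNReal) fun k => ?_
    · intro k x y hxy
      rw [Prod.mk.injEq] at hxy
      have h1 := abs_erasedReal_sub_le_of_blockHead_eq hα1 hxy.1
      have h2 := abs_erasedReal_sub_le_of_blockHead_eq le_rfl hxy.2
      rw [edist_dist]
      refine ENNReal.ofReal_le_ofReal ((dist_projectivePoint_le α x y).trans ?_)
      have : (0 : ℝ) ≤ (2 ^ (k + 1)!)⁻¹ := by positivity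
      linarith
    · rw [Fintype.card_prod, Fintype.card_fin, Fintype.card_fin, Real.coe_toNNReal _ hs.le,
        ← pow_add]
      refine two_pow_mul_ofReal_rpow_le hs.le ?_
      have h1 : (⌊α * (k + 1)!⌋₊ : ℝ) ≤ α * (k + 1)! := Nat.floor_le (by positivity)
      have h2 : (⌊(1 : ℝ) * (k + 1)!⌋₊ : ℝ) ≤ 1 * (k + 1)! := Nat.floor_le (by positivity)
      rw [Nat.cast_add]
      linarith
  · refine ENNReal.le_of_forall_nnreal_lt fun d hd => ?_
    rcases eq_zero_or_pos d with rfl | hd0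
    · simp
    have hds : (d : ℝ) < 1 + α := by
      rw [← ENNReal.ofReal_coe_nnreal] at hd
      exact (ENNReal.ofReal_lt_ofReal_iff hs).1 hd
    set ε := (1 + α - d) / 2 with hε
    have hε0 : 0 < ε := by simp only [hε]; linarith
    obtain ⟨C₁, hC₁⟩ := exists_coinMeasure_erasedReal_near_le hα0 hα1
      (show α - ε < α by linarith) 6
    obtain ⟨C₂, hC₂⟩ := exists_coinMeasure_erasedReal_near_le one_pos le_rfl
      (show 1 - ε < 1 by linarith) 6
    refine le_dimH_range_of_measure_ball_le (coinMeasure.prod coinMeasure)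
      (continuous_projectivePoint α) hd0 (C₁ * C₂) fun x n => ?_
    refine le_trans (measure_mono fun y hy => ?_)
      (((Measure.prod_prod _ _).le.trans (mul_le_mul' (hC₁ x.1 n) (hC₂ x.2 n))).trans_eq ?_)
    · have := abs_sub_le_of_dist_projectivePoint_le hy
      exact ⟨by simpa using this.1, by simpa using this.2⟩
    · rw [mul_mul_mul_comm, ← ENNReal.ofReal_mul (by positivity), ← Real.rpow_add (by positivity),
        ENNReal.coe_mul]
      congr 4
      simp only [hε]
      ring

end Construction

section Directions

/-- The parameters `v - (1 + u) y` of the lines joining a point of the planar Cantor set to a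
point of the linear one. -/
def slopeSet (α t : ℝ) : Set ℝ :=
  {w | ∃ x y z, w = erasedReal (zeroBlocks 1) y -
    (1 + erasedReal (zeroBlocks α) x) * erasedReal (zeroBlocks t) z}

theorem slopeSet_subset_iUnion {α t : ℝ} (hα0 : 0 ≤ α) (ht0 : 0 ≤ t) (hαt : α + t ≤ 1) (k : ℕ) :
    slopeSet α t ⊆ ⋃ j ∈ Finset.Icc (-(2 * 2 ^ (k + 1)!) : ℤ) (2 ^ (k + 1)!),
      closedBall ((j : ℝ) / 2 ^ (k + 1)!) (3 * ((2 : ℝ) ^ ((k + 1)! + k))⁻¹) := by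
  rintro _ ⟨x, y, z, rfl⟩
  have hU := erasedReal_zeroBlocks_mem_Icc (show α ≤ 1 by linarith) k x
  have hU1 := (erasedReal_mem_Icc (zeroBlocks α) x).2
  have hV := erasedReal_zeroBlocks_mem_Icc le_rfl k y
  have hT := erasedReal_zeroBlocks_mem_Icc (show t ≤ 1 by linarith) k z
  have hp := binaryHead_lt (eraseDigits (zeroBlocks α) x) ⌊α * (k + 1)!⌋₊
  have hm := binaryHead_lt (eraseDigits (zeroBlocks 1) y) ⌊(1 : ℝ) * (k + 1)!⌋₊
  have hq := binaryHead_lt (eraseDigits (zeroBlocks t) z) ⌊t * (k + 1)!⌋₊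
  have hac : ⌊α * (k + 1)!⌋₊ + ⌊t * (k + 1)!⌋₊ ≤ (k + 1)! := by
    have h1 : (⌊α * (k + 1)!⌋₊ : ℝ) ≤ α * (k + 1)! := Nat.floor_le (by positivity)
    have h2 : (⌊t * (k + 1)!⌋₊ : ℝ) ≤ t * (k + 1)! := Nat.floor_le (by positivity)
    have h3 : (α + t) * (k + 1)! ≤ (k + 1)! := mul_le_of_le_one_left (by positivity) hαt
    have : (⌊α * (k + 1)!⌋₊ + ⌊t * (k + 1)!⌋₊ : ℝ) ≤ (k + 1)! := by linarith
    exact_mod_cast this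
  have hfl : ⌊(1 : ℝ) * (k + 1)!⌋₊ = (k + 1)! := by rw [one_mul, Nat.floor_natCast]
  rw [hfl] at hV hm
  generalize binaryHead (eraseDigits (zeroBlocks α) x) ⌊α * (k + 1)!⌋₊ = p at *
  generalize binaryHead (eraseDigits (zeroBlocks 1) y) (k + 1)! = m at *
  generalize binaryHead (eraseDigits (zeroBlocks t) z) ⌊t * (k + 1)!⌋₊ = q at *
  generalize ⌊α * (k + 1)!⌋₊ = a at *
  generalize ⌊t * (k + 1)!⌋₊ = c at *
  generalize (k + 1)! = N at *
  generalize erasedReal (zeroBlocks α) x = U at *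
  generalize erasedReal (zeroBlocks 1) y = V at *
  generalize erasedReal (zeroBlocks t) z = T at *
  obtain ⟨e, rfl⟩ := Nat.exists_eq_add_of_le hac
  have hjle : (2 ^ a + p) * q * 2 ^ e ≤ 2 * 2 ^ (a + c + e) := by
    calc (2 ^ a + p) * q * 2 ^ e ≤ (2 ^ a + 2 ^ a) * 2 ^ c * 2 ^ e := by gcongr
      _ = 2 * 2 ^ (a + c + e) := by ring
  simp only [mem_iUnion, Finset.mem_Icc, mem_closedBall, Real.dist_eq]
  refine ⟨(m : ℤ) - ((2 ^ a + p) * q * 2 ^ e : ℕ), ⟨?_, ?_⟩, ?_⟩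
  · have : (((2 ^ a + p) * q * 2 ^ e : ℕ) : ℤ) ≤ 2 * 2 ^ (a + c + e) := by exact_mod_cast hjle
    have : (0 : ℤ) ≤ m := by positivity
    linarith
  · have : (m : ℤ) ≤ 2 ^ (a + c + e) := by exact_mod_cast hm.le
    have : (0 : ℤ) ≤ ((2 ^ a + p) * q * 2 ^ e : ℕ) := by positivity
    linarith
  · have hcenter : (((m : ℤ) - ((2 ^ a + p) * q * 2 ^ e : ℕ) : ℤ) : ℝ) / 2 ^ (a + c + e) =
        m / 2 ^ (a + c + e) - (1 + p / 2 ^ a) * (q / 2 ^ c) := by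
      push_cast
      rw [pow_add, pow_add]
      field_simp
    rw [hcenter]
    have hq1 : (q / 2 ^ c : ℝ) ≤ 1 := by
      rw [div_le_one (by positivity)]
      exact_mod_cast hq.le
    have hq0 : (0 : ℝ) ≤ q / 2 ^ c := by positivity
    have hp0 : (0 : ℝ) ≤ p / 2 ^ a := by positivity
    generalize (q / 2 ^ c : ℝ) = q' at *
    generalize (p / 2 ^ a : ℝ) = p' at *
    generalize (m / 2 ^ (a + c + e) : ℝ) = m' at *
    generalize ((2 : ℝ) ^ (a + c + e + k))⁻¹ = h at *
    have h1 : (1 + U) * T - (1 + p') * q' = (U - p') * q' + (1 + U) * (T - q') := by ring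
    have h2 : 0 ≤ (U - p') * q' := mul_nonneg (by linarith [hU.1]) hq0
    have h3 : (U - p') * q' ≤ h * 1 :=
      mul_le_mul (by linarith [hU.2]) hq1 hq0 (by linarith [hU.1, hU.2])
    have h4 : 0 ≤ (1 + U) * (T - q') := mul_nonneg (by linarith [hU.1]) (by linarith [hT.1])
    have h5 : (1 + U) * (T - q') ≤ 2 * h :=
      mul_le_mul (by linarith) (by linarith [hT.2]) (by linarith [hT.1]) (by norm_num)
    rw [abs_le]
    constructor <;> linarith [hV.1, hV.2]

theorem volume_slopeSet {α t : ℝ} (hα0 : 0 ≤ α) (ht0 : 0 ≤ t) (hαt : α + t ≤ 1) :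
    volume (slopeSet α t) = 0 := by
  have hbound (k : ℕ) : volume (slopeSet α t) ≤ ENNReal.ofReal (24 * ((2 : ℝ) ^ k)⁻¹) := by
    refine (measure_mono (slopeSet_subset_iUnion hα0 ht0 hαt k)).trans
      ((measure_biUnion_finset_le _ _).trans ?_)
    simp only [Real.volume_closedBall, Finset.sum_const, nsmul_eq_mul, Int.card_Icc]
    rw [← ENNReal.ofReal_natCast, ← ENNReal.ofReal_mul (by positivity)]
    refine ENNReal.ofReal_le_ofReal ?_
    generalize (k + 1)! = N
    have hcard : (((2 ^ N + 1 - -(2 * 2 ^ N) : ℤ).toNat : ℕ) : ℝ) ≤ 4 * 2 ^ N := by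
      have h1 : (1 : ℤ) ≤ 2 ^ N := one_le_pow₀ (by norm_num)
      have : ((2 ^ N + 1 - -(2 * 2 ^ N) : ℤ).toNat : ℤ) ≤ 4 * 2 ^ N := by
        rw [Int.toNat_of_nonneg (by linarith)]
        linarith
      exact_mod_cast this
    refine (mul_le_mul_of_nonneg_right hcard (by positivity)).trans_eq ?_
    rw [pow_add]
    field_simp
    norm_num
  have hlim : Tendsto (fun k : ℕ => ENNReal.ofReal (24 * ((2 : ℝ) ^ k)⁻¹)) atTop (𝓝 0) := by
    have h : Tendsto (fun n : ℕ => ((2 : ℝ) ^ n)⁻¹) atTop (𝓝 0) :=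
      tendsto_inv_atTop_zero.comp (tendsto_pow_atTop_atTop_of_one_lt one_lt_two)
    simpa using ENNReal.tendsto_ofReal (h.const_mul 24)
  exact nonpos_iff_eq_zero.1 (ge_of_tendsto' hlim hbound)

theorem lipschitzWith_neg_sin_cos (c : ℝ) (hc : |c| = 1) :
    LipschitzWith 2 fun θ : ℝ => !₂[c * -Real.sin θ, c * Real.cos θ] := by
  refine LipschitzWith.of_dist_le_mul fun θ θ₀ => (dist_euclidean_two_le _ _ _ _).trans ?_
  have h1 : |c * -Real.sin θ - c * -Real.sin θ₀| ≤ |θ - θ₀| := by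
    rw [← mul_sub, abs_mul, hc, one_mul, neg_sub_neg, abs_sub_comm]
    simpa [Real.dist_eq] using Real.lipschitzWith_sin.dist_le_mul θ θ₀
  have h2 : |c * Real.cos θ - c * Real.cos θ₀| ≤ |θ - θ₀| := by
    rw [← mul_sub, abs_mul, hc, one_mul]
    simpa [Real.dist_eq] using Real.lipschitzWith_cos.dist_le_mul θ θ₀
  rw [Real.dist_eq]
  push_cast
  linarith

/-- The unit vectors orthogonal to the directions with parameter in a null set form a null set. -/
theorem hausdorffMeasure_unit_vectors_eq_zero {W : Set ℝ} (hW : volume W = 0) :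
    μH[(1 : ℝ)] {e : EuclideanSpace ℝ (Fin 2) | ‖e‖ = 1 ∧ ∃ w ∈ W, e 0 + e 1 * w = 0} = 0 := by
  have hθ : μH[(1 : ℝ)] (Real.arctan '' W) = 0 := by
    rw [hausdorffMeasure_real]
    exact addHaar_image_eq_zero_of_differentiableOn_of_addHaar_eq_zero volume
      Real.differentiable_arctan.differentiableOn hW
  have himage (c : ℝ) (hc : |c| = 1) :
      μH[(1 : ℝ)] ((fun θ : ℝ => !₂[c * -Real.sin θ, c * Real.cos θ]) ''
        (Real.arctan '' W)) = 0 := by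
    have := (lipschitzWith_neg_sin_cos c hc).hausdorffMeasure_image_le zero_le_one
      (Real.arctan '' W)
    rw [hθ, mul_zero] at this
    exact nonpos_iff_eq_zero.1 this
  refine measure_mono_null ?_ (measure_union_null (himage 1 (by simp)) (himage (-1) (by simp)))
  rintro e ⟨he, w, hw, hew⟩
  have hnorm : e 0 ^ 2 + e 1 ^ 2 = 1 := by
    have := EuclideanSpace.real_norm_sq_eq e
    rw [he, Fin.sum_univ_two] at this
    linarith
  have he0 : e 0 = -(e 1 * w) := by linarith
  have hcos : 0 < Real.cos (Real.arctan w) := Real.cos_arctan_pos w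
  have hsin : Real.sin (Real.arctan w) = w * Real.cos (Real.arctan w) := by
    rw [← Real.tan_mul_cos hcos.ne', Real.tan_arctan]
  have hsq : e 1 ^ 2 = Real.cos (Real.arctan w) ^ 2 := by
    rw [Real.cos_sq_arctan, eq_div_iff (by positivity)]
    rw [he0] at hnorm
    linarith
  rcases sq_eq_sq_iff_eq_or_eq_neg.1 hsq with h | h
  · refine Or.inl ⟨_, ⟨w, hw, rfl⟩, ?_⟩
    ext i
    fin_cases i
    · simp [he0, h, hsin, mul_comm]
    · simp [h]
  · refine Or.inr ⟨_, ⟨w, hw, rfl⟩, ?_⟩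
    ext i
    fin_cases i
    · simp [he0, h, hsin, mul_comm]
    · simp [h]

end Directions

theorem stmt_5 (s t : ℝ) (ht0 : 0 < t) (ht1 : t < 1) (hs1 : 1 < s) (hs2 : s < 2)
    (hst : s + t = 2) :
    ∃ A B : Set (EuclideanSpace ℝ (Fin 2)),
      IsCompact A ∧ IsCompact B ∧
      dimH A = ENNReal.ofReal s ∧ dimH B = ENNReal.ofReal t ∧
      μH[(1 : ℝ)] {e : EuclideanSpace ℝ (Fin 2) | ‖e‖ = 1 ∧
        ((fun x => ⟪x, e⟫) '' A ∩ (fun x => ⟪x, e⟫) '' B).Nonempty} = 0 := by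
  refine ⟨range (projectivePoint (s - 1)), range (verticalPoint t),
    isCompact_range (continuous_projectivePoint _), isCompact_range (continuous_verticalPoint t),
    ?_, dimH_range_verticalPoint ht0 ht1.le, ?_⟩
  · rw [dimH_range_projectivePoint (by linarith) (by linarith), add_sub_cancel]
  refine measure_mono_null ?_ (hausdorffMeasure_unit_vectors_eq_zero
    (volume_slopeSet (α := s - 1) (t := t) (by linarith) ht0.le (by linarith)))
  rintro e ⟨he, _, ⟨_, ⟨⟨x, y⟩, rfl⟩, rfl⟩, _, ⟨z, rfl⟩, hz⟩
  refine ⟨he, _, ⟨x, y, z, rfl⟩, ?_⟩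
  have hu := (erasedReal_mem_Icc (zeroBlocks (s - 1)) x).1
  simp [verticalPoint, projectivePoint, PiLp.inner_apply] at hz
  field_simp at hz
  linarith
end

section
/- Let n ≥ 2 and let μ, ν be nonzero finite Borel measures on ℝⁿ with compact support such that I₁(μ) < ∞ and I₁(ν) < ∞. For e ∈ S^{n−1}, let f_e and g_e denote the Radon–Nikodym derivatives with respect to one-dimensional Lebesgue measure of the pushforward measures (π_e)♯μ and (π_e)♯ν on ℝ. Then ∫_{S^{n−1}} ( ∫_ℝ f_e(t) g_e(t) dt ) dH^{n−1}(e) > 0. -/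
open MeasureTheory Metric Set
open scoped ENNReal RealInnerProductSpace

/-- The topological support of a measure: points all of whose neighbourhoods
have positive measure. -/
def sptm (n : ℕ) (μ : MeasureTheory.Measure (EuclideanSpace ℝ (Fin n))) :
    Set (EuclideanSpace ℝ (Fin n)) :=
  {x | ∀ r > 0, 0 < μ (Metric.ball x r)}

/-- The `s`-energy `I_s(μ) = ∬ |x-y|^{-s} dμ(x) dμ(y)` of a measure. -/
noncomputable def energyI (n : ℕ) (s : ℝ)
    (μ : MeasureTheory.Measure (EuclideanSpace ℝ (Fin n))) : ℝ≥0∞ :=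
  ∫⁻ x, ∫⁻ y, (‖x - y‖₊ : ℝ≥0∞) ^ (-s) ∂μ ∂μ

open Filter Topology

/-- The average density of `P` on the interval of radius `δ` around `t`. -/
noncomputable def ballAverage (P : Measure ℝ) (δ t : ℝ) : ℝ≥0∞ :=
  P (closedBall t δ) / ENNReal.ofReal (2 * δ)

/-- A substitute for `|a - b| ^ 2` in the extended nonnegative reals. -/
noncomputable def sqGap (a b : ℝ≥0∞) : ℝ≥0∞ := (a - b) ^ 2 + (b - a) ^ 2

lemma sqGap_add_two_mul {a b : ℝ≥0∞} (ha : a ≠ ∞) (hb : b ≠ ∞) :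
    sqGap a b + 2 * (a * b) = a ^ 2 + b ^ 2 := by
  lift a to NNReal using ha
  lift b to NNReal using hb
  unfold sqGap
  norm_cast
  wlog h : a ≤ b generalizing a b
  · have := this b a (le_of_not_ge h)
    rw [add_comm (a ^ 2), ← this]; ring
  · obtain ⟨c, rfl⟩ := exists_add_of_le h
    rw [tsub_eq_zero_of_le h, add_tsub_cancel_left]; ring

lemma sqGap_of_mul_eq_zero {a b : ℝ≥0∞} (h : a * b = 0) : sqGap a b = a ^ 2 + b ^ 2 := by
  rcases mul_eq_zero.1 h with rfl | rfl <;> simp [sqGap]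

lemma tendsto_sqGap {ι : Type*} {l : Filter ι} {u v : ι → ℝ≥0∞} {a b : ℝ≥0∞}
    (hu : Tendsto u l (𝓝 a)) (hv : Tendsto v l (𝓝 b)) (h : a ≠ ∞ ∨ b ≠ ∞) :
    Tendsto (fun i => sqGap (u i) (v i)) l (𝓝 (sqGap a b)) :=
  ((ENNReal.continuous_pow 2).tendsto _ |>.comp (ENNReal.Tendsto.sub hu hv h)).add
    ((ENNReal.continuous_pow 2).tendsto _ |>.comp (ENNReal.Tendsto.sub hv hu h.symm))

lemma ballAverage_ne_top (P : Measure ℝ) [IsFiniteMeasure P] {δ : ℝ} (hδ : 0 < δ) (t : ℝ) :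
    ballAverage P δ t ≠ ∞ :=
  (ENNReal.div_lt_top (measure_ne_top _ _) (by simpa using hδ)).ne

lemma measurable_measure_closedBall (P : Measure ℝ) [SFinite P] (δ : ℝ) :
    Measurable fun t => P (closedBall t δ) := by
  have : MeasurableSet {p : ℝ × ℝ | dist p.2 p.1 ≤ δ} :=
    (isClosed_le (by fun_prop) (by fun_prop)).measurableSet
  exact measurable_measure_prodMk_left this

lemma measurable_ballAverage (P : Measure ℝ) [SFinite P] (δ : ℝ) :
    Measurable (ballAverage P δ) :=
  (measurable_measure_closedBall P δ).div_const _

lemma lintegral_mul_measure_closedBall (P : Measure ℝ) [SFinite P] (δ : ℝ) {h : ℝ → ℝ≥0∞}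
    (hh : Measurable h) :
    ∫⁻ t, h t * P (closedBall t δ) = ∫⁻ s, (∫⁻ t in closedBall s δ, h t) ∂P := by
  have hm : MeasurableSet {p : ℝ × ℝ | dist p.2 p.1 ≤ δ} :=
    (isClosed_le (by fun_prop) (by fun_prop)).measurableSet
  have e1 : ∀ t, h t * P (closedBall t δ)
      = ∫⁻ s, {p : ℝ × ℝ | dist p.2 p.1 ≤ δ}.indicator (fun p => h p.1) (t, s) ∂P := by
    intro t
    have : ∀ s, {p : ℝ × ℝ | dist p.2 p.1 ≤ δ}.indicator (fun p => h p.1) (t, s)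
        = (closedBall t δ).indicator (fun _ => h t) s := fun s => by
      simp [indicator, mem_closedBall]
    simp_rw [this]
    rw [lintegral_indicator_const measurableSet_closedBall]
  have e2 : ∀ s, ∫⁻ t in closedBall s δ, h t
      = ∫⁻ t, {p : ℝ × ℝ | dist p.2 p.1 ≤ δ}.indicator (fun p => h p.1) (t, s) := by
    intro s
    rw [← lintegral_indicator measurableSet_closedBall]
    refine lintegral_congr fun t => ?_
    simp [indicator, mem_closedBall, dist_comm]
  simp_rw [e1, e2]
  exact lintegral_lintegral_swap ((hh.comp measurable_fst).indicator hm).aemeasurable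

lemma lintegral_mul_ballAverage (P : Measure ℝ) [SFinite P] (δ : ℝ) {h : ℝ → ℝ≥0∞}
    (hh : Measurable h) :
    ∫⁻ t, h t * ballAverage P δ t
      = (∫⁻ s, (∫⁻ t in closedBall s δ, h t) ∂P) / ENNReal.ofReal (2 * δ) := by
  rw [← lintegral_mul_measure_closedBall P δ hh]
  simp_rw [ballAverage, div_eq_mul_inv, ← mul_assoc]
  exact lintegral_mul_const _ (hh.mul (measurable_measure_closedBall P δ))

lemma lintegral_ballAverage_sq_le (P : Measure ℝ) [IsFiniteMeasure P] {δ : ℝ} (hδ : 0 < δ) :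
    ∫⁻ t, ballAverage P δ t ^ 2
      ≤ (∫⁻ s, P (closedBall s (2 * δ)) ∂P) / ENNReal.ofReal (2 * δ) := by
  simp_rw [sq]
  rw [lintegral_mul_ballAverage P δ (measurable_ballAverage P δ)]
  gcongr with s
  calc ∫⁻ t in closedBall s δ, ballAverage P δ t
      ≤ ∫⁻ t in closedBall s δ, P (closedBall s (2 * δ)) / ENNReal.ofReal (2 * δ) := by
        refine setLIntegral_mono measurable_const fun t ht => ?_
        rw [ballAverage]
        gcongr
        refine closedBall_subset_closedBall' ?_
        rw [mem_closedBall] at ht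
        linarith
    _ = P (closedBall s (2 * δ)) := by
        rw [setLIntegral_const, Real.volume_closedBall]
        exact ENNReal.div_mul_cancel (by simpa using hδ) ENNReal.ofReal_ne_top

lemma le_lintegral_ballAverage_mul (P Q : Measure ℝ) [IsFiniteMeasure P] [IsFiniteMeasure Q]
    {δ : ℝ} (hδ : 0 < δ) :
    (∫⁻ s, Q (closedBall s (δ / 2)) ∂P) / ENNReal.ofReal (4 * δ)
      ≤ ∫⁻ t, ballAverage P δ t * ballAverage Q δ t := by
  simp_rw [mul_comm (ballAverage P δ _)]
  rw [lintegral_mul_ballAverage P δ (measurable_ballAverage Q δ)]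
  have h4 : ENNReal.ofReal (4 * δ) = 2 * ENNReal.ofReal (2 * δ) := by
    rw [show (2 : ℝ≥0∞) = ENNReal.ofReal 2 by simp, ← ENNReal.ofReal_mul (by norm_num)]
    ring_nf
  have h1 : ∀ s, Q (closedBall s (δ / 2)) / 2 ≤ ∫⁻ t in closedBall s δ, ballAverage Q δ t := by
    intro s
    calc Q (closedBall s (δ / 2)) / 2
        = ∫⁻ t in closedBall s (δ / 2),
            Q (closedBall s (δ / 2)) / ENNReal.ofReal (2 * δ) := by
          rw [setLIntegral_const, Real.volume_closedBall, ENNReal.div_eq_inv_mul,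
            ENNReal.div_eq_inv_mul, mul_comm (_⁻¹) (Q _), mul_comm (_⁻¹) (Q _), mul_assoc]
          congr 1
          rw [show 2 * (δ / 2) = δ by ring, ENNReal.ofReal_mul (by norm_num),
            ENNReal.mul_inv (by simp) (by simp), mul_assoc,
            ENNReal.inv_mul_cancel (by simpa using hδ) ENNReal.ofReal_ne_top]
          simp
      _ ≤ ∫⁻ t in closedBall s (δ / 2), ballAverage Q δ t := by
          refine setLIntegral_mono (measurable_ballAverage Q δ) fun t ht => ?_
          rw [ballAverage]
          gcongr
          refine closedBall_subset_closedBall' ?_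
          rw [mem_closedBall, dist_comm] at ht
          linarith
      _ ≤ _ := lintegral_mono_set (closedBall_subset_closedBall (by linarith))
  calc _ = (∫⁻ s, Q (closedBall s (δ / 2)) / 2 ∂P) / ENNReal.ofReal (2 * δ) := by
        simp_rw [div_eq_mul_inv]
        rw [lintegral_mul_const _ (measurable_measure_closedBall Q _), h4,
          ENNReal.mul_inv (by simp) (by simp), mul_assoc]
    _ ≤ _ := by gcongr with s; exact h1 s

lemma ennreal_le_mul_sq_add_inv (x : ℝ≥0∞) {η : ℝ≥0∞} (h0 : η ≠ 0) (ht : η ≠ ∞) :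
    x ≤ η * x ^ 2 + η⁻¹ := by
  rcases le_total x η⁻¹ with h | h
  · exact h.trans le_add_self
  · calc x = η * η⁻¹ * x := by rw [ENNReal.mul_inv_cancel h0 ht, one_mul]
      _ ≤ η * x * x := by gcongr
      _ = η * x ^ 2 := by ring
      _ ≤ _ := le_self_add

lemma absolutelyContinuous_of_liminf_lintegral_sq (P : Measure ℝ) [IsFiniteMeasure P]
    {δ : ℕ → ℝ} (hδ : ∀ k, 0 < δ k) (hδ0 : Tendsto δ atTop (𝓝 0))
    (hP : liminf (fun k => ∫⁻ t, ballAverage P (δ k) t ^ 2) atTop < ∞) :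
    P ≪ volume := by
  obtain ⟨M, hM, hMt⟩ := exists_between hP
  have hfreq := frequently_lt_of_liminf_lt (by isBoundedDefault) hM
  have key : ∀ U : Set ℝ, IsOpen U → ∀ η : ℝ≥0∞, η ≠ 0 → η ≠ ∞ →
      P U ≤ η * M + η⁻¹ * volume U := by
    intro U hU η h0 ht
    have hmeas : ∀ k, Measurable fun s => volume (U ∩ closedBall s (δ k)) := by
      intro k
      have := measurable_measure_closedBall (volume.restrict U) (δ k)
      simpa only [Measure.restrict_apply measurableSet_closedBall, inter_comm] using this
    calc P U = ∫⁻ s, U.indicator 1 s ∂P := by rw [lintegral_indicator_one hU.measurableSet]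
      _ ≤ ∫⁻ s, liminf (fun k => volume (U ∩ closedBall s (δ k)) / ENNReal.ofReal (2 * δ k))
            atTop ∂P := by
          refine lintegral_mono fun s => ?_
          by_cases hs : s ∈ U
          · obtain ⟨ε, hε, hεU⟩ := Metric.isOpen_iff.1 hU s hs
            refine le_liminf_of_le (by isBoundedDefault) ?_
            filter_upwards [hδ0.eventually_lt_const hε] with k hk
            rw [inter_eq_self_of_subset_right ((closedBall_subset_ball hk).trans hεU),
              Real.volume_closedBall, ENNReal.div_self (by simpa using hδ k) ENNReal.ofReal_ne_top]
            simp [hs]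
          · simp [hs]
      _ ≤ liminf (fun k => ∫⁻ s, volume (U ∩ closedBall s (δ k)) / ENNReal.ofReal (2 * δ k) ∂P)
            atTop := lintegral_liminf_le fun k => (hmeas k).div_const _
      _ ≤ η * M + η⁻¹ * volume U := by
          refine liminf_le_of_frequently_le' (hfreq.mono fun k hk => ?_)
          calc ∫⁻ s, volume (U ∩ closedBall s (δ k)) / ENNReal.ofReal (2 * δ k) ∂P
              = ∫⁻ t, U.indicator 1 t * ballAverage P (δ k) t := by
                rw [lintegral_mul_ballAverage P (δ k) (measurable_one.indicator hU.measurableSet)]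
                simp_rw [div_eq_mul_inv]
                rw [lintegral_mul_const _ (hmeas k)]
                congr 1
                refine lintegral_congr fun s => ?_
                rw [lintegral_indicator_one hU.measurableSet,
                  Measure.restrict_apply hU.measurableSet]
            _ ≤ ∫⁻ t, (η * ballAverage P (δ k) t ^ 2 + η⁻¹ * U.indicator 1 t) := by
                refine lintegral_mono fun t => ?_
                by_cases ht' : t ∈ U
                · simpa [ht'] using ennreal_le_mul_sq_add_inv _ h0 ht
                · simp [ht']
            _ = η * (∫⁻ t, ballAverage P (δ k) t ^ 2) + η⁻¹ * volume U := by
                rw [lintegral_add_left (((measurable_ballAverage P _).pow_const 2).const_mul _),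
                  lintegral_const_mul _ ((measurable_ballAverage P _).pow_const 2),
                  lintegral_const_mul _ (measurable_one.indicator hU.measurableSet),
                  lintegral_indicator_one hU.measurableSet]
            _ ≤ _ := by gcongr
  intro A hA
  have bound : ∀ η : NNReal, 0 < η → P A ≤ η * (M + 1) := by
    intro η hη
    have hη0 : (η : ℝ≥0∞) ≠ 0 := by simpa using hη.ne'
    obtain ⟨U, hAU, hU, hUv⟩ := A.exists_isOpen_le_add volume (ε := (η : ℝ≥0∞) ^ 2)
      (by simpa using hη.ne')
    rw [hA, zero_add] at hUv
    calc P A ≤ P U := measure_mono hAU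
      _ ≤ η * M + (η : ℝ≥0∞)⁻¹ * volume U := key U hU η hη0 (by simp)
      _ ≤ η * M + (η : ℝ≥0∞)⁻¹ * (η : ℝ≥0∞) ^ 2 := by gcongr
      _ = η * (M + 1) := by
        rw [sq, ← mul_assoc, ENNReal.inv_mul_cancel hη0 (by simp)]; ring
  have hlim : Tendsto (fun η : NNReal => (η : ℝ≥0∞) * (M + 1)) (𝓝[>] 0) (𝓝 (0 * (M + 1))) := by
    refine ENNReal.Tendsto.mul_const ?_ (Or.inr (by simp [hMt.ne]))
    have := (ENNReal.continuous_coe.tendsto (0 : NNReal)).mono_left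
      (nhdsWithin_le_nhds (s := Ioi 0))
    simpa using this
  rw [zero_mul] at hlim
  exact le_antisymm (ge_of_tendsto hlim (eventually_mem_nhdsWithin.mono fun η hη => bound η hη))
    zero_le

lemma sq_setLIntegral_le (f : ℝ → ℝ≥0∞) (hf : Measurable f) (s : Set ℝ) :
    (∫⁻ x in s, f x) ^ 2 ≤ volume s * ∫⁻ x in s, f x ^ 2 := by
  have := ENNReal.lintegral_mul_le_Lp_mul_Lq (volume.restrict s) Real.HolderConjugate.two_two
    (f := 1) (g := f) aemeasurable_const hf.aemeasurable
  simp only [one_mul, Pi.one_apply, lintegral_const, Measure.restrict_apply_univ,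
    ENNReal.rpow_two] at this
  calc _ ≤ _ := pow_le_pow_left' this 2
    _ = _ := by
      have h (x : ℝ≥0∞) : (x ^ (1 / 2 : ℝ)) ^ 2 = x := by
        rw [← ENNReal.rpow_two, ← ENNReal.rpow_mul]; norm_num
      rw [mul_pow, h, h, one_pow, one_mul]

lemma lintegral_ballAverage_sq_le_lintegral_rnDeriv_sq (P : Measure ℝ) [IsFiniteMeasure P]
    (hP : P ≪ volume) {δ : ℝ} (hδ : 0 < δ) :
    ∫⁻ t, ballAverage P δ t ^ 2 ≤ ∫⁻ t, P.rnDeriv volume t ^ 2 := by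
  set f := P.rnDeriv volume with hf
  have hfm : Measurable f := Measure.measurable_rnDeriv _ _
  set c := ENNReal.ofReal (2 * δ) with hc
  have hc0 : c ≠ 0 := by simpa [hc] using hδ
  have hct : c ≠ ∞ := ENNReal.ofReal_ne_top
  have hPt : ∀ t, ballAverage P δ t ^ 2
      ≤ 1 * ballAverage (volume.withDensity fun t => f t ^ 2) δ t := by
    intro t
    have e : P (closedBall t δ) = ∫⁻ x in closedBall t δ, f x := by
      rw [← withDensity_apply _ measurableSet_closedBall, Measure.withDensity_rnDeriv_eq _ _ hP]
    rw [ballAverage, ballAverage, withDensity_apply _ measurableSet_closedBall, e, ← hc, one_mul]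
    calc ((∫⁻ x in closedBall t δ, f x) / c) ^ 2
        ≤ (c * ∫⁻ x in closedBall t δ, f x ^ 2) * (c⁻¹ * c⁻¹) := by
          rw [div_eq_mul_inv, mul_pow, sq c⁻¹]
          gcongr
          rw [hc, ← Real.volume_closedBall t δ]
          exact sq_setLIntegral_le f hfm _
      _ = (c * c⁻¹) * (∫⁻ x in closedBall t δ, f x ^ 2) * c⁻¹ := by ring
      _ = _ := by rw [ENNReal.mul_inv_cancel hc0 hct, one_mul, div_eq_mul_inv]
  refine (lintegral_mono hPt).trans ?_
  rw [lintegral_mul_ballAverage _ δ measurable_const]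
  simp only [lintegral_const, Measure.restrict_apply_univ, Real.volume_closedBall, one_mul]
  rw [← hc, withDensity_apply _ MeasurableSet.univ, Measure.restrict_univ, mul_comm, mul_div_assoc,
    mul_comm, ENNReal.div_self hc0 hct, one_mul]

lemma ae_tendsto_ballAverage (P : Measure ℝ) [IsFiniteMeasure P]
    {δ : ℕ → ℝ} (hδ : ∀ k, 0 < δ k) (hδ0 : Tendsto δ atTop (𝓝 0)) :
    ∀ᵐ t, Tendsto (fun k => ballAverage P (δ k) t) atTop (𝓝 (P.rnDeriv volume t)) := by
  filter_upwards [Besicovitch.ae_tendsto_rnDeriv P volume] with t ht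
  have := ht.comp (tendsto_nhdsWithin_iff.2 ⟨hδ0, Eventually.of_forall hδ⟩)
  simpa [Function.comp_def, ballAverage, Real.volume_closedBall] using this

lemma lintegral_sqGap_add_le_liminf (P Q : Measure ℝ) [IsFiniteMeasure P] [IsFiniteMeasure Q]
    {δ : ℕ → ℝ} (hδ : ∀ k, 0 < δ k) (hδ0 : Tendsto δ atTop (𝓝 0))
    (hP : liminf (fun k => ∫⁻ t, ballAverage P (δ k) t ^ 2) atTop < ∞)
    (hQ : liminf (fun k => ∫⁻ t, ballAverage Q (δ k) t ^ 2) atTop < ∞)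
    (h0 : ∀ᵐ t, P.rnDeriv volume t * Q.rnDeriv volume t = 0) (k : ℕ) :
    (∫⁻ t, sqGap (ballAverage P (δ k) t) (ballAverage Q (δ k) t))
        + 2 * ∫⁻ t, ballAverage P (δ k) t * ballAverage Q (δ k) t
      ≤ liminf (fun j => ∫⁻ t, sqGap (ballAverage P (δ j) t) (ballAverage Q (δ j) t)) atTop := by
  have hmP := fun j => measurable_ballAverage P (δ j)
  have hmQ := fun j => measurable_ballAverage Q (δ j)
  have hgap : ∀ j, Measurable fun t => sqGap (ballAverage P (δ j) t) (ballAverage Q (δ j) t) :=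
    fun j => (((hmP j).sub (hmQ j)).pow_const 2).add (((hmQ j).sub (hmP j)).pow_const 2)
  calc _ = (∫⁻ t, ballAverage P (δ k) t ^ 2) + ∫⁻ t, ballAverage Q (δ k) t ^ 2 := by
        have hPQ := lintegral_const_mul (μ := volume) 2 ((hmP k).mul (hmQ k))
        simp only [Pi.mul_apply] at hPQ
        rw [← hPQ, ← lintegral_add_left (hgap k),
          ← lintegral_add_left ((hmP k).pow_const 2)]
        exact lintegral_congr fun t => sqGap_add_two_mul (ballAverage_ne_top P (hδ k) t)
          (ballAverage_ne_top Q (hδ k) t)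
    _ ≤ (∫⁻ t, P.rnDeriv volume t ^ 2) + ∫⁻ t, Q.rnDeriv volume t ^ 2 :=
        add_le_add
          (lintegral_ballAverage_sq_le_lintegral_rnDeriv_sq P
            (absolutelyContinuous_of_liminf_lintegral_sq P hδ hδ0 hP) (hδ k))
          (lintegral_ballAverage_sq_le_lintegral_rnDeriv_sq Q
            (absolutelyContinuous_of_liminf_lintegral_sq Q hδ hδ0 hQ) (hδ k))
    _ = ∫⁻ t, liminf (fun j => sqGap (ballAverage P (δ j) t) (ballAverage Q (δ j) t)) atTop := by
        rw [← lintegral_add_left ((Measure.measurable_rnDeriv _ _).pow_const 2)]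
        refine lintegral_congr_ae ?_
        filter_upwards [h0, ae_tendsto_ballAverage P hδ hδ0, ae_tendsto_ballAverage Q hδ hδ0]
          with t h0 hPt hQt
        rw [← sqGap_of_mul_eq_zero h0]
        refine (tendsto_sqGap hPt hQt ?_).liminf_eq.symm
        rcases mul_eq_zero.1 h0 with h | h <;> simp [h]
    _ ≤ _ := lintegral_liminf_le hgap

open ProbabilityTheory in
lemma pi_gaussianReal_absolutelyContinuous (n : ℕ) :
    Measure.pi (fun _ : Fin n => gaussianReal 0 1) ≪ (volume : Measure (Fin n → ℝ)) := by
  induction n with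
  | zero =>
    rw [Measure.volume_pi_eq_dirac, Measure.pi_of_empty]
  | succ n ih =>
    have h1 := (measurePreserving_piFinSuccAbove (fun _ : Fin (n + 1) => gaussianReal 0 1) 0).symm
    have h2 := (volume_preserving_piFinSuccAbove (fun _ : Fin (n + 1) => ℝ) 0).symm
    rw [← h1.map_eq, ← h2.map_eq]
    exact ((gaussianReal_absolutelyContinuous 0 one_ne_zero).prod ih).map
      (MeasurableEquiv.measurable _)

open ProbabilityTheory in
lemma stdGaussian_absolutelyContinuous (n : ℕ) :
    stdGaussian (EuclideanSpace ℝ (Fin n)) ≪ volume := by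
  rw [← map_pi_eq_stdGaussian, ← (PiLp.volume_preserving_toLp (Fin n)).map_eq]
  exact (pi_gaussianReal_absolutelyContinuous n).map (PiLp.volume_preserving_toLp (Fin n)).measurable

section Strip

open ProbabilityTheory

variable {E : Type*} [NormedAddCommGroup E] [InnerProductSpace ℝ E] [MeasurableSpace E]
  [BorelSpace E] [FiniteDimensional ℝ E]

lemma stdGaussian_strip_eq {v : E} (hv : v ≠ 0) (r : ℝ) :
    stdGaussian E {e | |⟪v, e⟫| ≤ r} = gaussianReal 0 1 (closedBall 0 (r / ‖v‖)) := by
  have hv' : 0 < ‖v‖ := norm_pos_iff.2 hv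
  set L := innerSL ℝ (‖v‖⁻¹ • v) with hL
  have hLn : ‖L‖ = 1 := by
    rw [hL, innerSL_apply_norm, norm_smul, norm_inv, norm_norm, inv_mul_cancel₀ hv'.ne']
  have hmap : (stdGaussian E).map L = gaussianReal 0 1 := by
    rw [IsGaussian.map_eq_gaussianReal, integral_strongDual_stdGaussian,
      variance_dual_stdGaussian, hLn]
    simp
  rw [← hmap, Measure.map_apply L.continuous.measurable measurableSet_closedBall]
  congr 1
  ext e
  simp only [hL, mem_ofPred_eq, mem_preimage, mem_closedBall, dist_zero_right, innerSL_apply_apply,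
    inner_smul_left, Real.norm_eq_abs, abs_mul]
  simp only [conj_trivial, abs_inv, abs_norm]
  rw [le_div_iff₀ hv', mul_comm, ← mul_assoc, mul_inv_cancel₀ hv'.ne', one_mul]

lemma gaussianPDFReal_zero_one_le_one (x : ℝ) : gaussianPDFReal 0 1 x ≤ 1 := by
  rw [gaussianPDFReal]
  have h1 : (√(2 * Real.pi * (1 : NNReal)))⁻¹ ≤ 1 := by
    refine inv_le_one_of_one_le₀ (Real.one_le_sqrt.2 ?_)
    have := Real.pi_gt_three
    simp
    linarith
  have h2 : Real.exp (-(x - 0) ^ 2 / (2 * (1 : NNReal))) ≤ 1 := by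
    refine Real.exp_le_one_iff.2 ?_
    exact div_nonpos_of_nonpos_of_nonneg (neg_nonpos.2 (sq_nonneg _)) (by positivity)
  exact mul_le_one₀ h1 (Real.exp_nonneg _) h2

lemma stdGaussian_strip_le (v : E) {r : ℝ} (hr : 0 < r) :
    stdGaussian E {e | |⟪v, e⟫| ≤ r} ≤ ENNReal.ofReal (2 * r) * (‖v‖₊ : ℝ≥0∞) ^ (-1 : ℝ) := by
  rcases eq_or_ne v 0 with rfl | hv
  · simp [ENNReal.mul_top, hr]
  have hv' : 0 < ‖v‖ := norm_pos_iff.2 hv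
  rw [stdGaussian_strip_eq hv, gaussianReal_apply _ one_ne_zero]
  calc ∫⁻ x in closedBall 0 (r / ‖v‖), gaussianPDF 0 1 x
      ≤ ∫⁻ x in closedBall (0 : ℝ) (r / ‖v‖), 1 := by
        refine lintegral_mono fun x => ?_
        rw [gaussianPDF]
        exact ENNReal.ofReal_le_one.2 (gaussianPDFReal_zero_one_le_one x)
    _ = _ := by
        rw [setLIntegral_const, one_mul, Real.volume_closedBall, ENNReal.rpow_neg_one, mul_div,
          ENNReal.ofReal_div_of_pos hv', div_eq_mul_inv, ofReal_norm, enorm_eq_nnnorm]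

lemma le_stdGaussian_strip (v : E) {r : ℝ} (hr : 0 < r) (hr1 : r ≤ 1) :
    ENNReal.ofReal r * ENNReal.ofReal (gaussianPDFReal 0 1 1 / (‖v‖ + 1))
      ≤ stdGaussian E {e | |⟪v, e⟫| ≤ r} := by
  have hpos := gaussianPDFReal_pos 0 1 1 one_ne_zero
  rw [← ENNReal.ofReal_mul hr.le]
  rcases eq_or_ne v 0 with rfl | hv
  · simp only [inner_zero_left, abs_zero, hr.le, ofPred_true, measure_univ, norm_zero, zero_add,
      div_one]
    exact ENNReal.ofReal_le_one.2 (mul_le_one₀ hr1 hpos.le (gaussianPDFReal_zero_one_le_one 1))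
  have hv' : 0 < ‖v‖ := norm_pos_iff.2 hv
  rw [stdGaussian_strip_eq hv, gaussianReal_apply _ one_ne_zero]
  have hle1 : r / (‖v‖ + 1) ≤ 1 := (div_le_one (by positivity)).2 (by linarith)
  have hle2 : r / (‖v‖ + 1) ≤ r / ‖v‖ := by gcongr; linarith
  have hx : ∀ x ∈ closedBall (0 : ℝ) (r / (‖v‖ + 1)),
      ENNReal.ofReal (gaussianPDFReal 0 1 1) ≤ gaussianPDF 0 1 x := by
    intro x hx
    rw [gaussianPDF, gaussianPDFReal, gaussianPDFReal]
    gcongr ENNReal.ofReal (_ * Real.exp (- ?_ / _))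
    rw [mem_closedBall, dist_zero_right, Real.norm_eq_abs] at hx
    rw [sub_zero, sub_zero, sq_le_sq, abs_one]
    exact hx.trans hle1
  calc ENNReal.ofReal (r * (gaussianPDFReal 0 1 1 / (‖v‖ + 1)))
      ≤ ENNReal.ofReal (gaussianPDFReal 0 1 1 * (2 * (r / (‖v‖ + 1)))) := by
        refine ENNReal.ofReal_le_ofReal ?_
        have : 0 ≤ r * (gaussianPDFReal 0 1 1 / (‖v‖ + 1)) := by positivity
        calc _ ≤ 2 * (r * (gaussianPDFReal 0 1 1 / (‖v‖ + 1))) := by linarith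
          _ = _ := by ring
    _ = ∫⁻ x in closedBall (0 : ℝ) (r / (‖v‖ + 1)), ENNReal.ofReal (gaussianPDFReal 0 1 1) := by
        rw [setLIntegral_const, Real.volume_closedBall, ENNReal.ofReal_mul hpos.le]
    _ ≤ ∫⁻ x in closedBall (0 : ℝ) (r / (‖v‖ + 1)), gaussianPDF 0 1 x :=
        setLIntegral_mono (measurable_gaussianPDF 0 1) hx
    _ ≤ _ := lintegral_mono_set (closedBall_subset_closedBall hle2)

end Strip

lemma volume_cone_eq_zero (m : ℕ) (A : Set (EuclideanSpace ℝ (Fin (m + 1))))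
    (hA : A ⊆ sphere 0 1) (hA0 : μH[(m : ℝ)] A = 0) :
    volume {z | ∃ a ∈ A, ∃ s : ℝ, z = s • a} = 0 := by
  let T : EuclideanSpace ℝ (Fin (m + 1)) → (Fin m → ℝ) := fun z i => z i.succ
  have hT : LipschitzWith 1 T := by
    refine LipschitzWith.of_dist_le_mul fun x y => ?_
    rw [NNReal.coe_one, one_mul, dist_pi_le_iff dist_nonneg]
    intro i
    rw [Real.dist_eq, dist_eq_norm]
    exact PiLp.norm_apply_le (x - y) i.succ
  have hB : volume (T '' A) = 0 := by
    have h := hT.hausdorffMeasure_image_le (d := m) (by positivity) A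
    rw [hA0, mul_zero] at h
    have h2 := hausdorffMeasure_pi_real (ι := Fin m)
    rw [Fintype.card_fin] at h2
    rw [← h2]
    exact le_antisymm h zero_le
  have hN : volume (T ⁻¹' (T '' A)) = 0 := by
    have hq : Measure.QuasiMeasurePreserving T volume volume := by
      have h1 := (PiLp.volume_preserving_ofLp (Fin (m + 1)))
      have h2 := volume_preserving_piFinSuccAbove (fun _ : Fin (m + 1) => ℝ) 0
      exact Measure.quasiMeasurePreserving_snd.comp (h2.comp h1).quasiMeasurePreserving
    exact hq.preimage_null hB
  let G : ℝ → EuclideanSpace ℝ (Fin (m + 1)) → EuclideanSpace ℝ (Fin (m + 1)) := fun ε z =>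
    z 0 • WithLp.toLp 2 (Fin.cons (ε * √(1 - ∑ i, T z i ^ 2)) (T z) : Fin (m + 1) → ℝ)
  let V : Set (EuclideanSpace ℝ (Fin (m + 1))) := {z | ∑ i, T z i ^ 2 < 1}
  have hG : ∀ ε, volume (G ε '' (T ⁻¹' (T '' A) ∩ V)) = 0 := by
    intro ε
    refine addHaar_image_eq_zero_of_differentiableOn_of_addHaar_eq_zero _ ?_
      (measure_mono_null inter_subset_left hN)
    have hTd : ∀ i, Differentiable ℝ fun z => T z i := fun i => by fun_prop
    have hd : DifferentiableOn ℝ (fun z => √(1 - ∑ i, T z i ^ 2)) (T ⁻¹' (T '' A) ∩ V) := by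
      refine DifferentiableOn.sqrt (by fun_prop) fun z hz => ?_
      have := hz.2
      simp only [V, mem_ofPred_eq] at this
      linarith
    refine DifferentiableOn.smul
      (c := fun z : EuclideanSpace ℝ (Fin (m + 1)) => z 0) (by fun_prop) ?_
    rw [differentiableOn_euclidean]
    intro i
    refine Fin.cases ?_ (fun j => ?_) i
    · simpa using hd.const_mul ε
    · simpa using (hTd j).differentiableOn
  have hH : volume {z : EuclideanSpace ℝ (Fin (m + 1)) | z 0 = 0} = 0 := by
    have hq : Measure.QuasiMeasurePreserving
        (fun z : EuclideanSpace ℝ (Fin (m + 1)) => z 0) volume volume :=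
      (Measure.quasiMeasurePreserving_eval _ 0).comp
        (PiLp.volume_preserving_ofLp (Fin (m + 1))).quasiMeasurePreserving
    exact hq.preimage_null (s := {0}) (by simp)
  refine measure_mono_null ?_ (measure_union_null hH (measure_union_null (hG 1) (hG (-1))))
  rintro z ⟨a, ha, s, rfl⟩
  have hnorm : a 0 ^ 2 + ∑ i, T a i ^ 2 = 1 := by
    have h1 : ‖a‖ = 1 := by simpa using hA ha
    have h2 := EuclideanSpace.norm_sq_eq a
    rw [h1, Fin.sum_univ_succ] at h2
    simpa using h2.symm
  by_cases h0 : a 0 = 0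
  · left; simp [h0]
  have hpos : 0 < a 0 ^ 2 := by positivity
  have hsq : √(1 - ∑ i, T a i ^ 2) = |a 0| := by
    rw [← Real.sqrt_sq_eq_abs]; congr 1; linarith
  let b : EuclideanSpace ℝ (Fin (m + 1)) := WithLp.toLp 2 (Fin.cons s (T a) : Fin (m + 1) → ℝ)
  have hTb : T b = T a := by ext i; simp [T, b]
  have hbmem : b ∈ T ⁻¹' (T '' A) ∩ V := by
    refine ⟨⟨a, ha, hTb.symm⟩, ?_⟩
    simp only [V, mem_ofPred_eq, hTb]
    linarith
  have hGb : ∀ ε : ℝ, ε * |a 0| = a 0 → G ε b = s • a := by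
    intro ε hε
    simp only [G, hTb, hsq, hε]
    ext i
    refine Fin.cases ?_ (fun j => ?_) i
    · simp [b]
    · simp [b, T]
  right
  rcases lt_or_gt_of_ne h0 with h | h
  · exact Or.inr ⟨b, hbmem, hGb _ (by rw [abs_of_neg h]; ring)⟩
  · exact Or.inl ⟨b, hbmem, hGb _ (by rw [abs_of_pos h]; ring)⟩

lemma ae_rnDeriv_map_mul_eq_zero (P Q : Measure ℝ) [IsFiniteMeasure P] [IsFiniteMeasure Q]
    (h : ∀ᵐ t, P.rnDeriv volume t * Q.rnDeriv volume t = 0) {s : ℝ} (hs : s ≠ 0) :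
    ∀ᵐ t, (P.map (s * ·)).rnDeriv volume t * (Q.map (s * ·)).rnDeriv volume t = 0 := by
  have hemb : MeasurableEmbedding (s * · : ℝ → ℝ) := measurableEmbedding_mulLeft₀ hs
  have hmap : ∀ c : ℝ, c ≠ 0 →
      (volume : Measure ℝ).map (c * ·) = ENNReal.ofReal |c⁻¹| • volume :=
    fun c hc => Real.map_volume_mul_left hc
  have hq : ∀ c : ℝ, c ≠ 0 → Measure.QuasiMeasurePreserving (c * · : ℝ → ℝ) volume volume :=
    fun c hc => ⟨measurable_const_mul c, by
      rw [hmap c hc]; exact Measure.smul_absolutelyContinuous⟩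
  have hc0 : ENNReal.ofReal |s⁻¹| ≠ 0 := by simpa using hs
  have key : ∀ R : Measure ℝ, IsFiniteMeasure R →
      ∀ᵐ t, R.rnDeriv volume t = 0 → (R.map (s * ·)).rnDeriv volume (s * t) = 0 := by
    intro R _
    have h1 := hemb.rnDeriv_map R volume
    have h2 := Measure.rnDeriv_smul_right_of_ne_top (R.map (s * ·)) volume hc0
      ENNReal.ofReal_ne_top
    rw [← hmap s hs] at h2
    filter_upwards [h1, (hq s hs).ae h2] with t h1 h2 h
    rw [h1, h, Pi.smul_apply, smul_eq_mul] at h2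
    simpa using h2.symm
  have hprod : ∀ᵐ t, (P.map (s * ·)).rnDeriv volume (s * t)
      * (Q.map (s * ·)).rnDeriv volume (s * t) = 0 := by
    filter_upwards [h, key P inferInstance, key Q inferInstance] with t h hP hQ
    rcases mul_eq_zero.1 h with h | h
    · rw [hP h, zero_mul]
    · rw [hQ h, mul_zero]
  filter_upwards [(hq s⁻¹ (inv_ne_zero hs)).ae hprod] with t ht
  simpa [mul_inv_cancel_left₀ hs] using ht

section Projections

open ProbabilityTheory

variable {n : ℕ}

/-- The image of `μ` under `x ↦ ⟪x, e⟫`. -/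
noncomputable abbrev projMeasure (μ : Measure (EuclideanSpace ℝ (Fin n)))
    (e : EuclideanSpace ℝ (Fin n)) : Measure ℝ := μ.map (fun x => ⟪x, e⟫)

lemma projMeasure_closedBall (μ : Measure (EuclideanSpace ℝ (Fin n)))
    (e : EuclideanSpace ℝ (Fin n)) (t r : ℝ) :
    projMeasure μ e (closedBall t r) = μ {x | |⟪x, e⟫ - t| ≤ r} :=
  Measure.map_apply (by fun_prop) measurableSet_closedBall

lemma measurable_ballAverage_projMeasure (μ : Measure (EuclideanSpace ℝ (Fin n)))
    [IsFiniteMeasure μ] (δ : ℝ) :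
    Measurable fun p : EuclideanSpace ℝ (Fin n) × ℝ => ballAverage (projMeasure μ p.1) δ p.2 := by
  simp_rw [ballAverage, projMeasure_closedBall]
  have : MeasurableSet {q : (EuclideanSpace ℝ (Fin n) × ℝ) × EuclideanSpace ℝ (Fin n) |
      |⟪q.2, q.1.1⟫ - q.1.2| ≤ δ} := (isClosed_le (by fun_prop) (by fun_prop)).measurableSet
  exact (measurable_measure_prodMk_left this).div_const _

lemma lintegral_projMeasure_closedBall (μ ν : Measure (EuclideanSpace ℝ (Fin n)))
    [IsFiniteMeasure μ] [IsFiniteMeasure ν] (lam : Measure (EuclideanSpace ℝ (Fin n)))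
    [IsFiniteMeasure lam] (r : ℝ) :
    ∫⁻ e, (∫⁻ s, projMeasure ν e (closedBall s r) ∂(projMeasure μ e)) ∂lam
      = ∫⁻ x, ∫⁻ y, lam {e | |⟪x - y, e⟫| ≤ r} ∂ν ∂μ := by
  let S : Set (EuclideanSpace ℝ (Fin n) × EuclideanSpace ℝ (Fin n) × EuclideanSpace ℝ (Fin n)) :=
    {q | |⟪q.2.1 - q.2.2, q.1⟫| ≤ r}
  have hS : MeasurableSet S := (isClosed_le (by fun_prop) (by fun_prop)).measurableSet
  let F : EuclideanSpace ℝ (Fin n) → EuclideanSpace ℝ (Fin n) → EuclideanSpace ℝ (Fin n) → ℝ≥0∞ :=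
    fun e x y => S.indicator 1 (e, x, y)
  have hF : Measurable fun q : EuclideanSpace ℝ (Fin n) × EuclideanSpace ℝ (Fin n)
      × EuclideanSpace ℝ (Fin n) => F q.1 q.2.1 q.2.2 := measurable_one.indicator hS
  have e1 : ∀ e, ∫⁻ s, projMeasure ν e (closedBall s r) ∂(projMeasure μ e)
      = ∫⁻ x, ∫⁻ y, F e x y ∂ν ∂μ := by
    intro e
    rw [lintegral_map (measurable_measure_closedBall _ r) (by fun_prop)]
    refine lintegral_congr fun x => ?_
    rw [projMeasure_closedBall]
    have hm : MeasurableSet {y : EuclideanSpace ℝ (Fin n) | |⟪y, e⟫ - ⟪x, e⟫| ≤ r} :=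
      (isClosed_le (by fun_prop) (by fun_prop)).measurableSet
    rw [← lintegral_indicator_one hm]
    refine lintegral_congr fun y => ?_
    simp [F, S, indicator, inner_sub_left, abs_sub_comm]
  have e2 : ∀ x y, lam {e | |⟪x - y, e⟫| ≤ r} = ∫⁻ e, F e x y ∂lam := by
    intro x y
    have hm : MeasurableSet {e : EuclideanSpace ℝ (Fin n) | |⟪x - y, e⟫| ≤ r} :=
      (isClosed_le (by fun_prop) (by fun_prop)).measurableSet
    rw [← lintegral_indicator_one hm]
    rfl
  simp_rw [e1, e2]
  rw [lintegral_lintegral_swap]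
  · refine lintegral_congr fun x => lintegral_lintegral_swap ?_
    exact (hF.comp (f := fun p : EuclideanSpace ℝ (Fin n) × EuclideanSpace ℝ (Fin n) =>
      (p.1, x, p.2)) (by fun_prop)).aemeasurable
  · refine Measurable.aemeasurable ?_
    exact Measurable.lintegral_prod_right'
      (f := fun q : (EuclideanSpace ℝ (Fin n) × EuclideanSpace ℝ (Fin n))
        × EuclideanSpace ℝ (Fin n) => F q.1.1 q.1.2 q.2)
      (hF.comp (f := fun q : (EuclideanSpace ℝ (Fin n) × EuclideanSpace ℝ (Fin n))
        × EuclideanSpace ℝ (Fin n) => (q.1.1, q.1.2, q.2)) (by fun_prop))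

lemma lintegral_gaussian_ballAverage_sq_le (μ : Measure (EuclideanSpace ℝ (Fin n)))
    [IsFiniteMeasure μ] {δ : ℝ} (hδ : 0 < δ) :
    ∫⁻ e, (∫⁻ t, ballAverage (projMeasure μ e) δ t ^ 2) ∂(stdGaussian (EuclideanSpace ℝ (Fin n)))
      ≤ 2 * energyI n 1 μ := by
  have hc0 : ENNReal.ofReal (2 * δ) ≠ 0 := by simpa using hδ
  calc _ ≤ ∫⁻ e, (∫⁻ s, projMeasure μ e (closedBall s (2 * δ)) ∂(projMeasure μ e))
          * (ENNReal.ofReal (2 * δ))⁻¹ ∂(stdGaussian (EuclideanSpace ℝ (Fin n))) :=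
        lintegral_mono fun e => lintegral_ballAverage_sq_le _ hδ
    _ = (∫⁻ x, ∫⁻ y, stdGaussian (EuclideanSpace ℝ (Fin n)) {e | |⟪x - y, e⟫| ≤ 2 * δ} ∂μ ∂μ)
          * (ENNReal.ofReal (2 * δ))⁻¹ := by
        rw [lintegral_mul_const' _ _ (ENNReal.inv_ne_top.2 hc0), lintegral_projMeasure_closedBall]
    _ ≤ (∫⁻ x, ∫⁻ y, ENNReal.ofReal (2 * (2 * δ)) * (‖x - y‖₊ : ℝ≥0∞) ^ (-1 : ℝ) ∂μ ∂μ)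
          * (ENNReal.ofReal (2 * δ))⁻¹ := by
        gcongr with x y
        exact stdGaussian_strip_le _ (by positivity)
    _ = ENNReal.ofReal (2 * (2 * δ)) * energyI n 1 μ * (ENNReal.ofReal (2 * δ))⁻¹ := by
        simp_rw [lintegral_const_mul' _ _ ENNReal.ofReal_ne_top]
        rfl
    _ = 2 * energyI n 1 μ * (ENNReal.ofReal (2 * δ) * (ENNReal.ofReal (2 * δ))⁻¹) := by
        rw [ENNReal.ofReal_mul zero_le_two, ENNReal.ofReal_ofNat]; ring
    _ = _ := by rw [ENNReal.mul_inv_cancel hc0 ENNReal.ofReal_ne_top, mul_one]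

lemma exists_pos_le_lintegral_gaussian_ballAverage_mul
    (μ ν : Measure (EuclideanSpace ℝ (Fin n))) [IsFiniteMeasure μ] [IsFiniteMeasure ν]
    (hμ0 : μ ≠ 0) (hν0 : ν ≠ 0) :
    ∃ c : ℝ≥0∞, 0 < c ∧ ∀ δ : ℝ, 0 < δ → δ ≤ 1 → c ≤
      ∫⁻ e, (∫⁻ t, ballAverage (projMeasure μ e) δ t * ballAverage (projMeasure ν e) δ t)
        ∂(stdGaussian (EuclideanSpace ℝ (Fin n))) := by
  have hg := gaussianPDFReal_pos 0 1 1 one_ne_zero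
  let w : EuclideanSpace ℝ (Fin n) → EuclideanSpace ℝ (Fin n) → ℝ≥0∞ :=
    fun x y => ENNReal.ofReal (gaussianPDFReal 0 1 1 / (‖x - y‖ + 1))
  have hw : Measurable (Function.uncurry w) := by
    unfold Function.uncurry w
    fun_prop
  have hw0 : ∀ x y, w x y ≠ 0 := fun x y => by
    simp only [w, ne_eq, ENNReal.ofReal_eq_zero, not_le]
    positivity
  have hI : 0 < ∫⁻ x, ∫⁻ y, w x y ∂ν ∂μ := by
    rw [lintegral_pos_iff_support hw.lintegral_prod_right]
    have : (Function.support fun x => ∫⁻ y, w x y ∂ν) = univ := by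
      refine eq_univ_of_forall fun x => ?_
      rw [Function.mem_support, ← pos_iff_ne_zero, lintegral_pos_iff_support (by fun_prop)]
      have : Function.support (fun y => w x y) = univ := eq_univ_of_forall fun y => hw0 x y
      rw [this]
      exact Measure.measure_univ_pos.2 hν0
    rw [this]
    exact Measure.measure_univ_pos.2 hμ0
  refine ⟨8⁻¹ * ∫⁻ x, ∫⁻ y, w x y ∂ν ∂μ, ENNReal.mul_pos (by simp) hI.ne', fun δ hδ hδ1 => ?_⟩
  have hc0 : ENNReal.ofReal (4 * δ) ≠ 0 := by simpa using hδ
  have hcoef : ENNReal.ofReal (δ / 2) * (ENNReal.ofReal (4 * δ))⁻¹ = 8⁻¹ := by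
    rw [← div_eq_mul_inv, ← ENNReal.ofReal_div_of_pos (by positivity),
      show δ / 2 / (4 * δ) = 8⁻¹ by field_simp; norm_num, ENNReal.ofReal_inv_of_pos (by norm_num)]
    simp
  calc _ = (∫⁻ x, ∫⁻ y, ENNReal.ofReal (δ / 2) * w x y ∂ν ∂μ) * (ENNReal.ofReal (4 * δ))⁻¹ := by
        simp_rw [lintegral_const_mul' _ _ ENNReal.ofReal_ne_top]
        rw [← hcoef]; ring
    _ ≤ (∫⁻ x, ∫⁻ y, stdGaussian (EuclideanSpace ℝ (Fin n)) {e | |⟪x - y, e⟫| ≤ δ / 2} ∂ν ∂μ)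
          * (ENNReal.ofReal (4 * δ))⁻¹ := by
        gcongr with x y
        exact le_stdGaussian_strip _ (by positivity) (by linarith)
    _ = ∫⁻ e, (∫⁻ s, projMeasure ν e (closedBall s (δ / 2)) ∂(projMeasure μ e))
          * (ENNReal.ofReal (4 * δ))⁻¹ ∂(stdGaussian (EuclideanSpace ℝ (Fin n))) := by
        rw [lintegral_mul_const' _ _ (ENNReal.inv_ne_top.2 hc0), lintegral_projMeasure_closedBall]
    _ ≤ _ := lintegral_mono fun e => le_lintegral_ballAverage_mul _ _ hδ

lemma measurable_lintegral_rnDeriv_mul (μ ν : Measure (EuclideanSpace ℝ (Fin n)))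
    [IsFiniteMeasure μ] [IsFiniteMeasure ν] :
    Measurable fun e => ∫⁻ t, (projMeasure μ e).rnDeriv volume t
      * (projMeasure ν e).rnDeriv volume t := by
  let δ : ℕ → ℝ := fun k => 1 / ((k : ℝ) + 1)
  have hδ : ∀ k, 0 < δ k := fun k => Nat.one_div_pos_of_nat
  have hδ0 : Tendsto δ atTop (𝓝 0) := tendsto_one_div_add_atTop_nhds_zero_nat
  have h : ∀ e, ∫⁻ t, (projMeasure μ e).rnDeriv volume t * (projMeasure ν e).rnDeriv volume t
      = ∫⁻ t, liminf (fun k => ballAverage (projMeasure μ e) (δ k) t) atTop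
        * liminf (fun k => ballAverage (projMeasure ν e) (δ k) t) atTop := by
    intro e
    refine lintegral_congr_ae ?_
    filter_upwards [ae_tendsto_ballAverage (projMeasure μ e) hδ hδ0,
      ae_tendsto_ballAverage (projMeasure ν e) hδ hδ0] with t h1 h2
    rw [h1.liminf_eq, h2.liminf_eq]
  simp_rw [h]
  exact Measurable.lintegral_prod_right'
    ((Measurable.liminf fun k => measurable_ballAverage_projMeasure μ (δ k)).mul
      (Measurable.liminf fun k => measurable_ballAverage_projMeasure ν (δ k)))

lemma not_ae_gaussian_rnDeriv_mul_eq_zero (μ ν : Measure (EuclideanSpace ℝ (Fin n)))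
    [IsFiniteMeasure μ] [IsFiniteMeasure ν] (hμ0 : μ ≠ 0) (hν0 : ν ≠ 0)
    (hμe : energyI n 1 μ < ∞) (hνe : energyI n 1 ν < ∞) :
    ¬ ∀ᵐ e ∂(stdGaussian (EuclideanSpace ℝ (Fin n))),
      ∀ᵐ t, (projMeasure μ e).rnDeriv volume t * (projMeasure ν e).rnDeriv volume t = 0 := by
  intro h0
  let δ : ℕ → ℝ := fun k => 1 / ((k : ℝ) + 1)
  have hδ : ∀ k, 0 < δ k := fun k => Nat.one_div_pos_of_nat
  have hδ1 : ∀ k, δ k ≤ 1 := fun k => by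
    simp only [δ]
    exact (div_le_one (by positivity)).2 (by linarith [Nat.cast_nonneg (α := ℝ) k])
  have hδ0 : Tendsto δ atTop (𝓝 0) := tendsto_one_div_add_atTop_nhds_zero_nat
  obtain ⟨c, hc, hcle⟩ := exists_pos_le_lintegral_gaussian_ballAverage_mul μ ν hμ0 hν0
  have hsq : ∀ (ρ : Measure (EuclideanSpace ℝ (Fin n))) [IsFiniteMeasure ρ] (k : ℕ),
      Measurable fun e => ∫⁻ t, ballAverage (projMeasure ρ e) (δ k) t ^ 2 := fun ρ _ k =>
    ((measurable_ballAverage_projMeasure ρ (δ k)).pow_const 2).lintegral_prod_right'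
  have hfin : ∀ (ρ : Measure (EuclideanSpace ℝ (Fin n))) [IsFiniteMeasure ρ],
      energyI n 1 ρ < ∞ → ∀ᵐ e ∂(stdGaussian (EuclideanSpace ℝ (Fin n))),
        liminf (fun k => ∫⁻ t, ballAverage (projMeasure ρ e) (δ k) t ^ 2) atTop < ∞ := by
    intro ρ _ hρ
    refine ae_lt_top (Measurable.liminf fun k => hsq ρ k) (ne_top_of_le_ne_top ?_
      ((lintegral_liminf_le fun k => hsq ρ k).trans
        (liminf_le_of_frequently_le' (x := 2 * energyI n 1 ρ) (Frequently.of_forall fun k =>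
          lintegral_gaussian_ballAverage_sq_le ρ (hδ k)))))
    exact ENNReal.mul_ne_top (by simp) hρ.ne
  let d : ℕ → EuclideanSpace ℝ (Fin n) → ℝ≥0∞ := fun k e =>
    ∫⁻ t, sqGap (ballAverage (projMeasure μ e) (δ k) t) (ballAverage (projMeasure ν e) (δ k) t)
  let p : ℕ → EuclideanSpace ℝ (Fin n) → ℝ≥0∞ := fun k e =>
    ∫⁻ t, ballAverage (projMeasure μ e) (δ k) t * ballAverage (projMeasure ν e) (δ k) t
  have hd : ∀ k, Measurable (d k) := fun k => by
    have h1 := measurable_ballAverage_projMeasure μ (δ k)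
    have h2 := measurable_ballAverage_projMeasure ν (δ k)
    exact (((h1.sub h2).pow_const 2).add ((h2.sub h1).pow_const 2)).lintegral_prod_right'
  have hle : ∀ k, (∫⁻ e, d k e ∂(stdGaussian (EuclideanSpace ℝ (Fin n)))) + 2 * c
      ≤ liminf (fun j => ∫⁻ e, d j e ∂(stdGaussian (EuclideanSpace ℝ (Fin n)))) atTop := by
    intro k
    calc _ ≤ (∫⁻ e, d k e ∂(stdGaussian (EuclideanSpace ℝ (Fin n))))
            + 2 * ∫⁻ e, p k e ∂(stdGaussian (EuclideanSpace ℝ (Fin n))) := by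
          gcongr
          exact hcle (δ k) (hδ k) (hδ1 k)
      _ = ∫⁻ e, d k e + 2 * p k e ∂(stdGaussian (EuclideanSpace ℝ (Fin n))) := by
          rw [lintegral_add_left (hd k), lintegral_const_mul' _ _ (by simp)]
      _ ≤ ∫⁻ e, liminf (fun j => d j e) atTop ∂(stdGaussian (EuclideanSpace ℝ (Fin n))) := by
          refine lintegral_mono_ae ?_
          filter_upwards [h0, hfin μ hμe, hfin ν hνe] with e h0 h1 h2
          exact lintegral_sqGap_add_le_liminf _ _ hδ hδ0 h1 h2 h0 k
      _ ≤ _ := lintegral_liminf_le hd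
  have hbound : ∀ k, ∫⁻ e, d k e ∂(stdGaussian (EuclideanSpace ℝ (Fin n)))
      ≤ 2 * energyI n 1 μ + 2 * energyI n 1 ν := by
    intro k
    refine le_trans ?_ (add_le_add (lintegral_gaussian_ballAverage_sq_le μ (hδ k))
      (lintegral_gaussian_ballAverage_sq_le ν (hδ k)))
    rw [← lintegral_add_left (hsq μ k)]
    refine lintegral_mono fun e => ?_
    rw [← lintegral_add_left ((measurable_ballAverage _ _).pow_const 2)]
    refine lintegral_mono fun t => ?_
    exact add_le_add (pow_le_pow_left' tsub_le_self 2) (pow_le_pow_left' tsub_le_self 2)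
  set L := liminf (fun j => ∫⁻ e, d j e ∂(stdGaussian (EuclideanSpace ℝ (Fin n)))) atTop with hL
  have hLt : L ≠ ∞ := by
    refine ne_top_of_le_ne_top (b := 2 * energyI n 1 μ + 2 * energyI n 1 ν) ?_
      (liminf_le_of_frequently_le' (Frequently.of_forall hbound))
    exact ENNReal.add_ne_top.2
      ⟨ENNReal.mul_ne_top (by simp) hμe.ne, ENNReal.mul_ne_top (by simp) hνe.ne⟩
  have hLc : L ≤ L - 2 * c := by
    refine liminf_le_of_frequently_le' (Frequently.of_forall fun k => ?_)
    have h2c : 2 * c ≠ ∞ := ne_top_of_le_ne_top hLt (le_add_self.trans (hle k))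
    exact ENNReal.le_sub_of_add_le_right h2c (hle k)
  have h2c : 2 * c ≤ L := le_add_self.trans (hle 0)
  have hc2 : (0 : ℝ≥0∞) < 2 * c := ENNReal.mul_pos (by simp) hc.ne'
  exact absurd hLc (not_le.2 (ENNReal.sub_lt_self hLt (hc2.trans_le h2c).ne' hc2.ne'))

end Projections

theorem stmt_6 (n : ℕ) (hn : 2 ≤ n)
    (μ ν : Measure (EuclideanSpace ℝ (Fin n)))
    [IsFiniteMeasure μ] [IsFiniteMeasure ν] (hμ0 : μ ≠ 0) (hν0 : ν ≠ 0)
    (hμc : IsCompact (sptm n μ)) (hνc : IsCompact (sptm n ν))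
    (hμe : energyI n 1 μ < ∞) (hνe : energyI n 1 ν < ∞) :
    0 < ∫⁻ e in sphere (0 : EuclideanSpace ℝ (Fin n)) 1,
        (∫⁻ t : ℝ,
          (μ.map (fun x => ⟪x, e⟫)).rnDeriv volume t *
          (ν.map (fun x => ⟪x, e⟫)).rnDeriv volume t) ∂μH[(n : ℝ) - 1] := by
  obtain ⟨m, rfl⟩ : ∃ m, n = m + 1 := ⟨n - 1, by omega⟩
  rw [pos_iff_ne_zero]
  intro h
  rw [lintegral_eq_zero_iff (measurable_lintegral_rnDeriv_mul μ ν), Filter.EventuallyEq,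
    ae_restrict_iff' isClosed_sphere.measurableSet] at h
  let A : Set (EuclideanSpace ℝ (Fin (m + 1))) := {e | e ∈ sphere 0 1 ∧
    ¬ ∀ᵐ t, (projMeasure μ e).rnDeriv volume t * (projMeasure ν e).rnDeriv volume t = 0}
  have hA0 : μH[(m : ℝ)] A = 0 := by
    rw [show ((m + 1 : ℕ) : ℝ) - 1 = m by push_cast; ring] at h
    refine measure_mono_null ?_ (ae_iff.1 h)
    rintro e ⟨he, hne⟩ hcon
    refine hne ?_
    have := (lintegral_eq_zero_iff ((Measure.measurable_rnDeriv _ _).mul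
      (Measure.measurable_rnDeriv _ _))).1 (hcon he)
    exact this
  have hcone := volume_cone_eq_zero m A (fun e he => he.1) hA0
  refine not_ae_gaussian_rnDeriv_mul_eq_zero μ ν hμ0 hν0 hμe hνe
    ((stdGaussian_absolutelyContinuous (m + 1)).ae_le ?_)
  filter_upwards [measure_eq_zero_iff_ae_notMem.1 hcone, Measure.ae_ne volume 0] with e he he0
  have hnorm : ‖e‖ ≠ 0 := norm_ne_zero_iff.2 he0
  set u := ‖e‖⁻¹ • e with hu
  have hue : e = ‖e‖ • u := by rw [hu, smul_smul, mul_inv_cancel₀ hnorm, one_smul]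
  have hus : u ∈ sphere (0 : EuclideanSpace ℝ (Fin (m + 1))) 1 := by
    rw [mem_sphere_zero_iff_norm, hu, norm_smul, norm_inv, norm_norm, inv_mul_cancel₀ hnorm]
  have hu0 : ∀ᵐ t, (projMeasure μ u).rnDeriv volume t * (projMeasure ν u).rnDeriv volume t = 0 := by
    by_contra hcon
    exact he ⟨u, ⟨hus, hcon⟩, ‖e‖, hue⟩
  have hmap : ∀ ρ : Measure (EuclideanSpace ℝ (Fin (m + 1))),
      projMeasure ρ e = (projMeasure ρ u).map (‖e‖ * ·) := by
    intro ρ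
    rw [projMeasure, projMeasure, Measure.map_map (by fun_prop) (by fun_prop)]
    congr 1
    ext x
    conv_lhs => rw [hue]
    rw [inner_smul_right]
    rfl
  rw [hmap μ, hmap ν]
  exact ae_rnDeriv_map_mul_eq_zero _ _ hu0 hnorm
end

section
/- Let n ≥ 2 and let μ, ν be nonzero finite Borel measures on ℝⁿ with compact support such that I₁(μ) < ∞ and I₁(ν) < ∞. Then the set of unit vectors e ∈ S^{n−1} for which π_e(spt μ) ∩ π_e(spt ν) has positive one-dimensional Lebesgue measure has positive (n−1)-dimensional Hausdorff measure in S^{n−1}. -/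
open MeasureTheory Metric Set
open scoped ENNReal RealInnerProductSpace

open ProbabilityTheory Filter Topology

/-- The pairing of a standard Gaussian vector with a nonzero `z` is a centred Gaussian with standard
deviation `‖z‖`. -/
theorem stdGaussian_abs_inner_le {n : ℕ} {z : EuclideanSpace ℝ (Fin n)} (hz : z ≠ 0) (δ : ℝ) :
    stdGaussian (EuclideanSpace ℝ (Fin n)) {v | |⟪z, v⟫| ≤ δ} =
      gaussianReal 0 1 (Icc (-(δ / ‖z‖)) (δ / ‖z‖)) := by
  have hz' : 0 < ‖z‖ := norm_pos_iff.2 hz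
  set L : StrongDual ℝ (EuclideanSpace ℝ (Fin n)) := innerSL ℝ (‖z‖⁻¹ • z) with hL
  have hLn : ‖L‖ = 1 := by
    rw [hL, innerSL_apply_norm, norm_smul, norm_inv, norm_norm, inv_mul_cancel₀ hz'.ne']
  have hmap : (stdGaussian (EuclideanSpace ℝ (Fin n))).map L = gaussianReal 0 1 := by
    rw [IsGaussian.map_eq_gaussianReal, integral_strongDual_stdGaussian, variance_dual_stdGaussian,
      hLn]
    simp
  rw [← hmap, Measure.map_apply L.measurable measurableSet_Icc]
  congr 1
  ext v
  have : L v = ⟪z, v⟫ / ‖z‖ := by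
    rw [hL, innerSL_apply_apply, real_inner_smul_left]; field_simp
  rw [mem_preimage, mem_Icc, ← abs_le, this, abs_div, abs_norm, div_le_div_iff_of_pos_right hz']
  rfl

theorem gaussianReal_Icc_le (a : ℝ) :
    gaussianReal 0 1 (Icc (-a) a) ≤ ENNReal.ofReal (2 * a) := by
  rw [gaussianReal_apply _ one_ne_zero]
  calc ∫⁻ x in Icc (-a) a, gaussianPDF 0 1 x ≤ ∫⁻ x in Icc (-a) a, 1 := by
        refine lintegral_mono fun x => ?_
        rw [gaussianPDF, ← ENNReal.ofReal_one]
        refine ENNReal.ofReal_le_ofReal ?_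
        rw [gaussianPDFReal]
        refine mul_le_one₀ (inv_le_one_of_one_le₀ ?_) (Real.exp_nonneg _) ?_
        · rw [Real.one_le_sqrt]
          simp only [NNReal.coe_one, mul_one]
          linarith [Real.pi_gt_three]
        · rw [Real.exp_le_one_iff]
          simp only [NNReal.coe_one]
          have := sq_nonneg (x - 0)
          linarith
    _ = ENNReal.ofReal (2 * a) := by
        simp only [lintegral_const, Measure.restrict_apply_univ, one_mul, Real.volume_Icc]
        congr 1; ring

theorem le_gaussianReal_Icc {a : ℝ} (ha : a ≤ 1) :
    gaussianPDF 0 1 1 * ENNReal.ofReal (2 * a) ≤ gaussianReal 0 1 (Icc (-a) a) := by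
  rw [gaussianReal_apply _ one_ne_zero]
  calc gaussianPDF 0 1 1 * ENNReal.ofReal (2 * a)
      = ∫⁻ x in Icc (-a) a, gaussianPDF 0 1 1 := by
        simp only [lintegral_const, Measure.restrict_apply_univ, Real.volume_Icc]
        congr 2; ring
    _ ≤ _ := by
        refine setLIntegral_mono' measurableSet_Icc fun x hx => ?_
        rw [gaussianPDF, gaussianPDF]
        refine ENNReal.ofReal_le_ofReal ?_
        rw [gaussianPDFReal, gaussianPDFReal]
        refine mul_le_mul_of_nonneg_left (Real.exp_le_exp.2 ?_) (by positivity)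
        have : x ^ 2 ≤ 1 := by
          rw [sq_le_one_iff_abs_le_one, abs_le]
          constructor <;> linarith [hx.1, hx.2]
        simp only [sub_zero, NNReal.coe_one]
        linarith

/-- The Gaussian measure of a slab of width `δ` normal to `z` is at most `2δ / ‖z‖`. -/
theorem stdGaussian_abs_inner_le_le {n : ℕ} (z : EuclideanSpace ℝ (Fin n)) {δ : ℝ} (hδ : 0 < δ) :
    stdGaussian (EuclideanSpace ℝ (Fin n)) {v | |⟪z, v⟫| ≤ δ} ≤
      ENNReal.ofReal δ * (2 * (‖z‖₊ : ℝ≥0∞) ^ (-1 : ℝ)) := by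
  rcases eq_or_ne z 0 with rfl | hz
  · simp [hδ]
  · rw [stdGaussian_abs_inner_le hz]
    refine (gaussianReal_Icc_le _).trans_eq ?_
    have hz' : 0 < ‖z‖ := norm_pos_iff.2 hz
    rw [ENNReal.rpow_neg_one, ← enorm_eq_nnnorm, ← ofReal_norm, ← ENNReal.ofReal_inv_of_pos hz',
      div_eq_mul_inv, ENNReal.ofReal_mul zero_le_two, ENNReal.ofReal_mul hδ.le,
      ENNReal.ofReal_ofNat]
    ring

/-- The Gaussian measure of a slab of width `δ` normal to a bounded vector is at least of
order `δ`. -/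
theorem le_stdGaussian_abs_inner_le {n : ℕ} {R : ℝ} (hR : 1 ≤ R) {z : EuclideanSpace ℝ (Fin n)}
    (hz : ‖z‖ ≤ R) {δ : ℝ} (hδ : 0 < δ) (hδ1 : δ ≤ 1) :
    ENNReal.ofReal δ * (gaussianPDF 0 1 1 * ENNReal.ofReal (2 / R)) ≤
      stdGaussian (EuclideanSpace ℝ (Fin n)) {v | |⟪z, v⟫| ≤ δ} := by
  have hR0 : 0 < R := by linarith
  have key : ENNReal.ofReal δ * (gaussianPDF 0 1 1 * ENNReal.ofReal (2 / R)) ≤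
      gaussianReal 0 1 (Icc (-(δ / R)) (δ / R)) := by
    refine le_trans (le_of_eq ?_) (le_gaussianReal_Icc ((div_le_one hR0).2 (hδ1.trans hR)))
    rw [mul_left_comm, ← ENNReal.ofReal_mul hδ.le]
    congr 2
    ring
  refine key.trans ?_
  rcases eq_or_ne z 0 with rfl | hz0
  · have : {v : EuclideanSpace ℝ (Fin n) | |⟪(0 : EuclideanSpace ℝ (Fin n)), v⟫| ≤ δ} = univ := by
      ext v; simp [hδ.le]
    rw [this, measure_univ]
    exact prob_le_one
  · rw [stdGaussian_abs_inner_le hz0]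
    have hz' : 0 < ‖z‖ := norm_pos_iff.2 hz0
    have : δ / R ≤ δ / ‖z‖ := by gcongr
    exact measure_mono (Icc_subset_Icc (neg_le_neg this) this)

theorem measurableSet_abs_sub_le (δ : ℝ) : MeasurableSet {p : ℝ × ℝ | |p.1 - p.2| ≤ δ} :=
  measurableSet_le (by fun_prop) measurable_const

theorem prodMk_preimage_abs_sub_le (δ s : ℝ) :
    Prod.mk s ⁻¹' {p : ℝ × ℝ | |p.1 - p.2| ≤ δ} = closedBall s δ := by
  ext t
  simp [Real.dist_eq, abs_sub_comm]

/-- A finite measure on the line whose averages `δ⁻¹ m(B(t, δ))` have bounded `m`-integral along a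
sequence `δ → 0` is absolutely continuous with square-integrable density. -/
theorem absolutelyContinuous_and_lintegral_rnDeriv_sq_le (m : Measure ℝ) [IsFiniteMeasure m]
    {δ : ℕ → ℝ} (hδ : ∀ k, 0 < δ k) (hδ0 : Tendsto δ atTop (𝓝 0))
    (h : liminf (fun k => (ENNReal.ofReal (δ k))⁻¹ * (m.prod m) {p | |p.1 - p.2| ≤ δ k}) atTop < ∞) :
    m ≪ volume ∧ ∫⁻ t, (m.rnDeriv volume t) ^ 2 ≤
      liminf (fun k => (ENNReal.ofReal (δ k))⁻¹ * (m.prod m) {p | |p.1 - p.2| ≤ δ k}) atTop := by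
  set w := (volume : Measure ℝ).rnDeriv m
  have hwm : Measurable w := Measure.measurable_rnDeriv _ _
  have hlim : ∀ᵐ t ∂m, (w t)⁻¹ ≤
      liminf (fun k => (ENNReal.ofReal (δ k))⁻¹ * m (closedBall t (δ k))) atTop := by
    filter_upwards [Besicovitch.ae_tendsto_rnDeriv (volume : Measure ℝ) m] with t ht
    have h1 : Tendsto (fun k => (volume (closedBall t (δ k)) / m (closedBall t (δ k)))⁻¹) atTop
        (𝓝 (w t)⁻¹) :=
      tendsto_inv_iff.2 (ht.comp (tendsto_nhdsWithin_iff.2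
        ⟨hδ0, Eventually.of_forall hδ⟩))
    rw [← h1.liminf_eq]
    refine liminf_le_liminf (Eventually.of_forall fun k => ?_)
    have hpos : volume (closedBall t (δ k)) ≠ 0 := by simp [Real.volume_closedBall, hδ k]
    have htop : volume (closedBall t (δ k)) ≠ ∞ := measure_closedBall_lt_top.ne
    rw [ENNReal.inv_div (Or.inr htop) (Or.inr hpos), div_eq_mul_inv, mul_comm]
    refine mul_le_mul' (ENNReal.inv_le_inv.2 ?_) le_rfl
    rw [Real.volume_closedBall]
    exact ENNReal.ofReal_le_ofReal (by linarith [hδ k])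
  have hint : ∫⁻ t, (w t)⁻¹ ∂m ≤
      liminf (fun k => (ENNReal.ofReal (δ k))⁻¹ * (m.prod m) {p | |p.1 - p.2| ≤ δ k}) atTop := by
    refine (lintegral_mono_ae hlim).trans ?_
    have hmeas : ∀ k, Measurable fun t => m (closedBall t (δ k)) := fun k => by
      simpa only [prodMk_preimage_abs_sub_le] using
        measurable_measure_prodMk_left (ν := m) (measurableSet_abs_sub_le (δ k))
    refine (lintegral_liminf_le fun k => (hmeas k).const_mul _).trans_eq ?_
    congr 1
    ext k
    rw [lintegral_const_mul _ (hmeas k), Measure.prod_apply (measurableSet_abs_sub_le (δ k))]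
    simp only [prodMk_preimage_abs_sub_le]
  have hac : m ≪ volume := by
    refine Measure.AbsolutelyContinuous.mk fun s hs hs0 => ?_
    have h0 : m.withDensity w s = 0 :=
      le_antisymm ((Measure.withDensity_rnDeriv_le volume m s).trans_eq hs0) bot_le
    rw [withDensity_apply_eq_zero hwm] at h0
    have hne : ∀ᵐ t ∂m, w t ≠ 0 := by
      filter_upwards [ae_lt_top hwm.inv (hint.trans_lt h).ne] with t ht
      exact (ENNReal.inv_lt_top.1 ht).ne'
    refine measure_mono_null_ae ?_ h0
    filter_upwards [hne] with t ht hts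
    exact ⟨ht, hts⟩
  refine ⟨hac, le_trans (le_of_eq ?_) hint⟩
  simp only [sq]
  rw [lintegral_rnDeriv_mul hac (Measure.measurable_rnDeriv _ _).aemeasurable]
  exact lintegral_congr_ae (Measure.inv_rnDeriv' hac).symm

theorem prod_volume_abs_sub_le (ρ : Measure ℝ) [SFinite ρ] (δ : ℝ) :
    (ρ.prod volume) {p : ℝ × ℝ | |p.1 - p.2| ≤ δ} = ENNReal.ofReal (2 * δ) * ρ univ := by
  rw [Measure.prod_apply (measurableSet_abs_sub_le δ)]
  simp only [prodMk_preimage_abs_sub_le, Real.volume_closedBall, lintegral_const]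

theorem volume_prod_abs_sub_le (ρ : Measure ℝ) [SFinite ρ] (δ : ℝ) :
    (volume.prod ρ) {p : ℝ × ℝ | |p.1 - p.2| ≤ δ} = ENNReal.ofReal (2 * δ) * ρ univ := by
  have : ∀ s : ℝ, (fun t : ℝ => (t, s)) ⁻¹' {p : ℝ × ℝ | |p.1 - p.2| ≤ δ} = closedBall s δ := by
    intro s; ext t; simp [Real.dist_eq]
  rw [Measure.prod_apply_symm (measurableSet_abs_sub_le δ)]
  simp only [this, Real.volume_closedBall, lintegral_const]

/-- The mass that a product of two measures with densities `f`, `g` gives to a neighbourhood of the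
diagonal is controlled by the squares of `f`, `g` near the common part of their carriers. -/
theorem withDensity_prod_abs_sub_le {f g : ℝ → ℝ≥0∞} (hf : Measurable f) (hg : Measurable g)
    [SFinite (volume.withDensity f)] [SFinite (volume.withDensity g)]
    {A B : Set ℝ} (hA : volume.withDensity f Aᶜ = 0) (hB : volume.withDensity g Bᶜ = 0)
    {δ : ℝ} :
    ((volume.withDensity f).prod (volume.withDensity g)) {p | |p.1 - p.2| ≤ δ} ≤
      ENNReal.ofReal (2 * δ) * ((∫⁻ t in cthickening δ A ∩ cthickening δ B, f t ^ 2) +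
        ∫⁻ t in cthickening δ A ∩ cthickening δ B, g t ^ 2) := by
  set K := cthickening δ A ∩ cthickening δ B
  have hKm : MeasurableSet K := (isClosed_cthickening.inter isClosed_cthickening).measurableSet
  set D : Set (ℝ × ℝ) := {p | |p.1 - p.2| ≤ δ}
  have hDm : MeasurableSet D := measurableSet_abs_sub_le δ
  set F : ℝ → ℝ≥0∞ := K.indicator fun t => f t ^ 2
  set G : ℝ → ℝ≥0∞ := K.indicator fun t => g t ^ 2
  have hFm : Measurable F := (hf.pow_const 2).indicator hKm
  have hGm : Measurable G := (hg.pow_const 2).indicator hKm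
  have hnull : ∀ᵐ p ∂((volume.withDensity f).prod (volume.withDensity g)), p.1 ∈ A ∧ p.2 ∈ B :=
    (Measure.quasiMeasurePreserving_fst.ae (mem_ae_iff.2 hA)).and
      (Measure.quasiMeasurePreserving_snd.ae (mem_ae_iff.2 hB))
  calc ((volume.withDensity f).prod (volume.withDensity g)) D
      ≤ ((volume.withDensity f).prod (volume.withDensity g)) (D ∩ K ×ˢ K) := by
        refine measure_mono_ae ?_
        filter_upwards [hnull] with p hp hpD
        have hpD' : dist p.1 p.2 ≤ δ := hpD
        have hδ : 0 ≤ δ := dist_nonneg.trans hpD'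
        refine ⟨hpD, ⟨self_subset_cthickening _ hp.1, ?_⟩, ?_, self_subset_cthickening _ hp.2⟩
        · exact mem_cthickening_of_dist_le _ _ _ _ hp.2 hpD'
        · exact mem_cthickening_of_dist_le _ _ _ _ hp.1 (by rwa [dist_comm])
    _ = ∫⁻ p in D ∩ K ×ˢ K, f p.1 * g p.2 ∂(volume.prod volume) := by
        rw [prod_withDensity hf hg, withDensity_apply _ (hDm.inter (hKm.prod hKm))]
    _ ≤ ∫⁻ p in D ∩ K ×ˢ K, (F p.1 + G p.2) ∂(volume.prod volume) := by
        refine setLIntegral_mono' (hDm.inter (hKm.prod hKm)) fun p hp => ?_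
        have h1 : F p.1 = f p.1 ^ 2 := indicator_of_mem hp.2.1 _
        have h2 : G p.2 = g p.2 ^ 2 := indicator_of_mem hp.2.2 _
        rw [h1, h2, sq, sq]
        rcases le_total (f p.1) (g p.2) with hle | hle
        · exact (mul_le_mul' hle le_rfl).trans le_add_self
        · exact (mul_le_mul' le_rfl hle).trans le_self_add
    _ ≤ ∫⁻ p in D, (F p.1 + G p.2) ∂(volume.prod volume) :=
        lintegral_mono_set inter_subset_left
    _ = ∫⁻ p in D, F p.1 ∂(volume.prod volume) + ∫⁻ p in D, G p.2 ∂(volume.prod volume) :=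
        lintegral_add_left (hFm.comp measurable_fst) _
    _ = _ := by
        rw [← withDensity_apply _ hDm, ← withDensity_apply _ hDm, ← prod_withDensity_left hFm,
          ← prod_withDensity_right hGm, prod_volume_abs_sub_le, volume_prod_abs_sub_le, mul_add,
          withDensity_apply _ .univ, withDensity_apply _ .univ, setLIntegral_univ,
          setLIntegral_univ, lintegral_indicator hKm, lintegral_indicator hKm]

/-- The mass near two compact sets of a finite measure vanishing on their intersection tends to
zero. -/
theorem tendsto_measure_cthickening_inter_cthickening (ρ : Measure ℝ) [IsFiniteMeasure ρ]
    {A B : Set ℝ} (hA : IsCompact A) (hB : IsCompact B) (h0 : ρ (A ∩ B) = 0)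
    {δ : ℕ → ℝ} (hδ0 : Tendsto δ atTop (𝓝 0)) (hanti : Antitone δ) :
    Tendsto (fun k => ρ (cthickening (δ k) A ∩ cthickening (δ k) B)) atTop (𝓝 0) := by
  have hInter : ∀ C : Set ℝ, IsCompact C → ⋂ k, cthickening (δ k) C = C := fun C hC => by
    refine subset_antisymm (fun x hx => ?_)
      (subset_iInter fun k => self_subset_cthickening _)
    rw [← hC.isClosed.closure_eq, closure_eq_iInter_cthickening]
    simp only [mem_iInter] at hx ⊢
    intro ε hε
    obtain ⟨k, hk⟩ := (hδ0.eventually (gt_mem_nhds hε)).exists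
    exact cthickening_mono hk.le _ (hx k)
  have := tendsto_measure_iInter_atTop (μ := ρ)
    (s := fun k => cthickening (δ k) A ∩ cthickening (δ k) B)
    (fun k => (isClosed_cthickening.inter isClosed_cthickening).measurableSet.nullMeasurableSet)
    (fun i j hij => inter_subset_inter (cthickening_mono (hanti hij) _)
      (cthickening_mono (hanti hij) _)) ⟨0, measure_ne_top _ _⟩
  rwa [iInter_inter_distrib, hInter A hA, hInter B hB, h0] at this

/-- Quantitative bound, and vanishing as `δ → 0` when the carriers have null intersection, for the
normalized mass near the diagonal of a product of two measures on the line with finite energy. -/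
theorem prod_abs_sub_le_bound_and_tendsto (m₁ m₂ : Measure ℝ) [IsFiniteMeasure m₁]
    [IsFiniteMeasure m₂] {δ : ℕ → ℝ} (hδ : ∀ k, 0 < δ k) (hδ0 : Tendsto δ atTop (𝓝 0))
    (hanti : Antitone δ) {c₁ c₂ : ℝ≥0∞}
    (hc₁ : c₁ = liminf
      (fun k => (ENNReal.ofReal (δ k))⁻¹ * (m₁.prod m₁) {p | |p.1 - p.2| ≤ δ k}) atTop)
    (hc₂ : c₂ = liminf
      (fun k => (ENNReal.ofReal (δ k))⁻¹ * (m₂.prod m₂) {p | |p.1 - p.2| ≤ δ k}) atTop)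
    (h₁ : c₁ < ∞) (h₂ : c₂ < ∞) {A B : Set ℝ} (hA : IsCompact A) (hB : IsCompact B)
    (hmA : m₁ Aᶜ = 0) (hmB : m₂ Bᶜ = 0) (hAB : volume (A ∩ B) = 0) :
    (∀ k, (ENNReal.ofReal (δ k))⁻¹ * (m₁.prod m₂) {p | |p.1 - p.2| ≤ δ k} ≤ 2 * (c₁ + c₂)) ∧
      Tendsto (fun k => (ENNReal.ofReal (δ k))⁻¹ * (m₁.prod m₂) {p | |p.1 - p.2| ≤ δ k})
        atTop (𝓝 0) := by
  obtain ⟨hac₁, hf⟩ := absolutelyContinuous_and_lintegral_rnDeriv_sq_le m₁ hδ hδ0 (hc₁ ▸ h₁)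
  obtain ⟨hac₂, hg⟩ := absolutelyContinuous_and_lintegral_rnDeriv_sq_le m₂ hδ hδ0 (hc₂ ▸ h₂)
  rw [← hc₁] at hf
  rw [← hc₂] at hg
  set f := m₁.rnDeriv volume
  set g := m₂.rnDeriv volume
  have hfm : Measurable f := Measure.measurable_rnDeriv _ _
  have hgm : Measurable g := Measure.measurable_rnDeriv _ _
  have e₁ : volume.withDensity f = m₁ := Measure.withDensity_rnDeriv_eq _ _ hac₁
  have e₂ : volume.withDensity g = m₂ := Measure.withDensity_rnDeriv_eq _ _ hac₂
  have : SFinite (volume.withDensity f) := e₁ ▸ inferInstance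
  have : SFinite (volume.withDensity g) := e₂ ▸ inferInstance
  have hbound : ∀ k, (ENNReal.ofReal (δ k))⁻¹ * (m₁.prod m₂) {p | |p.1 - p.2| ≤ δ k} ≤
      2 * ((∫⁻ t in cthickening (δ k) A ∩ cthickening (δ k) B, f t ^ 2) +
        ∫⁻ t in cthickening (δ k) A ∩ cthickening (δ k) B, g t ^ 2) := by
    intro k
    have key := withDensity_prod_abs_sub_le hfm hgm (A := A) (B := B) (by rwa [e₁])
      (by rwa [e₂]) (δ := δ k)
    rw [e₁, e₂] at key
    refine (mul_le_mul' le_rfl key).trans_eq ?_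
    rw [ENNReal.ofReal_mul zero_le_two, ENNReal.ofReal_ofNat, ← mul_assoc, mul_left_comm,
      ENNReal.inv_mul_cancel (by simp [hδ k]) ENNReal.ofReal_ne_top, mul_one]
  have hzero : ∀ {h : ℝ → ℝ≥0∞} {c : ℝ≥0∞}, ∫⁻ t, h t ^ 2 ≤ c → c < ∞ →
      Tendsto (fun k => ∫⁻ t in cthickening (δ k) A ∩ cthickening (δ k) B, h t ^ 2) atTop
        (𝓝 0) := by
    intro h c hc hct
    have : IsFiniteMeasure (volume.withDensity fun t => h t ^ 2) :=
      isFiniteMeasure_withDensity (hc.trans_lt hct).ne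
    refine (tendsto_measure_cthickening_inter_cthickening (volume.withDensity fun t => h t ^ 2)
      hA hB (withDensity_absolutelyContinuous _ _ hAB) hδ0 hanti).congr fun k => ?_
    exact withDensity_apply _ (isClosed_cthickening.inter isClosed_cthickening).measurableSet
  refine ⟨fun k => (hbound k).trans ?_, ?_⟩
  · gcongr
    · exact (setLIntegral_le_lintegral _ _).trans hf
    · exact (setLIntegral_le_lintegral _ _).trans hg
  · have hlim := ENNReal.Tendsto.const_mul (a := 2) ((hzero hf h₁).add (hzero hg h₂))
      (Or.inr ENNReal.ofNat_ne_top)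
    simp only [add_zero, mul_zero] at hlim
    exact tendsto_of_tendsto_of_tendsto_of_le_of_le tendsto_const_nhds hlim
      (fun _ => bot_le) hbound

theorem pi_const_absolutelyContinuous {μ ν : Measure ℝ} [SigmaFinite μ] [SigmaFinite ν]
    (h : μ ≪ ν) (n : ℕ) :
    Measure.pi (fun _ : Fin n => μ) ≪ Measure.pi (fun _ : Fin n => ν) := by
  induction n with
  | zero => rw [Measure.pi_of_empty, Measure.pi_of_empty]
  | succ n ih =>
    have e₁ := (measurePreserving_piFinSuccAbove (fun _ : Fin (n + 1) => μ) 0).symm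
    have e₂ := (measurePreserving_piFinSuccAbove (fun _ : Fin (n + 1) => ν) 0).symm
    rw [← e₁.map_eq, ← e₂.map_eq]
    exact (h.prod ih).map (MeasurableEquiv.measurable _)

/-- The gnomonic projection `e ↦ (e₁ / e₀, …, eₘ / e₀)` is Lipschitz on the part of the unit sphere
where `e₀` is bounded away from zero. -/
theorem lipschitzOnWith_gnomonic (m : ℕ) {η : ℝ} (hη : 0 < η) :
    ∃ C, LipschitzOnWith C
      (fun (e : EuclideanSpace ℝ (Fin (m + 1))) (j : Fin m) => (e 0)⁻¹ * e j.succ)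
      {e | ‖e‖ = 1 ∧ η ≤ |e 0|} := by
  refine ⟨(η⁻¹ * η⁻¹ + η⁻¹).toNNReal, LipschitzOnWith.of_dist_le_mul fun x hx y hy => ?_⟩
  rw [Real.coe_toNNReal _ (by positivity)]
  refine (dist_pi_le_iff (by positivity)).2 fun j => ?_
  have hcoord : ∀ i, |x i - y i| ≤ dist x y := fun i => by
    simpa [dist_eq_norm] using PiLp.norm_apply_le (x - y) i
  have hx0 : x 0 ≠ 0 := fun h => by have := hx.2; simp only [h, abs_zero] at this; linarith
  have hy0 : y 0 ≠ 0 := fun h => by have := hy.2; simp only [h, abs_zero] at this; linarith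
  have hxj : |x j.succ| ≤ 1 := by simpa [hx.1] using PiLp.norm_apply_le x j.succ
  have hxi : |(x 0)⁻¹| ≤ η⁻¹ := by rw [abs_inv]; exact inv_anti₀ hη hx.2
  have hyi : |(y 0)⁻¹| ≤ η⁻¹ := by rw [abs_inv]; exact inv_anti₀ hη hy.2
  have hsplit : (x 0)⁻¹ * x j.succ - (y 0)⁻¹ * y j.succ =
      (x 0)⁻¹ * (y 0)⁻¹ * (-(x 0 - y 0)) * x j.succ + (y 0)⁻¹ * (x j.succ - y j.succ) := by
    field_simp
    ring
  rw [Real.dist_eq, hsplit]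
  refine (abs_add_le _ _).trans ?_
  rw [abs_mul, abs_mul, abs_mul, abs_mul, abs_neg, add_mul]
  have hη' : 0 ≤ η⁻¹ := by positivity
  have hd : 0 ≤ dist x y := dist_nonneg
  refine add_le_add ?_ (mul_le_mul hyi (hcoord _) (abs_nonneg _) hη')
  calc |(x 0)⁻¹| * |(y 0)⁻¹| * |x 0 - y 0| * |x j.succ|
      ≤ η⁻¹ * η⁻¹ * dist x y * 1 := by
        gcongr
        exact hcoord 0
    _ = _ := mul_one _

/-- The cone over an `ℋ^m`-null subset of the unit sphere of `ℝ^{m+1}` is a Gaussian null set. -/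
theorem ae_stdGaussian_normalize_notMem {m : ℕ} {S : Set (EuclideanSpace ℝ (Fin (m + 1)))}
    (hS1 : ∀ e ∈ S, ‖e‖ = 1) (hS : μH[(m : ℝ)] S = 0) :
    ∀ᵐ v ∂(stdGaussian (EuclideanSpace ℝ (Fin (m + 1)))), ‖v‖⁻¹ • v ∉ S := by
  set p : EuclideanSpace ℝ (Fin (m + 1)) → Fin m → ℝ := fun e j => (e 0)⁻¹ * e j.succ
  have hP : volume (p '' (S ∩ {e | e 0 ≠ 0})) = 0 := by
    have hsub : p '' (S ∩ {e | e 0 ≠ 0}) ⊆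
        ⋃ k : ℕ, p '' (S ∩ {e | 1 / ((k : ℝ) + 1) ≤ |e 0|}) := by
      rintro _ ⟨e, ⟨heS, he0⟩, rfl⟩
      obtain ⟨k, hk⟩ := exists_nat_one_div_lt (abs_pos.2 he0)
      exact mem_iUnion.2 ⟨k, e, ⟨heS, hk.le⟩, rfl⟩
    refine measure_mono_null hsub (measure_iUnion_null fun k => ?_)
    obtain ⟨C, hC⟩ := lipschitzOnWith_gnomonic m (η := 1 / ((k : ℝ) + 1)) (by positivity)
    have hle := (hC.mono (s := S ∩ {e | 1 / ((k : ℝ) + 1) ≤ |e 0|})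
      fun e he => ⟨hS1 e he.1, he.2⟩).hausdorffMeasure_image_le (Nat.cast_nonneg' m)
    rw [measure_mono_null inter_subset_left hS, mul_zero] at hle
    rw [← hausdorffMeasure_pi_real, Fintype.card_fin]
    exact le_antisymm hle bot_le
  have hprod : ∀ᵐ q : ℝ × (Fin m → ℝ) ∂(volume.prod volume),
      q.1 ≠ 0 ∧ q.1⁻¹ • q.2 ∉ toMeasurable volume (p '' (S ∩ {e | e 0 ≠ 0})) := by
    have hmeas : MeasurableSet {q : ℝ × (Fin m → ℝ) | q.1 ≠ 0 ∧
        q.1⁻¹ • q.2 ∉ toMeasurable volume (p '' (S ∩ {e | e 0 ≠ 0}))} := by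
      refine MeasurableSet.inter (measurable_fst (measurableSet_singleton (0 : ℝ)).compl) ?_
      have hsm : Measurable fun q : ℝ × (Fin m → ℝ) => q.1⁻¹ • q.2 := by fun_prop
      exact hsm (measurableSet_toMeasurable _ _).compl
    rw [Measure.ae_prod_iff_ae_ae hmeas]
    filter_upwards [compl_mem_ae_iff.2 (measure_singleton (μ := volume) (0 : ℝ))] with c hc
    have hc0 : c ≠ 0 := hc
    have hnull := Measure.addHaar_preimage_smul (volume : Measure (Fin m → ℝ)) (inv_ne_zero hc0)
      (toMeasurable volume (p '' (S ∩ {e | e 0 ≠ 0})))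
    rw [measure_toMeasurable, hP, mul_zero] at hnull
    filter_upwards [compl_mem_ae_iff.2 hnull] with w hw using ⟨hc0, hw⟩
  have hpi : ∀ᵐ x ∂(Measure.pi fun _ : Fin (m + 1) => gaussianReal 0 1),
      x 0 ≠ 0 ∧ (x 0)⁻¹ • (fun j : Fin m => x j.succ) ∉
        toMeasurable volume (p '' (S ∩ {e | e 0 ≠ 0})) := by
    have hac := pi_const_absolutelyContinuous
      (gaussianReal_absolutelyContinuous 0 (one_ne_zero (α := NNReal))) (m + 1)
    exact hac.ae_le ((volume_preserving_piFinSuccAbove (fun _ : Fin (m + 1) => ℝ)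
      0).quasiMeasurePreserving.ae hprod)
  rw [← map_pi_eq_stdGaussian]
  change ∀ᵐ v ∂(Measure.map (MeasurableEquiv.toLp 2 (Fin (m + 1) → ℝ)) _), _
  rw [(MeasurableEquiv.measurableEmbedding _).ae_map_iff]
  filter_upwards [hpi] with x hx hxS
  set v : EuclideanSpace ℝ (Fin (m + 1)) := MeasurableEquiv.toLp 2 (Fin (m + 1) → ℝ) x
  have hv0 : v 0 ≠ 0 := hx.1
  have hvn : ‖v‖⁻¹ ≠ 0 := inv_ne_zero (norm_ne_zero_iff.2 fun h => hv0 (by rw [h]; rfl))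
  refine hx.2 (subset_toMeasurable _ _ ⟨_, ⟨hxS, ?_⟩, ?_⟩)
  · exact mul_ne_zero hvn hv0
  · ext j
    change (‖v‖⁻¹ * v 0)⁻¹ * (‖v‖⁻¹ * v j.succ) = (v 0)⁻¹ * v j.succ
    rw [mul_inv, mul_mul_mul_comm, inv_mul_cancel₀ hvn, one_mul]

theorem measure_compl_sptm (n : ℕ) (μ : Measure (EuclideanSpace ℝ (Fin n))) :
    μ (sptm n μ)ᶜ = 0 := by
  refine measure_null_of_locally_null _ fun x hx => ?_
  simp only [sptm, mem_compl_iff, mem_ofPred_eq, not_forall, not_lt, nonpos_iff_eq_zero] at hx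
  obtain ⟨r, hr, h0⟩ := hx
  exact ⟨ball x r, mem_nhdsWithin_of_mem_nhds (ball_mem_nhds x hr), h0⟩

theorem measurableSet_abs_inner_sub_le (n : ℕ) (δ : ℝ) :
    MeasurableSet {q : EuclideanSpace ℝ (Fin n) × EuclideanSpace ℝ (Fin n) ×
      EuclideanSpace ℝ (Fin n) | |⟪q.2.1 - q.2.2, q.1⟫| ≤ δ} :=
  measurableSet_le (Continuous.measurable (by fun_prop)) measurable_const

/-- `δ⁻¹ (μ × ν){(x, y) : |⟨x - y, v⟩| ≤ δ}`, the normalized mass near the diagonal of the product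
of the projections of `μ` and `ν` in the direction `v`. -/
noncomputable def slabRatio {n : ℕ} (μ ν : Measure (EuclideanSpace ℝ (Fin n))) (δ : ℝ)
    (v : EuclideanSpace ℝ (Fin n)) : ℝ≥0∞ :=
  (ENNReal.ofReal δ)⁻¹ * (μ.prod ν) {p | |⟪p.1 - p.2, v⟫| ≤ δ}

section slabRatio

variable {n : ℕ} (μ ν : Measure (EuclideanSpace ℝ (Fin n))) [IsFiniteMeasure μ] [IsFiniteMeasure ν]

theorem measurable_slabRatio (δ : ℝ) : Measurable (slabRatio μ ν δ) :=
  (measurable_measure_prodMk_left (ν := μ.prod ν)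
    (measurableSet_abs_inner_sub_le n δ)).const_mul _

theorem lintegral_slabRatio (δ : ℝ) (γ : Measure (EuclideanSpace ℝ (Fin n))) [SFinite γ] :
    ∫⁻ v, slabRatio μ ν δ v ∂γ =
      (ENNReal.ofReal δ)⁻¹ * ∫⁻ p, γ {v | |⟪p.1 - p.2, v⟫| ≤ δ} ∂(μ.prod ν) := by
  have hW := measurableSet_abs_inner_sub_le n δ
  simp only [slabRatio]
  refine (lintegral_const_mul _ (measurable_measure_prodMk_left (ν := μ.prod ν) hW)).trans ?_
  congr 1
  exact (Measure.prod_apply hW).symm.trans (Measure.prod_apply_symm hW)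

theorem map_prod_map_abs_sub_le (δ : ℝ) (v : EuclideanSpace ℝ (Fin n)) :
    (ENNReal.ofReal δ)⁻¹ * ((μ.map fun x => ⟪x, v⟫).prod (ν.map fun x => ⟪x, v⟫))
      {p | |p.1 - p.2| ≤ δ} = slabRatio μ ν δ v := by
  have hm : Measurable fun x : EuclideanSpace ℝ (Fin n) => ⟪x, v⟫ :=
    Continuous.measurable (by fun_prop)
  rw [Measure.map_prod_map _ _ hm hm, Measure.map_apply (hm.prodMap hm)
    (measurableSet_abs_sub_le δ), slabRatio]
  simp only [preimage_ofPred_eq, Prod.map_fst, Prod.map_snd, inner_sub_left]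

/-- The Gaussian average of the self-`slabRatio` of a measure is controlled by its `1`-energy. -/
theorem lintegral_slabRatio_le_energyI {δ : ℝ} (hδ : 0 < δ) :
    ∫⁻ v, slabRatio μ μ δ v ∂(stdGaussian (EuclideanSpace ℝ (Fin n))) ≤ 2 * energyI n 1 μ := by
  have hm : Measurable fun p : EuclideanSpace ℝ (Fin n) × EuclideanSpace ℝ (Fin n) =>
      (‖p.1 - p.2‖₊ : ℝ≥0∞) ^ (-1 : ℝ) := by fun_prop
  rw [lintegral_slabRatio]
  calc _ ≤ (ENNReal.ofReal δ)⁻¹ * ∫⁻ p : EuclideanSpace ℝ (Fin n) × EuclideanSpace ℝ (Fin n),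
        ENNReal.ofReal δ * (2 * (‖p.1 - p.2‖₊ : ℝ≥0∞) ^ (-1 : ℝ)) ∂(μ.prod μ) := by
        gcongr with p
        exact stdGaussian_abs_inner_le_le _ hδ
    _ = 2 * energyI n 1 μ := by
        rw [lintegral_const_mul _ (hm.const_mul _), lintegral_const_mul _ hm, ← mul_assoc,
          ENNReal.inv_mul_cancel (by simp [hδ]) ENNReal.ofReal_ne_top, one_mul,
          lintegral_prod _ hm.aemeasurable, energyI]

theorem le_lintegral_slabRatio {R : ℝ} (hR : 1 ≤ R)
    (h : ∀ᵐ p ∂(μ.prod ν), ‖p.1 - p.2‖ ≤ R) {δ : ℝ} (hδ : 0 < δ) (hδ1 : δ ≤ 1) :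
    gaussianPDF 0 1 1 * ENNReal.ofReal (2 / R) * (μ univ * ν univ) ≤
      ∫⁻ v, slabRatio μ ν δ v ∂(stdGaussian (EuclideanSpace ℝ (Fin n))) := by
  rw [lintegral_slabRatio]
  calc _ = (ENNReal.ofReal δ)⁻¹ * ∫⁻ _,
        ENNReal.ofReal δ * (gaussianPDF 0 1 1 * ENNReal.ofReal (2 / R)) ∂(μ.prod ν) := by
        rw [lintegral_const, ← univ_prod_univ, Measure.prod_prod, mul_assoc (ENNReal.ofReal δ),
          ← mul_assoc (ENNReal.ofReal δ)⁻¹,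
          ENNReal.inv_mul_cancel (by simp [hδ]) ENNReal.ofReal_ne_top, one_mul]
    _ ≤ _ := by
        refine mul_le_mul' le_rfl (lintegral_mono_ae ?_)
        filter_upwards [h] with p hp using le_stdGaussian_abs_inner_le hR hp hδ hδ1

end slabRatio

/-- Whether two sets have projections with null intersection depends only on the direction of the
projection. -/
theorem volume_image_inner_inter_eq_zero {n : ℕ} {A B : Set (EuclideanSpace ℝ (Fin n))}
    {v : EuclideanSpace ℝ (Fin n)}
    (h : v ≠ 0 → volume ((fun x => ⟪x, ‖v‖⁻¹ • v⟫) '' A ∩ (fun x => ⟪x, ‖v‖⁻¹ • v⟫) '' B) = 0) :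
    volume ((fun x => ⟪x, v⟫) '' A ∩ (fun x => ⟪x, v⟫) '' B) = 0 := by
  rcases eq_or_ne v 0 with rfl | hv
  · refine measure_mono_null (t := {0}) ?_ (measure_singleton _)
    rintro _ ⟨⟨x, -, rfl⟩, -⟩
    simp
  · have hv' : ‖v‖⁻¹ ≠ 0 := inv_ne_zero (norm_ne_zero_iff.2 hv)
    have hpre := Real.volume_preimage_mul_left hv'
      ((fun x => ⟪x, ‖v‖⁻¹ • v⟫) '' A ∩ (fun x => ⟪x, ‖v‖⁻¹ • v⟫) '' B)
    rw [h hv, mul_zero] at hpre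
    refine measure_mono_null ?_ hpre
    rintro t ⟨⟨x, hx, rfl⟩, ⟨y, hy, hxy⟩⟩
    refine ⟨⟨x, hx, by simp only [real_inner_smul_right]⟩, ⟨y, hy, ?_⟩⟩
    simp only [real_inner_smul_right]
    exact congrArg _ hxy

theorem stmt_7 (n : ℕ) (hn : 2 ≤ n)
    (μ ν : Measure (EuclideanSpace ℝ (Fin n)))
    [IsFiniteMeasure μ] [IsFiniteMeasure ν] (hμ0 : μ ≠ 0) (hν0 : ν ≠ 0)
    (hμc : IsCompact (sptm n μ)) (hνc : IsCompact (sptm n ν))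
    (hμe : energyI n 1 μ < ∞) (hνe : energyI n 1 ν < ∞) :
    0 < μH[(n : ℝ) - 1]
      {e : EuclideanSpace ℝ (Fin n) | ‖e‖ = 1 ∧
        0 < volume ((fun x => ⟪x, e⟫) '' sptm n μ ∩ (fun x => ⟪x, e⟫) '' sptm n ν)} := by
  obtain ⟨m, rfl⟩ : ∃ m, n = m + 1 := ⟨n - 1, by omega⟩
  rw [pos_iff_ne_zero]
  intro hS
  rw [show ((m + 1 : ℕ) : ℝ) - 1 = m by push_cast; ring] at hS
  set γ := stdGaussian (EuclideanSpace ℝ (Fin (m + 1)))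
  set δ : ℕ → ℝ := fun k => 1 / ((k : ℝ) + 1)
  have hδ : ∀ k, 0 < δ k := fun k => Nat.one_div_pos_of_nat
  have hδ0 : Tendsto δ atTop (𝓝 0) := tendsto_one_div_add_atTop_nhds_zero_nat
  have hanti : Antitone δ := fun i j hij => Nat.one_div_le_one_div hij
  have hδ1 : ∀ k, δ k ≤ 1 := fun k => by simpa [δ] using hanti (Nat.zero_le k)
  set c : Measure (EuclideanSpace ℝ (Fin (m + 1))) → EuclideanSpace ℝ (Fin (m + 1)) → ℝ≥0∞ :=
    fun α v => liminf (fun k => slabRatio α α (δ k) v) atTop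
  have hcm : ∀ (α : Measure (EuclideanSpace ℝ (Fin (m + 1)))) [IsFiniteMeasure α],
      Measurable (c α) := fun α _ => Measurable.liminf fun k => measurable_slabRatio α α (δ k)
  have hcint : ∀ (α : Measure (EuclideanSpace ℝ (Fin (m + 1)))) [IsFiniteMeasure α],
      energyI (m + 1) 1 α < ∞ → ∫⁻ v, c α v ∂γ ≠ ∞ := fun α _ hα => by
    refine ((lintegral_liminf_le fun k => measurable_slabRatio α α (δ k)).trans
      (liminf_le_of_frequently_le' (Frequently.of_forall fun k =>
        lintegral_slabRatio_le_energyI α (hδ k)))).trans_lt ?_ |>.ne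
    exact ENNReal.mul_lt_top ENNReal.ofNat_lt_top hα
  have hnull : ∀ᵐ v ∂γ, volume ((fun x => ⟪x, v⟫) '' sptm (m + 1) μ ∩
      (fun x => ⟪x, v⟫) '' sptm (m + 1) ν) = 0 := by
    filter_upwards [ae_stdGaussian_normalize_notMem (fun e he => he.1) hS] with v hv
    refine volume_image_inner_inter_eq_zero fun hv0 => ?_
    by_contra hpos
    exact hv ⟨norm_smul_inv_norm (𝕜 := ℝ) hv0, pos_iff_ne_zero.2 hpos⟩
  have hgood : ∀ᵐ v ∂γ, (∀ k, slabRatio μ ν (δ k) v ≤ 2 * (c μ v + c ν v)) ∧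
      Tendsto (fun k => slabRatio μ ν (δ k) v) atTop (𝓝 0) := by
    filter_upwards [hnull, ae_lt_top (hcm μ) (hcint μ hμe), ae_lt_top (hcm ν) (hcint ν hνe)]
      with v hv h₁ h₂
    have hcont : Continuous fun x : EuclideanSpace ℝ (Fin (m + 1)) => ⟪x, v⟫ := by fun_prop
    have hcarrier : ∀ α : Measure (EuclideanSpace ℝ (Fin (m + 1))), IsCompact (sptm (m + 1) α) →
        (α.map fun x => ⟪x, v⟫) ((fun x => ⟪x, v⟫) '' sptm (m + 1) α)ᶜ = 0 := fun α hα => by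
      rw [Measure.map_apply hcont.measurable (hα.image hcont).measurableSet.compl]
      refine measure_mono_null (fun x hx hxs => hx ⟨x, hxs, rfl⟩) (measure_compl_sptm _ α)
    have key := prod_abs_sub_le_bound_and_tendsto (μ.map fun x => ⟪x, v⟫) (ν.map fun x => ⟪x, v⟫)
      hδ hδ0 hanti rfl rfl (by simpa only [map_prod_map_abs_sub_le] using h₁)
      (by simpa only [map_prod_map_abs_sub_le] using h₂) (hμc.image hcont) (hνc.image hcont)
      (hcarrier μ hμc) (hcarrier ν hνc) hv
    simpa only [map_prod_map_abs_sub_le] using key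
  have hlim : Tendsto (fun k => ∫⁻ v, slabRatio μ ν (δ k) v ∂γ) atTop (𝓝 0) := by
    have := tendsto_lintegral_of_dominated_convergence (μ := γ) (f := fun _ => 0)
      (fun v => 2 * (c μ v + c ν v)) (fun k => measurable_slabRatio μ ν (δ k))
      (fun k => hgood.mono fun v hv => hv.1 k)
      (by
        rw [lintegral_const_mul' _ _ ENNReal.ofNat_ne_top, lintegral_add_left (hcm μ)]
        exact ENNReal.mul_ne_top ENNReal.ofNat_ne_top
          (ENNReal.add_ne_top.2 ⟨hcint μ hμe, hcint ν hνe⟩))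
      (hgood.mono fun v hv => hv.2)
    simpa using this
  obtain ⟨R₁, hR₁⟩ := hμc.isBounded.exists_norm_le
  obtain ⟨R₂, hR₂⟩ := hνc.isBounded.exists_norm_le
  have hdist : ∀ᵐ p ∂(μ.prod ν), ‖p.1 - p.2‖ ≤ max 1 (R₁ + R₂) := by
    filter_upwards [Measure.quasiMeasurePreserving_fst.ae (mem_ae_iff.2 (measure_compl_sptm _ μ)),
      Measure.quasiMeasurePreserving_snd.ae (mem_ae_iff.2 (measure_compl_sptm _ ν))] with p h₁ h₂
    exact ((norm_sub_le _ _).trans (add_le_add (hR₁ _ h₁) (hR₂ _ h₂))).trans (le_max_right _ _)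
  have hle := ge_of_tendsto' hlim fun k =>
    le_lintegral_slabRatio μ ν (le_max_left _ _) hdist (hδ k) (hδ1 k)
  refine absurd hle (not_le.2 (pos_iff_ne_zero.2 (mul_ne_zero (mul_ne_zero ?_ ?_)
    (mul_ne_zero ?_ ?_))))
  · exact (gaussianPDF_pos 0 one_ne_zero 1).ne'
  · exact (ENNReal.ofReal_pos.2 (by positivity)).ne'
  · exact (Measure.measure_univ_pos.2 hμ0).ne'
  · exact (Measure.measure_univ_pos.2 hν0).ne'
end

section
/- Let n ≥ 2, let s, t > 0 with s + t = 2, and let μ, ν be nonzero finite Borel measures on ℝⁿ with compact support such that I_s(μ) < ∞ and I_t(ν) < ∞. Then the set of unit vectors e ∈ S^{n−1} for which π_e(spt μ) ∩ π_e(spt ν) ≠ ∅ has positive (n−1)-dimensional Hausdorff measure in S^{n−1}. -/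
open MeasureTheory Metric Set
open scoped ENNReal RealInnerProductSpace

section Gaussian

variable {V : Type*} [NormedAddCommGroup V] [InnerProductSpace ℝ V] [FiniteDimensional ℝ V]
  [MeasurableSpace V] [BorelSpace V]

/-- The Gaussian measure with density `exp (-π ‖v‖ ^ 2)`. -/
noncomputable def gaussWeight (V : Type*) [NormedAddCommGroup V] [InnerProductSpace ℝ V]
    [FiniteDimensional ℝ V] [MeasurableSpace V] [BorelSpace V] : Measure V :=
  volume.withDensity fun v => ENNReal.ofReal (Real.exp (-Real.pi * ‖v‖ ^ 2))

theorem integrable_exp_neg_pi_mul_sq_norm :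
    Integrable fun v : V => Real.exp (-Real.pi * ‖v‖ ^ 2) := by
  have h := (GaussianFourier.integrable_cexp_neg_mul_sq_norm_add (V := V) (b := (Real.pi : ℂ))
    (by simpa using Real.pi_pos) 0 0).re
  refine h.congr (.of_forall fun v => ?_)
  simp only [zero_mul, add_zero, RCLike.re_to_complex]
  rw [← Complex.exp_ofReal_re]
  push_cast
  rfl

instance : IsFiniteMeasure (gaussWeight V) :=
  isFiniteMeasure_withDensity_ofReal integrable_exp_neg_pi_mul_sq_norm.2

theorem gaussWeight_absolutelyContinuous : gaussWeight V ≪ volume :=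
  withDensity_absolutelyContinuous _ _

theorem integral_cos_inner_gaussWeight (z : V) :
    ∫ v, Real.cos ⟪z, v⟫ ∂gaussWeight V = Real.exp (-(‖z‖ ^ 2 / (4 * Real.pi))) := by
  have hpi : 0 < (Real.pi : ℂ).re := by simpa using Real.pi_pos
  have h := GaussianFourier.integral_cexp_neg_mul_sq_norm_add hpi Complex.I z
  have hint := GaussianFourier.integrable_cexp_neg_mul_sq_norm_add hpi Complex.I z
  rw [gaussWeight, integral_withDensity_eq_integral_toReal_smul (by fun_prop) (by simp)]
  have h' := congrArg RCLike.re h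
  rw [← integral_re hint] at h'
  convert h' using 1
  · refine integral_congr_ae (.of_forall fun v => ?_)
    simp [Complex.exp_re, ENNReal.toReal_ofReal, Real.exp_nonneg, ← Complex.ofReal_pow]
  · rw [div_self (by exact_mod_cast Real.pi_ne_zero), Complex.one_cpow, one_mul,
      RCLike.re_to_complex, ← Complex.exp_ofReal_re]
    congr 2
    push_cast
    rw [Complex.I_sq]
    ring

theorem integral_Ioi_cos_mul_exp_neg_mul_sq {b : ℝ} (hb : 0 < b) (d : ℝ) :
    ∫ r in Ioi (0 : ℝ), Real.cos (r * d) * Real.exp (-b * r ^ 2) =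
      √(Real.pi / b) * Real.exp (-(d ^ 2 / (4 * b))) / 2 := by
  have hb' : 0 < (b : ℂ).re := by simpa using hb
  have h := GaussianFourier.integral_cexp_neg_mul_sq_norm_add hb' Complex.I d
  have hint := GaussianFourier.integrable_cexp_neg_mul_sq_norm_add hb' Complex.I d
  have h' := congrArg RCLike.re h
  rw [← integral_re hint] at h'
  have habs := integral_comp_abs (f := fun r => Real.cos (r * d) * Real.exp (-b * r ^ 2))
  have heven : ∀ r : ℝ, Real.cos (|r| * d) = Real.cos (r * d) := fun r => by
    rcases abs_choice r with h | h <;> simp [h]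
  simp only [heven, sq_abs] at habs
  rw [eq_div_iff two_ne_zero, mul_comm, ← habs]
  convert h' using 1
  · refine integral_congr_ae (.of_forall fun v => ?_)
    simp [Complex.exp_re, ← Complex.ofReal_pow, mul_comm]
  · have hsq : ((Real.pi : ℂ) / b) ^ ((Module.finrank ℝ ℝ : ℂ) / 2) = (√(Real.pi / b) : ℝ) := by
      rw [Real.sqrt_eq_rpow, Complex.ofReal_cpow (by positivity)]
      simp
    rw [hsq, RCLike.re_to_complex, Complex.re_ofReal_mul, ← Complex.exp_ofReal_re]
    congr 3
    rw [← sq_abs d]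
    push_cast
    rw [Complex.I_sq, Real.norm_eq_abs]
    ring

end Gaussian

theorem lintegral_Ioi_rpow_mul_exp_le {E : Type*} [NormedAddCommGroup E] {s : ℝ} (hs : 0 < s)
    (z : E) :
    ∫⁻ r in Ioi (0 : ℝ),
        ENNReal.ofReal (r ^ (s - 1) * Real.exp (-(‖z‖ ^ 2 / (4 * Real.pi)) * r ^ 2)) ≤
      ENNReal.ofReal ((4 * Real.pi) ^ (s / 2) * (1 / 2) * Real.Gamma (s / 2)) *
        (‖z‖₊ : ℝ≥0∞) ^ (-s) := by
  have hpi := Real.pi_pos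
  rcases eq_or_ne z 0 with rfl | hz
  · have hG := Real.Gamma_pos_of_pos (half_pos hs)
    rw [nnnorm_zero, ENNReal.coe_zero, ENNReal.zero_rpow_of_neg (by linarith), ENNReal.mul_top]
    · exact le_top
    · rw [Ne, ENNReal.ofReal_eq_zero, not_le]
      positivity
  · have hz' : 0 < ‖z‖ := norm_pos_iff.2 hz
    have hb : 0 < ‖z‖ ^ 2 / (4 * Real.pi) := by positivity
    have h := integral_rpow_mul_exp_neg_mul_rpow (p := 2) (q := s - 1) two_pos (by linarith) hb
    have hint := integrableOn_rpow_mul_exp_neg_mul_rpow (p := 2) (s := s - 1) (by linarith)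
      two_pos hb
    simp only [Real.rpow_two] at h hint
    rw [← ofReal_integral_eq_lintegral_ofReal hint, h]
    · refine le_of_eq ?_
      rw [← enorm_eq_nnnorm, ← ofReal_norm, ENNReal.ofReal_rpow_of_pos hz',
        ← ENNReal.ofReal_mul (by have := Real.Gamma_pos_of_pos (half_pos hs); positivity)]
      congr 1
      rw [Real.div_rpow (by positivity) (by positivity), ← Real.rpow_natCast ‖z‖ 2,
        ← Real.rpow_mul hz'.le]
      have e1 : -(s - 1 + 1) / 2 = -(s / 2) := by ring
      have e2 : ((2 : ℕ) : ℝ) * -(s / 2) = -s := by push_cast; ring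
      have e3 : (s - 1 + 1) / 2 = s / 2 := by ring
      rw [e1, e2, e3, Real.rpow_neg (by positivity : (0 : ℝ) ≤ 4 * Real.pi), div_inv_eq_mul]
      ring
    · filter_upwards [ae_restrict_mem measurableSet_Ioi] with r hr
      have : (0 : ℝ) < r := hr
      positivity

section CrossCos

variable {V : Type*} [NormedAddCommGroup V] [InnerProductSpace ℝ V] [FiniteDimensional ℝ V]
  [MeasurableSpace V] [BorelSpace V]

/-- The real part of `μ̂(ξ) * conj ν̂(ξ)`. -/
noncomputable def crossCos (μ ν : Measure V) (ξ : V) : ℝ :=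
  ∫ p, Real.cos ⟪p.1 - p.2, ξ⟫ ∂(μ.prod ν)

theorem Continuous.integrable_of_norm_le {X : Type*} [TopologicalSpace X]
    [SecondCountableTopology X] [MeasurableSpace X] [OpensMeasurableSpace X] {m : Measure X}
    [IsFiniteMeasure m] {f : X → ℝ} (hf : Continuous f) {C : ℝ} (hC : ∀ x, ‖f x‖ ≤ C) :
    Integrable f m :=
  .of_bound hf.aestronglyMeasurable C (.of_forall hC)

variable (μ ν : Measure V) [IsFiniteMeasure μ] [IsFiniteMeasure ν]

theorem continuous_crossCos : Continuous (crossCos μ ν) :=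
  continuous_of_dominated (bound := fun _ => 1)
    (fun ξ => Continuous.aestronglyMeasurable (by fun_prop))
    (fun ξ => .of_forall fun p => Real.abs_cos_le_one _) (integrable_const 1)
    (.of_forall fun p => by fun_prop)

theorem crossCos_eq (ξ : V) :
    crossCos μ ν ξ = (∫ x, Real.cos ⟪x, ξ⟫ ∂μ) * (∫ y, Real.cos ⟪y, ξ⟫ ∂ν) +
      (∫ x, Real.sin ⟪x, ξ⟫ ∂μ) * (∫ y, Real.sin ⟪y, ξ⟫ ∂ν) := by
  rw [← integral_prod_mul, ← integral_prod_mul, ← integral_add]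
  · simp only [crossCos, inner_sub_left, Real.cos_sub]
  · refine Continuous.integrable_of_norm_le (C := 1) (by fun_prop) fun p => ?_
    rw [norm_mul]
    exact mul_le_one₀ (Real.abs_cos_le_one _) (norm_nonneg _) (Real.abs_cos_le_one _)
  · refine Continuous.integrable_of_norm_le (C := 1) (by fun_prop) fun p => ?_
    rw [norm_mul]
    exact mul_le_one₀ (Real.abs_sin_le_one _) (norm_nonneg _) (Real.abs_sin_le_one _)

theorem crossCos_self_nonneg (ξ : V) : 0 ≤ crossCos μ μ ξ := by
  rw [crossCos_eq]
  positivity [mul_self_nonneg (∫ x, Real.cos ⟪x, ξ⟫ ∂μ), mul_self_nonneg (∫ x, Real.sin ⟪x, ξ⟫ ∂μ)]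

theorem abs_crossCos_le {a b : ℝ} (ha : 0 < a) (hab : a * b = 1) (ξ : V) :
    |crossCos μ ν ξ| ≤ a * crossCos μ μ ξ + b * crossCos ν ν ξ := by
  simp only [crossCos_eq]
  set p := ∫ x, Real.cos ⟪x, ξ⟫ ∂μ
  set q := ∫ x, Real.sin ⟪x, ξ⟫ ∂μ
  set u := ∫ x, Real.cos ⟪x, ξ⟫ ∂ν
  set v := ∫ x, Real.sin ⟪x, ξ⟫ ∂ν
  have key : ∀ x y : ℝ, 2 * |x * y| ≤ a * (x * x) + b * (y * y) := fun x y => by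
    have h : 0 ≤ a * (|x| - b * |y|) ^ 2 := by positivity
    have hx := abs_mul_abs_self x
    have hy := abs_mul_abs_self y
    rw [abs_mul]
    have e : a * (|x| - b * |y|) ^ 2 =
        a * (|x| * |x|) - 2 * (a * b) * (|x| * |y|) + (a * b) * (b * (|y| * |y|)) := by ring
    rw [e, hab, hx, hy] at h
    linarith
  have h1 := key p u
  have h2 := key q v
  have h3 := abs_add_le (p * u) (q * v)
  have h4 := abs_nonneg (p * u)
  have h5 := abs_nonneg (q * v)
  linarith

theorem integral_crossCos_smul_gaussWeight (r : ℝ) :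
    ∫ v, crossCos μ ν (r • v) ∂gaussWeight V =
      ∫ p, Real.exp (-(‖p.1 - p.2‖ ^ 2 / (4 * Real.pi)) * r ^ 2) ∂(μ.prod ν) := by
  unfold crossCos
  rw [integral_integral_swap]
  · refine integral_congr_ae (.of_forall fun p => ?_)
    simp only [real_inner_smul_right, ← real_inner_smul_left]
    rw [integral_cos_inner_gaussWeight, norm_smul, mul_pow, Real.norm_eq_abs, sq_abs]
    congr 1
    ring
  · refine Continuous.integrable_of_norm_le (C := 1) (by fun_prop) fun p => ?_
    exact Real.abs_cos_le_one _

theorem integrable_exp_neg_sq_norm_sub (r : ℝ) :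
    Integrable (fun p : V × V => Real.exp (-(‖p.1 - p.2‖ ^ 2 / (4 * Real.pi)) * r ^ 2))
      (μ.prod ν) := by
  refine Continuous.integrable_of_norm_le (C := 1) (by fun_prop) fun p => ?_
  rw [Real.norm_eq_abs, abs_of_pos (Real.exp_pos _), Real.exp_le_one_iff, neg_mul]
  have := Real.pi_pos
  exact neg_nonpos.2 (by positivity)

theorem lintegral_rpow_mul_crossCos_self (s : ℝ) {r : ℝ} (hr : 0 < r) :
    ∫⁻ v, ENNReal.ofReal (r ^ (s - 1) * crossCos μ μ (r • v)) ∂gaussWeight V =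
      ∫⁻ p, ENNReal.ofReal
        (r ^ (s - 1) * Real.exp (-(‖p.1 - p.2‖ ^ 2 / (4 * Real.pi)) * r ^ 2)) ∂(μ.prod μ) := by
  have hcos : Integrable (fun v => crossCos μ μ (r • v)) (gaussWeight V) := by
    refine Continuous.integrable_of_norm_le (C := (μ.prod μ).real univ)
      ((continuous_crossCos μ μ).comp (continuous_const_smul r)) fun v => ?_
    exact (norm_integral_le_of_norm_le_const (C := 1)
      (.of_forall fun p => Real.abs_cos_le_one _)).trans_eq (one_mul _)
  have hpow : 0 ≤ r ^ (s - 1) := by positivity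
  rw [← ofReal_integral_eq_lintegral_ofReal (hcos.const_mul _)
      (.of_forall fun v => mul_nonneg hpow (crossCos_self_nonneg μ _)),
    ← ofReal_integral_eq_lintegral_ofReal ((integrable_exp_neg_sq_norm_sub μ μ r).const_mul _)
      (.of_forall fun p => mul_nonneg hpow (Real.exp_nonneg _)),
    integral_const_mul, integral_const_mul, integral_crossCos_smul_gaussWeight]

theorem lintegral_rpow_mul_crossCos_self_lt_top {s : ℝ} (hs : 0 < s)
    (hμ : ∫⁻ x, ∫⁻ y, (‖x - y‖₊ : ℝ≥0∞) ^ (-s) ∂μ ∂μ < ∞) :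
    ∫⁻ r in Ioi (0 : ℝ), ∫⁻ v, ENNReal.ofReal (r ^ (s - 1) * crossCos μ μ (r • v))
      ∂gaussWeight V < ∞ := by
  rw [setLIntegral_congr_fun measurableSet_Ioi fun r hr => lintegral_rpow_mul_crossCos_self μ s hr,
    lintegral_lintegral_swap (Measurable.aemeasurable (by fun_prop))]
  have hle (p : V × V) := lintegral_Ioi_rpow_mul_exp_le hs (p.1 - p.2)
  refine (lintegral_mono hle).trans_lt ?_
  have hmeas : Measurable fun p : V × V => (‖p.1 - p.2‖₊ : ℝ≥0∞) ^ (-s) := by fun_prop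
  rw [lintegral_const_mul _ hmeas, lintegral_prod _ hmeas.aemeasurable]
  exact ENNReal.mul_lt_top ENNReal.ofReal_lt_top hμ

end CrossCos

section Vanishing

open Filter Topology

variable {V : Type*} [NormedAddCommGroup V] [InnerProductSpace ℝ V] [FiniteDimensional ℝ V]
  [MeasurableSpace V] [BorelSpace V]
  (μ ν : Measure V) [IsFiniteMeasure μ] [IsFiniteMeasure ν]

theorem integrable_crossCos_smul {s t : ℝ} (hs : 0 < s) (ht : 0 < t) (hst : s + t = 2)
    (hμ : ∫⁻ x, ∫⁻ y, (‖x - y‖₊ : ℝ≥0∞) ^ (-s) ∂μ ∂μ < ∞)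
    (hν : ∫⁻ x, ∫⁻ y, (‖x - y‖₊ : ℝ≥0∞) ^ (-t) ∂ν ∂ν < ∞) :
    Integrable (fun q : ℝ × V => crossCos μ ν (q.1 • q.2))
      ((volume.restrict (Ioi 0)).prod (gaussWeight V)) := by
  have hcont (m m' : Measure V) [IsFiniteMeasure m] [IsFiniteMeasure m'] :
      Continuous fun q : ℝ × V => crossCos m m' (q.1 • q.2) :=
    (continuous_crossCos m m').comp continuous_smul
  have hmeas (s : ℝ) (m : Measure V) [IsFiniteMeasure m] :
      Measurable fun q : ℝ × V => ENNReal.ofReal (q.1 ^ (s - 1) * crossCos m m (q.1 • q.2)) :=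
    ((measurable_fst.pow_const _).mul (hcont m m).measurable).ennreal_ofReal
  refine ⟨(hcont μ ν).aestronglyMeasurable, ?_⟩
  rw [hasFiniteIntegral_iff_enorm, lintegral_prod _ (hcont μ ν).measurable.enorm.aemeasurable]
  have hle : ∀ r ∈ Ioi (0 : ℝ), ∫⁻ v, ‖crossCos μ ν (r • v)‖ₑ ∂gaussWeight V ≤
      ∫⁻ v, ENNReal.ofReal (r ^ (s - 1) * crossCos μ μ (r • v)) ∂gaussWeight V +
      ∫⁻ v, ENNReal.ofReal (r ^ (t - 1) * crossCos ν ν (r • v)) ∂gaussWeight V := by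
    intro r hr
    have hr : (0 : ℝ) < r := hr
    have hmeas_r : Measurable fun v => ENNReal.ofReal (r ^ (s - 1) * crossCos μ μ (r • v)) :=
      (hmeas s μ).comp measurable_prodMk_left
    rw [← lintegral_add_left hmeas_r]
    refine lintegral_mono fun v => ?_
    have hmul : r ^ (s - 1) * r ^ (t - 1) = 1 := by
      rw [← Real.rpow_add hr, show s - 1 + (t - 1) = 0 by linarith, Real.rpow_zero]
    rw [← ENNReal.ofReal_add (mul_nonneg (by positivity) (crossCos_self_nonneg μ _))
      (mul_nonneg (by positivity) (crossCos_self_nonneg ν _)), ← ofReal_norm]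
    exact ENNReal.ofReal_le_ofReal (abs_crossCos_le μ ν (by positivity) hmul _)
  refine (setLIntegral_mono' measurableSet_Ioi hle).trans_lt ?_
  rw [lintegral_add_left (hmeas s μ).lintegral_prod_right']
  exact ENNReal.add_lt_top.2 ⟨lintegral_rpow_mul_crossCos_self_lt_top μ hs hμ,
    lintegral_rpow_mul_crossCos_self_lt_top ν ht hν⟩

theorem integral_crossCos_smul_mul_exp {b : ℝ} (hb : 0 < b) (e : V) :
    ∫ r in Ioi (0 : ℝ), crossCos μ ν (r • e) * Real.exp (-b * r ^ 2) =
      ∫ p, √(Real.pi / b) * Real.exp (-(⟪p.1 - p.2, e⟫ ^ 2 / (4 * b))) / 2 ∂(μ.prod ν) := by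
  simp only [crossCos, ← integral_mul_const]
  rw [integral_integral_swap]
  · refine integral_congr_ae (.of_forall fun p => ?_)
    simp only [real_inner_smul_right]
    exact integral_Ioi_cos_mul_exp_neg_mul_sq hb _
  · have hexp : Integrable (fun q : ℝ × (V × V) => Real.exp (-b * q.1 ^ 2))
        ((volume.restrict (Ioi 0)).prod (μ.prod ν)) :=
      (integrable_exp_neg_mul_sq hb).restrict.comp_fst _
    refine hexp.mono (Continuous.aestronglyMeasurable (by fun_prop)) (.of_forall fun q => ?_)
    simp only [Function.uncurry, norm_mul]
    exact mul_le_of_le_one_left (norm_nonneg _) (Real.abs_cos_le_one _)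

theorem integral_crossCos_smul_eq_zero {e : V} {δ : ℝ} (hδ : 0 < δ)
    (he : ∀ᵐ p ∂(μ.prod ν), δ ≤ |⟪p.1 - p.2, e⟫|)
    (hint : IntegrableOn (fun r : ℝ => crossCos μ ν (r • e)) (Ioi 0)) :
    ∫ r in Ioi (0 : ℝ), crossCos μ ν (r • e) = 0 := by
  have hlim : Tendsto (fun x : ℝ => ∫ r in Ioi (0 : ℝ),
      crossCos μ ν (r • e) * Real.exp (-x⁻¹ * r ^ 2)) atTop
      (𝓝 (∫ r in Ioi (0 : ℝ), crossCos μ ν (r • e))) := by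
    refine tendsto_integral_filter_of_dominated_convergence (fun r => ‖crossCos μ ν (r • e)‖)
      ?_ ?_ hint.norm ?_
    · exact .of_forall fun x => hint.aestronglyMeasurable.mul
        (Continuous.aestronglyMeasurable (by fun_prop))
    · filter_upwards [eventually_gt_atTop 0] with x hx
      refine .of_forall fun r => ?_
      rw [norm_mul, Real.norm_of_nonneg (Real.exp_nonneg _)]
      refine mul_le_of_le_one_right (norm_nonneg _) (Real.exp_le_one_iff.2 ?_)
      rw [neg_mul]
      exact neg_nonpos.2 (by positivity)
    · refine .of_forall fun r => ?_
      have h : Tendsto (fun x : ℝ => Real.exp (-x⁻¹ * r ^ 2)) atTop (𝓝 (Real.exp (-0 * r ^ 2))) :=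
        (Real.continuous_exp.tendsto _).comp ((tendsto_inv_atTop_zero.neg).mul_const _)
      simpa using h.const_mul (crossCos μ ν (r • e))
  refine tendsto_nhds_unique hlim ?_
  have hzero := ((tendsto_rpow_mul_exp_neg_mul_atTop_nhds_zero (1 / 2) (δ ^ 2 / 4)
    (by positivity)).const_mul (√Real.pi / 2)).mul_const ((μ.prod ν).real univ)
  rw [mul_zero, zero_mul] at hzero
  refine squeeze_zero_norm' ?_ hzero
  filter_upwards [eventually_gt_atTop 0] with x hx
  rw [integral_crossCos_smul_mul_exp μ ν (inv_pos.2 hx)]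
  refine norm_integral_le_of_norm_le_const ?_
  filter_upwards [he] with p hp
  rw [Real.norm_of_nonneg (by positivity), div_inv_eq_mul, Real.sqrt_mul Real.pi_pos.le,
    Real.sqrt_eq_rpow x]
  have hsq : δ ^ 2 ≤ ⟪p.1 - p.2, e⟫ ^ 2 := by
    rw [← sq_abs ⟪p.1 - p.2, e⟫]
    gcongr
  have hexp : Real.exp (-(⟪p.1 - p.2, e⟫ ^ 2 / (4 * x⁻¹))) ≤ Real.exp (-(δ ^ 2 / 4) * x) := by
    refine Real.exp_le_exp.2 ?_
    have : ⟪p.1 - p.2, e⟫ ^ 2 / (4 * x⁻¹) = ⟪p.1 - p.2, e⟫ ^ 2 / 4 * x := by field_simp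
    rw [this, neg_mul]
    gcongr
  calc √Real.pi * x ^ (1 / 2 : ℝ) * Real.exp (-(⟪p.1 - p.2, e⟫ ^ 2 / (4 * x⁻¹))) / 2
      ≤ √Real.pi * x ^ (1 / 2 : ℝ) * Real.exp (-(δ ^ 2 / 4) * x) / 2 := by gcongr
    _ = _ := by ring

/-- If `I_s(μ)` and `I_t(ν)` are finite with `s + t = 2`, the projections of `μ` and `ν` cannot be
separated in almost every direction. -/
theorem not_ae_exists_le_abs_inner {s t : ℝ} (hs : 0 < s) (ht : 0 < t) (hst : s + t = 2)
    (hμ : ∫⁻ x, ∫⁻ y, (‖x - y‖₊ : ℝ≥0∞) ^ (-s) ∂μ ∂μ < ∞)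
    (hν : ∫⁻ x, ∫⁻ y, (‖x - y‖₊ : ℝ≥0∞) ^ (-t) ∂ν ∂ν < ∞) (hμ0 : μ ≠ 0) (hν0 : ν ≠ 0) :
    ¬ ∀ᵐ e : V, ∃ δ > 0, ∀ᵐ p ∂(μ.prod ν), δ ≤ |⟪p.1 - p.2, e⟫| := by
  intro h
  have hint := integrable_crossCos_smul μ ν hs ht hst hμ hν
  have hzero : ∫ v, (∫ r in Ioi (0 : ℝ), crossCos μ ν (r • v)) ∂gaussWeight V = 0 := by
    refine integral_eq_zero_of_ae ?_
    filter_upwards [gaussWeight_absolutelyContinuous.ae_le h, hint.prod_left_ae] with e he hie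
    obtain ⟨δ, hδ, he⟩ := he
    exact integral_crossCos_smul_eq_zero μ ν hδ he hie
  rw [← integral_integral_swap hint] at hzero
  have hprod : μ.prod ν ≠ 0 := by
    rw [Ne, ← Measure.measure_univ_eq_zero, ← univ_prod_univ, Measure.prod_prod, mul_eq_zero]
    simp [hμ0, hν0]
  have hpos : ∀ r : ℝ, 0 < ∫ v, crossCos μ ν (r • v) ∂gaussWeight V := fun r => by
    rw [integral_crossCos_smul_gaussWeight]
    have : NeZero (μ.prod ν) := ⟨hprod⟩
    exact integral_exp_pos (integrable_exp_neg_sq_norm_sub μ ν r)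
  rw [integral_eq_zero_iff_of_nonneg (fun r => (hpos r).le) hint.integral_prod_left] at hzero
  have hfalse : ∀ᵐ r ∂(volume.restrict (Ioi (0 : ℝ))), False := by
    filter_upwards [hzero] with r hr
    exact (hpos r).ne' hr
  rw [ae_iff] at hfalse
  simp at hfalse

end Vanishing

section Cone

open scoped Pointwise

/-- The affine chart `e ↦ (e 1 / e 0, …, e m / e 0)` of directions in `ℝ ^ (m + 1)`. -/
noncomputable def slopeMap (m : ℕ) (e : EuclideanSpace ℝ (Fin (m + 1))) : Fin m → ℝ :=
  fun i => e i.succ / e 0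

theorem lipschitzOnWith_slopeMap (m k : ℕ) :
    LipschitzOnWith (2 * (k + 1) ^ 2) (slopeMap m) {e | ‖e‖ = 1 ∧ 1 / ((k : ℝ) + 1) ≤ |e 0|} := by
  refine LipschitzOnWith.of_dist_le_mul fun a ⟨ha, ha0⟩ b ⟨hb, hb0⟩ => ?_
  refine (dist_pi_le_iff (by positivity)).2 fun i => ?_
  have hk : (0 : ℝ) < k + 1 := by positivity
  have ha0' : 1 ≤ |a 0| * (k + 1) := by rwa [div_le_iff₀ hk] at ha0
  have hb0' : 1 ≤ |b 0| * (k + 1) := by rwa [div_le_iff₀ hk] at hb0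
  have hane : a 0 ≠ 0 := fun h => by simp [h] at ha0'; linarith
  have hbne : b 0 ≠ 0 := fun h => by simp [h] at hb0'; linarith
  have hcoord (j) : |a j - b j| ≤ ‖a - b‖ := PiLp.norm_apply_le (a - b) j
  have hb1 (j) : |b j| ≤ 1 := hb ▸ PiLp.norm_apply_le b j
  have heq : slopeMap m a i - slopeMap m b i =
      ((a i.succ - b i.succ) * b 0 + b i.succ * (b 0 - a 0)) / (a 0 * b 0) := by
    simp only [slopeMap]
    field_simp
    ring
  rw [Real.dist_eq, heq, abs_div, abs_mul, dist_eq_norm,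
    div_le_iff₀ (mul_pos (abs_pos.2 hane) (abs_pos.2 hbne))]
  have hnum : |(a i.succ - b i.succ) * b 0 + b i.succ * (b 0 - a 0)| ≤ 2 * ‖a - b‖ := by
    refine (abs_add_le _ _).trans ?_
    rw [abs_mul, abs_mul, abs_sub_comm (b 0)]
    have h1 := mul_le_mul (hcoord i.succ) (hb1 0) (abs_nonneg _) (norm_nonneg _)
    have h2 := mul_le_mul (hb1 i.succ) (hcoord 0) (abs_nonneg _) zero_le_one
    linarith
  have hden : 1 ≤ (|a 0| * (k + 1)) * (|b 0| * (k + 1)) := one_le_mul_of_one_le_of_one_le ha0' hb0'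
  have hcast : ((2 * ((k : NNReal) + 1) ^ 2 : NNReal) : ℝ) = 2 * ((k : ℝ) + 1) ^ 2 := by
    push_cast
    rfl
  rw [hcast]
  calc _ ≤ 2 * ‖a - b‖ := hnum
    _ ≤ 2 * ‖a - b‖ * ((|a 0| * (k + 1)) * (|b 0| * (k + 1))) :=
      le_mul_of_one_le_right (by positivity) hden
    _ = _ := by ring

theorem volume_slopeMap_image_eq_zero {m : ℕ} {A : Set (EuclideanSpace ℝ (Fin (m + 1)))}
    (hA : ∀ e ∈ A, ‖e‖ = 1) (h0 : μH[(m : ℝ)] A = 0) :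
    volume (slopeMap m '' (A ∩ {e | e 0 ≠ 0})) = 0 := by
  have hsub : slopeMap m '' (A ∩ {e | e 0 ≠ 0}) ⊆
      ⋃ k : ℕ, slopeMap m '' (A ∩ {e | ‖e‖ = 1 ∧ 1 / ((k : ℝ) + 1) ≤ |e 0|}) := by
    rintro _ ⟨e, ⟨heA, he0⟩, rfl⟩
    obtain ⟨k, hk⟩ := exists_nat_one_div_lt (abs_pos.2 he0)
    exact mem_iUnion.2 ⟨k, e, ⟨heA, hA e heA, hk.le⟩, rfl⟩
  refine measure_mono_null hsub (measure_iUnion_null fun k => ?_)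
  rw [← hausdorffMeasure_pi_real, Fintype.card_fin]
  have h := ((lipschitzOnWith_slopeMap m k).mono
    (inter_subset_right (s := A))).hausdorffMeasure_image_le (Nat.cast_nonneg m)
  rw [measure_mono_null inter_subset_left h0, mul_zero] at h
  exact nonpos_iff_eq_zero.1 h

/-- A measurable set of directions that is stable under nonzero scaling and meets the sphere in a
`μH[m]`-null set is Lebesgue null. -/
theorem volume_eq_zero_of_hausdorffMeasure_sphere {m : ℕ}
    {C : Set (EuclideanSpace ℝ (Fin (m + 1)))} (hC : MeasurableSet C)
    (hsmul : ∀ e ∈ C, ∀ c : ℝ, c ≠ 0 → c • e ∈ C)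
    (h0 : μH[(m : ℝ)] {e | ‖e‖ = 1 ∧ e ∈ C} = 0) : volume C = 0 := by
  have hB := volume_slopeMap_image_eq_zero (fun e he => he.1) h0
  set B := slopeMap m '' ({e | ‖e‖ = 1 ∧ e ∈ C} ∩ {e | e 0 ≠ 0})
  let Ψ := (MeasurableEquiv.toLp 2 (Fin (m + 1) → ℝ)).symm.trans
    (MeasurableEquiv.piFinSuccAbove (fun _ : Fin (m + 1) => ℝ) 0)
  have hΨ : MeasurePreserving Ψ :=
    (EuclideanSpace.volume_preserving_symm_measurableEquiv_toLp _).trans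
      (volume_preserving_piFinSuccAbove (fun _ : Fin (m + 1) => ℝ) 0)
  rw [← hΨ.symm.measure_preimage_equiv, Measure.volume_eq_prod,
    Measure.measure_prod_null (Ψ.symm.measurable hC)]
  have hne : ∀ᵐ r : ℝ, r ≠ 0 := by simp [ae_iff]
  filter_upwards [hne] with r hr
  have hsub : Prod.mk r ⁻¹' (Ψ.symm ⁻¹' C) ⊆ r • B := by
    intro w hw
    have hw : Ψ.symm (r, w) ∈ C := hw
    set e := Ψ.symm (r, w)
    have he : Ψ e = (r, w) := Ψ.apply_symm_apply _
    have he0 : e 0 = r := congrArg Prod.fst he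
    have hes (i : Fin m) : e i.succ = w i := congrFun (congrArg Prod.snd he) i
    have hen : e ≠ 0 := fun h => hr (by rw [← he0, h]; rfl)
    have hnorm : ‖e‖ ≠ 0 := norm_ne_zero_iff.2 hen
    refine mem_smul_set.2 ⟨slopeMap m (‖e‖⁻¹ • e), ⟨_, ⟨⟨?_, hsmul e hw _ (inv_ne_zero hnorm)⟩,
      ?_⟩, rfl⟩, ?_⟩
    · rw [norm_smul, norm_inv, norm_norm, inv_mul_cancel₀ hnorm]
    · simp [he0, hr, hnorm]
    · ext i
      simp only [slopeMap, PiLp.smul_apply, smul_eq_mul, Pi.smul_apply, he0, hes]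
      field_simp
  refine measure_mono_null hsub ?_
  rw [Measure.addHaar_smul, hB, mul_zero]

end Cone

section Support

theorem sptm_eq_support (n : ℕ) (μ : Measure (EuclideanSpace ℝ (Fin n))) :
    sptm n μ = μ.support := by
  ext x
  exact nhds_basis_ball.mem_measureSupport.symm

theorem isClosed_setOf_exists_inner_sub_eq_zero {V : Type*} [NormedAddCommGroup V]
    [InnerProductSpace ℝ V] {K L : Set V} (hK : IsCompact K) (hL : IsCompact L) :
    IsClosed {e : V | ∃ p ∈ K ×ˢ L, ⟪p.1 - p.2, e⟫ = 0} := by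
  have : CompactSpace ↥(K ×ˢ L) := isCompact_iff_compactSpace.1 (hK.prod hL)
  have hclosed : IsClosed {q : V × ↥(K ×ˢ L) | ⟪q.2.1.1 - q.2.1.2, q.1⟫ = 0} :=
    isClosed_eq (by fun_prop) continuous_const
  convert isClosedMap_fst_of_compactSpace _ hclosed using 1
  ext e
  simp

theorem exists_pos_le_abs_inner_sub {V : Type*} [NormedAddCommGroup V]
    [InnerProductSpace ℝ V] {K L : Set V} (hK : IsCompact K) (hL : IsCompact L) {e : V}
    (he : ∀ p ∈ K ×ˢ L, ⟪p.1 - p.2, e⟫ ≠ 0) :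
    ∃ δ > 0, ∀ p ∈ K ×ˢ L, δ ≤ |⟪p.1 - p.2, e⟫| :=
  (hK.prod hL).exists_forall_le' (f := fun p : V × V => |⟪p.1 - p.2, e⟫|)
    (Continuous.continuousOn (by fun_prop)) fun p hp => abs_pos.2 (he p hp)

end Support

theorem stmt_8 (n : ℕ) (hn : 2 ≤ n) (s t : ℝ) (hs : 0 < s) (ht : 0 < t)
    (hst : s + t = 2)
    (μ ν : Measure (EuclideanSpace ℝ (Fin n)))
    [IsFiniteMeasure μ] [IsFiniteMeasure ν] (hμ0 : μ ≠ 0) (hν0 : ν ≠ 0)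
    (hμc : IsCompact (sptm n μ)) (hνc : IsCompact (sptm n ν))
    (hμe : energyI n s μ < ∞) (hνe : energyI n t ν < ∞) :
    0 < μH[(n : ℝ) - 1]
      {e : EuclideanSpace ℝ (Fin n) | ‖e‖ = 1 ∧
        ((fun x => ⟪x, e⟫) '' sptm n μ ∩ (fun x => ⟪x, e⟫) '' sptm n ν).Nonempty} := by
  obtain ⟨m, rfl⟩ : ∃ m, n = m + 1 := ⟨n - 1, by omega⟩
  set C := {e | ∃ p ∈ sptm (m + 1) μ ×ˢ sptm (m + 1) ν, ⟪p.1 - p.2, e⟫ = 0}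
  have hset : {e : EuclideanSpace ℝ (Fin (m + 1)) | ‖e‖ = 1 ∧
      ((fun x => ⟪x, e⟫) '' sptm (m + 1) μ ∩ (fun x => ⟪x, e⟫) '' sptm (m + 1) ν).Nonempty} =
      {e | ‖e‖ = 1 ∧ e ∈ C} := by
    ext e
    refine and_congr_right fun _ => ⟨?_, ?_⟩
    · rintro ⟨_, ⟨x, hx, rfl⟩, y, hy, hxy⟩
      exact ⟨(x, y), ⟨hx, hy⟩, by rw [inner_sub_left, sub_eq_zero]; exact hxy.symm⟩
    · rintro ⟨⟨x, y⟩, ⟨hx, hy⟩, hxy⟩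
      rw [inner_sub_left, sub_eq_zero] at hxy
      exact ⟨_, ⟨x, hx, rfl⟩, y, hy, hxy.symm⟩
  rw [hset, pos_iff_ne_zero, Nat.cast_add, Nat.cast_one, add_sub_cancel_right]
  intro hnull
  have hvol : volume C = 0 := by
    refine volume_eq_zero_of_hausdorffMeasure_sphere
      (isClosed_setOf_exists_inner_sub_eq_zero hμc hνc).measurableSet ?_ hnull
    rintro e ⟨p, hp, hpe⟩ c -
    exact ⟨p, hp, by rw [real_inner_smul_right, hpe, mul_zero]⟩
  refine not_ae_exists_le_abs_inner μ ν hs ht hst hμe hνe hμ0 hν0 ?_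
  filter_upwards [measure_eq_zero_iff_ae_notMem.1 hvol] with e he
  obtain ⟨δ, hδ, hle⟩ := exists_pos_le_abs_inner_sub hμc hνc fun p hp h => he ⟨p, hp, h⟩
  refine ⟨δ, hδ, ?_⟩
  have hfst : ∀ᵐ p ∂(μ.prod ν), p.1 ∈ sptm (m + 1) μ :=
    Measure.quasiMeasurePreserving_fst.ae (sptm_eq_support (m + 1) μ ▸ μ.support_mem_ae)
  have hsnd : ∀ᵐ p ∂(μ.prod ν), p.2 ∈ sptm (m + 1) ν :=
    Measure.quasiMeasurePreserving_snd.ae (sptm_eq_support (m + 1) ν ▸ ν.support_mem_ae)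
  filter_upwards [hfst, hsnd] with p hp1 hp2
  exact hle p ⟨hp1, hp2⟩
end
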